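/- For each p ∈ S, the map β_p ↦ P(β) (with h and all other coordinates of β held fixed) is differentiable at every point β_p ∈ ℝ. -/

import Mathlib

open MeasureTheory ProbabilityTheory Real Filter Topology

noncomputable section

/-- The centered Gaussian measure on `ℝ` with variance `v` (Dirac at `0` if `v ≤ 0`). -/
def gauss (v : ℝ) : Measure ℝ := gaussianReal 0 v.toNNReal

/-- `ξ(x) = Σ_{p ∈ S} β_p^2 x^p`. -/
def xiFn (S : Finset ℕ) (β : ℕ → ℝ) (x : ℝ) : ℝ := ∑ p ∈ S, β p ^ 2 * x ^ p

/-- `ξ'(x) = Σ_{p ∈ S} β_p^2 p x^(p-1)`. -/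
def xiFn' (S : Finset ℕ) (β : ℕ → ℝ) (x : ℝ) : ℝ := ∑ p ∈ S, β p ^ 2 * p * x ^ (p - 1)

/-- `θ(x) = x ξ'(x) - ξ(x)`. -/
def thetaFn (S : Finset ℕ) (β : ℕ → ℝ) (x : ℝ) : ℝ := x * xiFn' S β x - xiFn S β x

/-- A discrete order parameter with at most `k` atoms:
`0 = m_0 ≤ m_1 ≤ ⋯ ≤ m_k = 1` with `m_l > 0` for `1 ≤ l ≤ k`,
and `0 = q_0 ≤ q_1 ≤ ⋯ ≤ q_k ≤ q_{k+1} = 1`. -/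
structure OrderParam (k : ℕ) where
  m : ℕ → ℝ
  q : ℕ → ℝ
  m_zero : m 0 = 0
  m_last : m k = 1
  m_mono : ∀ l, l < k → m l ≤ m (l + 1)
  m_pos : ∀ l, 1 ≤ l → l ≤ k → 0 < m l
  q_zero : q 0 = 0
  q_last : q (k + 1) = 1
  q_mono : ∀ l, l ≤ k → q l ≤ q (l + 1)

/-- The recursively defined functions of the Parisi functional:
`parisiB m v k j = A_{k-j}`, so `parisiB m v k 0 = A_k = log cosh` and
`parisiB m v k k = A_0`, where
`A_{l-1}(x) = (1/m_l) log ∫ exp (m_l A_l (x+y)) dγ_{v_l}(y)`. -/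
def parisiB (m v : ℕ → ℝ) (k : ℕ) : ℕ → ℝ → ℝ
  | 0, x => Real.log (Real.cosh x)
  | j + 1, x =>
      (1 / m (k - j)) *
        Real.log (∫ y, Real.exp (m (k - j) * parisiB m v k j (x + y)) ∂(gauss (v (k - j))))

/-- The variances `v_0 = ξ'(q_1)` and `v_l = ξ'(q_{l+1}) - ξ'(q_l)` for `l ≥ 1`. -/
def opVar (S : Finset ℕ) (β : ℕ → ℝ) {k : ℕ} (op : OrderParam k) : ℕ → ℝ := fun l =>
  if l = 0 then xiFn' S β (op.q 1) else xiFn' S β (op.q (l + 1)) - xiFn' S β (op.q l)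

/-- The discrete Parisi functional
`P(m,q;β) = ∫ A_0(h+y) dγ_{v_0}(y) - (1/2) Σ_{1≤l≤k} m_l (θ(q_{l+1}) - θ(q_l))`. -/
def parisiP (S : Finset ℕ) (h : ℝ) (β : ℕ → ℝ) {k : ℕ} (op : OrderParam k) : ℝ :=
  (∫ y, parisiB op.m (opVar S β op) k k (h + y) ∂(gauss (opVar S β op 0))) -
    (1 / 2) * ∑ l ∈ Finset.Icc 1 k, op.m l * (thetaFn S β (op.q (l + 1)) - thetaFn S β (op.q l))

/-- The Parisi formula: infimum over `k ≥ 1` and discrete order parameters with at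
most `k` atoms. -/
def parisiF (S : Finset ℕ) (h : ℝ) (β : ℕ → ℝ) : ℝ :=
  sInf {x : ℝ | ∃ k : ℕ, 1 ≤ k ∧ ∃ op : OrderParam k, x = parisiP S h β op}


/-! ### Functions of at most exponential growth and Gaussian integrals -/

/-- Measurable functions of at most exponential growth. -/
structure EG (g : ℝ → ℝ) : Prop where
  meas : Measurable g
  bd : ∃ C K : ℝ, 0 ≤ C ∧ 0 ≤ K ∧ ∀ y, |g y| ≤ C * exp (K * |y|)

/-- 1-Lipschitz functions. -/
def Lip1 (A : ℝ → ℝ) : Prop := ∀ x y, |A x - A y| ≤ |x - y|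

theorem EG.of_bounded {g : ℝ → ℝ} (hm : Measurable g) (C : ℝ) (h : ∀ y, |g y| ≤ C) : EG g := by
  refine ⟨hm, C, 0, (abs_nonneg _).trans (h 0), le_rfl, fun y => ?_⟩
  simpa using h y

theorem EG.const (c : ℝ) : EG (fun _ => c) := EG.of_bounded measurable_const |c| (fun _ => le_rfl)

theorem EG.id : EG (fun y => y) := by
  refine ⟨measurable_id, 1, 1, by norm_num, by norm_num, fun y => ?_⟩
  have := add_one_le_exp |y|
  simp only [one_mul]; linarith

theorem EG.add {f g : ℝ → ℝ} (hf : EG f) (hg : EG g) : EG (fun y => f y + g y) := by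
  obtain ⟨C, K, hC, hK, h⟩ := hf.bd
  obtain ⟨C', K', hC', hK', h'⟩ := hg.bd
  refine ⟨hf.meas.add hg.meas, C + C', K + K', by positivity, by positivity, fun y => ?_⟩
  have h1 : exp (K * |y|) ≤ exp ((K + K') * |y|) := by gcongr; linarith
  have h2 : exp (K' * |y|) ≤ exp ((K + K') * |y|) := by gcongr; linarith
  calc |f y + g y| ≤ |f y| + |g y| := abs_add_le _ _
    _ ≤ C * exp (K * |y|) + C' * exp (K' * |y|) := add_le_add (h y) (h' y)
    _ ≤ C * exp ((K + K') * |y|) + C' * exp ((K + K') * |y|) := by gcongr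
    _ = _ := by ring

theorem EG.mul {f g : ℝ → ℝ} (hf : EG f) (hg : EG g) : EG (fun y => f y * g y) := by
  obtain ⟨C, K, hC, hK, h⟩ := hf.bd
  obtain ⟨C', K', hC', hK', h'⟩ := hg.bd
  refine ⟨hf.meas.mul hg.meas, C * C', K + K', by positivity, by positivity, fun y => ?_⟩
  calc |f y * g y| = |f y| * |g y| := abs_mul _ _
    _ ≤ (C * exp (K * |y|)) * (C' * exp (K' * |y|)) := by
      apply mul_le_mul (h y) (h' y) (abs_nonneg _) (by positivity)
    _ = _ := by rw [add_mul, exp_add]; ring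

theorem EG.const_mul {f : ℝ → ℝ} (c : ℝ) (hf : EG f) : EG (fun y => c * f y) := (EG.const c).mul hf

theorem EG.neg {f : ℝ → ℝ} (hf : EG f) : EG (fun y => - f y) := by
  simpa using hf.const_mul (-1)

theorem EG.sub {f g : ℝ → ℝ} (hf : EG f) (hg : EG g) : EG (fun y => f y - g y) := by
  simpa [sub_eq_add_neg] using hf.add hg.neg

theorem EG.pow_two {f : ℝ → ℝ} (hf : EG f) : EG (fun y => f y ^ 2) := by
  simpa [sq] using hf.mul hf

theorem EG.abs {f : ℝ → ℝ} (hf : EG f) : EG (fun y => |f y|) := by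
  obtain ⟨C, K, hC, hK, h⟩ := hf.bd
  exact ⟨hf.meas.abs, C, K, hC, hK, fun y => by simpa using h y⟩

theorem EG.mono {f g : ℝ → ℝ} (hf : EG f) (hm : Measurable g) (h : ∀ y, |g y| ≤ f y) : EG g := by
  obtain ⟨C, K, hC, hK, h'⟩ := hf.bd
  exact ⟨hm, C, K, hC, hK, fun y => (h y).trans ((le_abs_self _).trans (h' y))⟩

theorem EG.exp_abs (K : ℝ) : EG (fun y => exp (K * |y|)) := by
  refine ⟨by fun_prop, 1, |K|, by norm_num, abs_nonneg _, fun y => ?_⟩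
  rw [abs_of_pos (exp_pos _), one_mul]
  gcongr; exact le_abs_self _

theorem EG.exp_lin (c : ℝ) : EG (fun y => exp (c * y)) := by
  refine (EG.exp_abs |c|).mono (by fun_prop) fun y => ?_
  rw [abs_of_pos (exp_pos _), ← abs_mul]
  gcongr; exact le_abs_self _

theorem EG.shift {f : ℝ → ℝ} (hf : EG f) (x : ℝ) : EG (fun y => f (x + y)) := by
  obtain ⟨C, K, hC, hK, h⟩ := hf.bd
  refine ⟨hf.meas.comp (by fun_prop), C * exp (K * |x|), K, by positivity, hK, fun y => ?_⟩
  refine (h _).trans ?_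
  rw [mul_assoc, ← exp_add, ← mul_add]
  gcongr; exact abs_add_le _ _

theorem Lip1.continuous {A : ℝ → ℝ} (h : Lip1 A) : Continuous A := by
  have : LipschitzWith 1 A := LipschitzWith.of_dist_le_mul fun x y => by
    simpa [Real.dist_eq] using h x y
  exact this.continuous

theorem Lip1.abs_le {A : ℝ → ℝ} (h : Lip1 A) (y : ℝ) : |A y| ≤ |A 0| + |y| := by
  have h1 := h y 0
  have h2 := abs_sub_abs_le_abs_sub (A y) (A 0)
  simp only [sub_zero] at h1
  linarith

theorem Lip1.eg {A : ℝ → ℝ} (h : Lip1 A) : EG A :=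
  ((EG.const |A 0|).add EG.id.abs).mono h.continuous.measurable h.abs_le

theorem Lip1.eg_exp {A : ℝ → ℝ} (h : Lip1 A) (m : ℝ) : EG (fun y => exp (m * A y)) := by
  have hc := h.continuous
  refine ((EG.exp_abs |m|).const_mul (exp (|m| * |A 0|))).mono (by fun_prop) fun y => ?_
  rw [abs_of_pos (exp_pos _), ← exp_add, ← mul_add]
  apply Real.exp_le_exp.mpr
  calc m * A y ≤ |m * A y| := le_abs_self _
    _ = |m| * |A y| := abs_mul _ _
    _ ≤ _ := by gcongr; exact h.abs_le y

theorem Lip1.shift {A : ℝ → ℝ} (h : Lip1 A) (x : ℝ) : Lip1 (fun y => A (x + y)) := fun y z => by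
  simpa using h (x + y) (x + z)

theorem Lip1.add_const {A : ℝ → ℝ} (h : Lip1 A) (c : ℝ) : Lip1 (fun y => A y + c) := fun y z => by
  simpa using h y z

instance gauss_prob (v : ℝ) : IsProbabilityMeasure (gauss v) := by
  unfold gauss; infer_instance

theorem gauss_zero : gauss 0 = Measure.dirac 0 := by
  simp [gauss, gaussianReal_zero_var]

theorem EG.integrable {f : ℝ → ℝ} (hf : EG f) (v : ℝ) : Integrable f (gauss v) := by
  obtain ⟨C, K, hC, hK, h⟩ := hf.bd
  have h1 : Integrable (fun y => exp (K * y) + exp (-K * y)) (gauss v) :=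
    (integrable_exp_mul_gaussianReal K).add (integrable_exp_mul_gaussianReal (-K))
  refine (h1.const_mul C).mono' hf.meas.aestronglyMeasurable (ae_of_all _ fun y => ?_)
  refine (h y).trans ?_
  gcongr
  rcases abs_cases y with ⟨e, _⟩ | ⟨e, _⟩ <;> rw [e]
  · linarith [exp_pos (-K * y)]
  · have : K * -y = -K * y := by ring
    rw [this]; linarith [exp_pos (K * y)]

theorem gauss_exp (v c : ℝ) (hv : 0 ≤ v) : ∫ y, exp (c * y) ∂(gauss v) = exp (c ^ 2 * v / 2) := by
  have := congrFun (mgf_fun_id_gaussianReal (μ := 0) (v := v.toNNReal)) c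
  simp only [mgf, zero_mul, zero_add, Real.coe_toNNReal v hv] at this
  rw [gauss, this]; congr 1; ring

theorem gauss_integral_eq {v : ℝ} (hv : 0 < v) (f : ℝ → ℝ) :
    ∫ y, f y ∂(gauss v) = ∫ y, gaussianPDFReal 0 v.toNNReal y * f y := by
  rw [gauss, integral_gaussianReal_eq_integral_smul]
  · simp
  · simpa using hv

theorem gauss_pdf {v : ℝ} (hv : 0 < v) (y : ℝ) :
    gaussianPDFReal 0 v.toNNReal y = (√(2 * π * v))⁻¹ * exp (-y ^ 2 / (2 * v)) := by
  rw [gaussianPDFReal, Real.coe_toNNReal v hv.le]; simp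

theorem gauss_integrable_pdf {v : ℝ} (hv : 0 < v) {f : ℝ → ℝ} (hf : Integrable f (gauss v)) :
    Integrable (fun y => gaussianPDFReal 0 v.toNNReal y * f y) := by
  have hv' : v.toNNReal ≠ 0 := by simpa using hv
  rw [gauss, gaussianReal_of_var_ne_zero _ hv',
    integrable_withDensity_iff_integrable_smul' (measurable_gaussianPDF _ _)
      (ae_of_all _ fun _ ↦ gaussianPDF_lt_top)] at hf
  simpa [toReal_gaussianPDF] using hf

/-- Cameron-Martin formula. -/
theorem gauss_shift {v : ℝ} (hv : 0 ≤ v) (c : ℝ) (f : ℝ → ℝ) :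
    ∫ y, f (y + v * c) ∂(gauss v) = ∫ y, f y * exp (c * y - c ^ 2 * v / 2) ∂(gauss v) := by
  rcases hv.eq_or_lt with rfl | hv
  · simp [gauss_zero]
  rw [gauss_integral_eq hv, gauss_integral_eq hv]
  rw [← integral_sub_right_eq_self (fun y => gaussianPDFReal 0 v.toNNReal y * f (y + v * c)) (v * c)]
  congr 1; ext y
  simp only [sub_add_cancel]
  rw [gauss_pdf hv, gauss_pdf hv]
  have : exp (-(y - v * c) ^ 2 / (2 * v)) =
      exp (-y ^ 2 / (2 * v)) * exp (c * y - c ^ 2 * v / 2) := by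
    rw [← exp_add]; congr 1; field_simp; ring
  rw [this]; ring

/-- Gaussian integration by parts. -/
theorem gauss_ibp {v : ℝ} (hv : 0 ≤ v) {F F' : ℝ → ℝ} (hF : EG F) (hF' : EG F')
    (hd : ∀ y, HasDerivAt F (F' y) y) :
    ∫ y, y * F y ∂(gauss v) = v * ∫ y, F' y ∂(gauss v) := by
  rcases hv.eq_or_lt with rfl | hv
  · simp [gauss_zero]
  have hp : ∀ y, HasDerivAt (gaussianPDFReal 0 v.toNNReal)
      (gaussianPDFReal 0 v.toNNReal y * (-y / v)) y := by
    intro y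
    have e : gaussianPDFReal 0 v.toNNReal =
        fun y => (√(2 * π * v))⁻¹ * exp (-y ^ 2 / (2 * v)) := funext fun y => gauss_pdf hv y
    rw [e]
    have h1 : HasDerivAt (fun y : ℝ => -y ^ 2 / (2 * v)) (-y / v) y := by
      have := ((hasDerivAt_pow 2 y).neg.div_const (2 * v))
      have e2 : -y / v = -(((2 : ℕ) : ℝ) * y ^ (2 - 1)) / (2 * v) := by
        push_cast; field_simp
      rw [e2]; exact this
    have h2 := h1.exp.const_mul ((√(2 * π * v))⁻¹)
    rw [← mul_assoc] at h2
    exact h2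
  have hI1 := gauss_integrable_pdf hv (hF'.integrable v)
  have hI2 := gauss_integrable_pdf hv ((EG.id.mul hF).integrable v)
  have hI3 := gauss_integrable_pdf hv (hF.integrable v)
  have key := integral_mul_deriv_eq_deriv_mul_of_integrable
    (u := gaussianPDFReal 0 v.toNNReal) (v := F) (u' := fun y => gaussianPDFReal 0 v.toNNReal y * (-y / v))
    (v' := F') (fun y _ => hp y) (fun y _ => hd y) hI1
    (by
      have : (fun y => gaussianPDFReal 0 v.toNNReal y * (-y / v)) * F =
        fun y => (-1 / v) * (gaussianPDFReal 0 v.toNNReal y * (y * F y)) := by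
        ext y; simp only [Pi.mul_apply]; ring
      rw [this]; exact hI2.const_mul _) hI3
  rw [gauss_integral_eq hv, gauss_integral_eq hv, key]
  have : ∀ y, gaussianPDFReal 0 v.toNNReal y * (-y / v) * F y =
        (-1 / v) * (gaussianPDFReal 0 v.toNNReal y * (y * F y)) := by intro y; ring
  simp_rw [this]
  rw [integral_const_mul]
  field_simp

theorem gauss_conv {v w : ℝ} (hv : 0 ≤ v) (hw : 0 ≤ w) {f : ℝ → ℝ} (hf : EG f) :
    ∫ y, ∫ z, f (y + z) ∂(gauss w) ∂(gauss v) = ∫ y, f y ∂(gauss (v + w)) := by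
  have e : gauss (v + w) = gauss v ∗ gauss w := by
    rw [gauss, gauss, gauss, gaussianReal_conv_gaussianReal, Real.toNNReal_add hv hw]; simp
  rw [e, integral_conv]
  rw [← e]; exact hf.integrable _

theorem gauss_scale {v : ℝ} (hv : 0 ≤ v) {f : ℝ → ℝ} (hf : Measurable f) :
    ∫ y, f y ∂(gauss v) = ∫ y, f (√v * y) ∂(gauss 1) := by
  have e : gauss v = (gauss 1).map (fun y => √v * y) := by
    rw [gauss, gauss, gaussianReal_map_const_mul]
    congr 1
    · simp
    · ext; simp [Real.sq_sqrt hv, hv]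
  rw [e, integral_map (by fun_prop) hf.aestronglyMeasurable]


theorem jensen_log {μ : Measure ℝ} [IsProbabilityMeasure μ] {f : ℝ → ℝ} (hf : Integrable f μ)
    (he : Integrable (fun y => exp (f y)) μ) : ∫ y, f y ∂μ ≤ log (∫ y, exp (f y) ∂μ) := by
  rw [Real.le_log_iff_exp_le (integral_exp_pos he)]
  exact convexOn_exp.map_integral_le continuous_exp.continuousOn isClosed_univ (by simp) hf he

/-- The basic Parisi operator. -/
def TO (m v : ℝ) (A : ℝ → ℝ) (x : ℝ) : ℝ :=
  (1 / m) * log (∫ y, exp (m * A (x + y)) ∂(gauss v))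

/-- The tilted Gaussian measure. -/
def rho (m v : ℝ) (A : ℝ → ℝ) (x : ℝ) : Measure ℝ := (gauss v).tilted (fun y => m * A (x + y))

def Zf (m v : ℝ) (A : ℝ → ℝ) (x : ℝ) : ℝ := ∫ y, exp (m * A (x + y)) ∂(gauss v)

section
variable {m v : ℝ} {A : ℝ → ℝ}

theorem Zf_pos (hA : Lip1 A) (m v x : ℝ) : 0 < Zf m v A x :=
  integral_exp_pos (((hA.shift x).eg_exp m).integrable v)

theorem rho_prob (hA : Lip1 A) (m v x : ℝ) : IsProbabilityMeasure (rho m v A x) :=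
  isProbabilityMeasure_tilted (((hA.shift x).eg_exp m).integrable v)

theorem rho_eq (m v : ℝ) (A : ℝ → ℝ) (x : ℝ) (f : ℝ → ℝ) :
    ∫ y, f y ∂(rho m v A x) = (∫ y, f y * exp (m * A (x + y)) ∂(gauss v)) / Zf m v A x := by
  rw [rho, integral_tilted, ← integral_div]
  congr 1; ext y; simp only [smul_eq_mul, Zf]; ring

theorem rho_int (hA : Lip1 A) (m v x : ℝ) {f : ℝ → ℝ} (hf : EG f) :
    Integrable f (rho m v A x) := by
  rw [rho, integrable_tilted_iff (((hA.shift x).eg_exp m).integrable v)]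
  simpa [smul_eq_mul] using (((hA.shift x).eg_exp m).mul hf).integrable v

theorem rho_mul_Z (hA : Lip1 A) (m v x : ℝ) (f : ℝ → ℝ) :
    ∫ y, f y * exp (m * A (x + y)) ∂(gauss v) = Zf m v A x * ∫ y, f y ∂(rho m v A x) := by
  rw [rho_eq]; have := (Zf_pos hA m v x).ne'; field_simp

theorem gauss_deriv {F F' : ℝ → ℝ} (hF : EG F) (hF' : EG F') (hd : ∀ y, HasDerivAt F (F' y) y)
    (v x : ℝ) : HasDerivAt (fun x => ∫ y, F (x + y) ∂(gauss v)) (∫ y, F' (x + y) ∂(gauss v)) x := by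
  obtain ⟨C, K, hC, hK, hb⟩ := hF'.bd
  refine (hasDerivAt_integral_of_dominated_loc_of_deriv_le (F := fun x y => F (x + y))
    (F' := fun x y => F' (x + y)) (s := Metric.ball x 1)
    (bound := fun y => C * exp (K * (|x| + 1)) * exp (K * |y|)) (Metric.ball_mem_nhds x one_pos)
    (Eventually.of_forall fun x' => (hF.shift x').meas.aestronglyMeasurable)
    ((hF.shift x).integrable v) (hF'.shift x).meas.aestronglyMeasurable
    (ae_of_all _ fun y x' hx' => ?_) (((EG.exp_abs K).const_mul _).integrable v)
    (ae_of_all _ fun y x' hx' => ?_)).2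
  · rw [Real.norm_eq_abs]
    refine (hb _).trans ?_
    rw [mul_assoc, ← exp_add, ← mul_add]
    have h1 : |x' - x| < 1 := by simpa [Real.dist_eq] using hx'
    have h2 : |x' + y| ≤ |x| + 1 + |y| := by
      have := abs_add_le x' y
      have := abs_sub_abs_le_abs_sub x' x
      linarith
    gcongr
  · exact (hd (x' + y)).comp_add_const x' y

theorem TO_lip (hm : 0 < m) (hA : Lip1 A) (v : ℝ) : Lip1 (TO m v A) := by
  have key : ∀ x y, TO m v A x - TO m v A y ≤ |x - y| := by
    intro x y
    have hx := Zf_pos hA m v x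
    have hy := Zf_pos hA m v y
    have : Zf m v A x ≤ exp (m * |x - y|) * Zf m v A y := by
      unfold Zf; rw [← integral_const_mul]
      refine integral_mono (((hA.shift x).eg_exp m).integrable v)
        ((((hA.shift y).eg_exp m).const_mul _).integrable v) fun z => ?_
      simp only
      rw [← exp_add, ← mul_add]
      have := (abs_le.mp (hA (x + z) (y + z))).2
      simp only [add_sub_add_right_eq_sub] at this
      gcongr; linarith
    have h2 := Real.log_le_log hx this
    rw [Real.log_mul (exp_pos _).ne' hy.ne', Real.log_exp] at h2
    have : TO m v A x - TO m v A y = (1 / m) * (log (Zf m v A x) - log (Zf m v A y)) := by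
      unfold TO Zf; ring
    rw [this, one_div, inv_mul_le_iff₀ hm]; linarith
  intro x y
  rw [abs_le]
  have h1 := key x y
  have h2 := key y x
  rw [abs_sub_comm] at h2
  constructor <;> linarith

theorem TO_mul (hm : 0 < m) (v : ℝ) (A : ℝ → ℝ) (x : ℝ) : m * TO m v A x = log (Zf m v A x) := by
  unfold TO Zf; field_simp

theorem TO_exp (hm : 0 < m) (hA : Lip1 A) (v x : ℝ) : exp (m * TO m v A x) = Zf m v A x := by
  rw [TO_mul hm, Real.exp_log (Zf_pos hA m v x)]

theorem TO_zero (hm : 0 < m) (A : ℝ → ℝ) : TO m 0 A = A := by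
  ext x; simp [TO, gauss_zero]; field_simp

theorem TO_mono (hm : 0 < m) {B : ℝ → ℝ} (hA : Lip1 A) (hB : Lip1 B) (h : ∀ x, A x ≤ B x) (v x : ℝ) :
    TO m v A x ≤ TO m v B x := by
  unfold TO
  have h0 := Zf_pos hA m v x
  unfold Zf at h0
  have : ∫ y, exp (m * A (x + y)) ∂(gauss v) ≤ ∫ y, exp (m * B (x + y)) ∂(gauss v) := by
    refine integral_mono (((hA.shift x).eg_exp m).integrable v)
        (((hB.shift x).eg_exp m).integrable v) fun z => ?_
    have := h (x + z)
    simp only; gcongr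
  gcongr

theorem TO_add_const (hm : 0 < m) (hA : Lip1 A) (c v x : ℝ) :
    TO m v (fun y => A y + c) x = TO m v A x + c := by
  have h0 := Zf_pos hA m v x
  have : ∫ y, exp (m * (A (x + y) + c)) ∂(gauss v) = exp (m * c) * Zf m v A x := by
    unfold Zf; rw [← integral_const_mul]; congr 1; ext y; rw [← exp_add]; ring_nf
  simp only [TO]
  rw [this, Real.log_mul (exp_pos _).ne' h0.ne', Real.log_exp]
  unfold Zf; field_simp; ring

theorem TO_semigroup (hm : 0 < m) (hA : Lip1 A) {v w : ℝ} (hv : 0 ≤ v) (hw : 0 ≤ w) :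
    TO m v (TO m w A) = TO m (v + w) A := by
  ext x
  have : ∀ y, exp (m * TO m w A (x + y)) = ∫ z, exp (m * A (x + (y + z))) ∂(gauss w) := by
    intro y; rw [TO_exp hm hA]; unfold Zf; simp only [add_assoc]
  show (1 / m) * log (∫ y, exp (m * TO m w A (x + y)) ∂(gauss v)) = _
  simp_rw [this]
  rw [gauss_conv hv hw ((hA.shift x).eg_exp m)]
  rfl

theorem TO_ge_mean (hm : 0 < m) (hA : Lip1 A) (v x : ℝ) :
    ∫ y, A (x + y) ∂(gauss v) ≤ TO m v A x := by
  have h := jensen_log (((hA.shift x).eg.const_mul m).integrable v) (((hA.shift x).eg_exp m).integrable v)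
  rw [integral_const_mul] at h
  unfold TO
  rw [one_div, le_inv_mul_iff₀ hm]; exact h

theorem gauss_mean (v : ℝ) : ∫ y, y ∂(gauss v) = 0 := by
  unfold gauss; simp

end

theorem iadd {μ : Measure ℝ} {f g : ℝ → ℝ} (hf : Integrable f μ) (hg : Integrable g μ) :
    Integrable (fun y => f y + g y) μ := hf.add hg

/-- The class of smooth functions preserved by the operators. -/
structure Cls (c : ℝ) (A u u' : ℝ → ℝ) : Prop where
  cpos : 0 ≤ c
  dA : ∀ x, HasDerivAt A (u x) x
  du : ∀ x, HasDerivAt u (u' x) x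
  abs_u : ∀ x, |u x| ≤ 1
  lo : ∀ x, c / cosh (2 * x) ≤ u' x
  hi : ∀ x, u' x ≤ 1 - u x ^ 2

namespace Cls
variable {c m v : ℝ} {A u u' : ℝ → ℝ}

theorem u'_nonneg (h : Cls c A u u') (x : ℝ) : 0 ≤ u' x :=
  (div_nonneg h.cpos (cosh_pos _).le).trans (h.lo x)

theorem u'_le (h : Cls c A u u') (x : ℝ) : u' x ≤ 1 := by
  have := h.hi x; nlinarith [sq_nonneg (u x)]

theorem lip (h : Cls c A u u') : Lip1 A := by
  intro x y
  have := Convex.norm_image_sub_le_of_norm_hasDerivWithin_le (f := A) (f' := u) (C := 1)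
    (s := Set.univ) (x := y) (y := x) (fun z _ => (h.dA z).hasDerivWithinAt) (fun z _ => h.abs_u z)
    convex_univ trivial trivial
  simpa using this

theorem meas_u' (h : Cls c A u u') : Measurable u' := by
  have : u' = deriv u := by ext x; exact (h.du x).deriv.symm
  rw [this]; exact measurable_deriv u

theorem eg_u (h : Cls c A u u') : EG u :=
  EG.of_bounded (continuous_iff_continuousAt.mpr fun x => (h.du x).continuousAt).measurable 1 h.abs_u

theorem eg_u' (h : Cls c A u u') : EG u' :=
  EG.of_bounded h.meas_u' 1 fun x => by
    rw [abs_of_nonneg (h.u'_nonneg x)]; exact h.u'_le x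

theorem d_exp (h : Cls c A u u') (m x : ℝ) :
    HasDerivAt (fun x => exp (m * A x)) (m * u x * exp (m * A x)) x := by
  have := ((h.dA x).const_mul m).exp
  convert this using 1; ring

theorem d_uexp (h : Cls c A u u') (m x : ℝ) :
    HasDerivAt (fun x => u x * exp (m * A x)) ((u' x + m * u x ^ 2) * exp (m * A x)) x := by
  have := (h.du x).mul (h.d_exp m x)
  refine this.congr_deriv ?_
  ring

end Cls

/-- mean of u -/
def uh (m v : ℝ) (A u : ℝ → ℝ) (x : ℝ) : ℝ := ∫ y, u (x + y) ∂(rho m v A x)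

def uh' (m v : ℝ) (A u u' : ℝ → ℝ) (x : ℝ) : ℝ :=
  (∫ y, u' (x + y) ∂(rho m v A x)) + m * (∫ y, u (x + y) ^ 2 ∂(rho m v A x)) - m * uh m v A u x ^ 2

theorem rho_exp_le {m v : ℝ} {A : ℝ → ℝ} (hA : Lip1 A) (hm : 0 ≤ m) (hm1 : m ≤ 1) (hv : 0 ≤ v) (b x : ℝ) :
    ∫ y, exp (b * y) ∂(rho m v A x) ≤ exp (b ^ 2 * v / 2 + |b| * v) := by
  rw [rho_eq, div_le_iff₀ (Zf_pos hA m v x)]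
  have h := gauss_shift hv b (fun y => exp (m * A (x + y)))
  have e : ∫ y, exp (b * y) * exp (m * A (x + y)) ∂(gauss v) =
      exp (b ^ 2 * v / 2) * ∫ y, exp (m * A (x + (y + v * b))) ∂(gauss v) := by
    rw [h, ← integral_const_mul]; congr 1; ext y
    rw [← exp_add, ← exp_add, ← exp_add]; ring_nf
  rw [e, exp_add, mul_assoc]
  gcongr
  unfold Zf
  rw [← integral_const_mul]
  have hs : Lip1 (fun y => A (x + (y + v * b))) := by
    have := hA.shift (x + v * b)
    convert this using 3; ring
  refine integral_mono ((hs.eg_exp m).integrable v)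
    ((((hA.shift x).eg_exp m).const_mul _).integrable v) fun y => ?_
  simp only
  rw [← exp_add]
  have h1 := (abs_le.mp (hA (x + (y + v * b)) (x + y))).2
  have h2 : |x + (y + v * b) - (x + y)| = |b| * v := by
    rw [show x + (y + v * b) - (x + y) = b * v by ring, abs_mul, abs_of_nonneg hv]
  rw [h2] at h1
  have h3 : 0 ≤ |b| * v := by positivity
  gcongr
  nlinarith

theorem eg_cosh (b x : ℝ) : EG (fun y => cosh (b * (x + y))) := by
  have h : EG (fun y => cosh (b * y)) := by
    have := ((EG.exp_lin b).add (EG.exp_lin (-b))).const_mul (1 / 2)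
    convert this using 2 with y
    rw [cosh_eq]; ring_nf
  exact h.shift x

theorem rho_cosh_le {m v : ℝ} {A : ℝ → ℝ} (hA : Lip1 A) (hm : 0 ≤ m) (hm1 : m ≤ 1) (hv : 0 ≤ v) (b x : ℝ) :
    ∫ y, cosh (b * (x + y)) ∂(rho m v A x) ≤ exp (b ^ 2 * v / 2 + |b| * v) * cosh (b * x) := by
  have h1 := rho_exp_le hA hm hm1 hv b x
  have h2 := rho_exp_le hA hm hm1 hv (-b) x
  rw [abs_neg, neg_sq] at h2
  have e : ∫ y, cosh (b * (x + y)) ∂(rho m v A x) =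
      exp (b * x) / 2 * (∫ y, exp (b * y) ∂(rho m v A x)) +
        exp (-b * x) / 2 * (∫ y, exp (-b * y) ∂(rho m v A x)) := by
    rw [← integral_const_mul, ← integral_const_mul, ← integral_add
      (rho_int hA m v x ((EG.exp_lin b).const_mul _)) (rho_int hA m v x ((EG.exp_lin (-b)).const_mul _))]
    congr 1; ext y
    rw [cosh_eq, show -(b * (x + y)) = -b * x + -b * y by ring, mul_add, exp_add, exp_add]; ring
  rw [e, cosh_eq, show -(b * x) = -b * x by ring]
  have p1 := exp_pos (b * x)
  have p2 := exp_pos (-b * x)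
  nlinarith

theorem rho_inv_cosh_ge {m v : ℝ} {A : ℝ → ℝ} (hA : Lip1 A) (hm : 0 ≤ m) (hm1 : m ≤ 1) (hv : 0 ≤ v) (b x : ℝ) :
    exp (-(b ^ 2 * v / 2 + |b| * v)) / cosh (b * x) ≤ ∫ y, 1 / cosh (b * (x + y)) ∂(rho m v A x) := by
  have := rho_prob hA m v x
  have h1 := rho_cosh_le hA hm hm1 hv b x
  set E := exp (b ^ 2 * v / 2 + |b| * v) with hE
  have hEp : 0 < E := exp_pos _
  rw [exp_neg, ← hE]
  have hc := cosh_pos (b * x)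
  set a := E⁻¹ / cosh (b * x) with ha
  have hap : 0 < a := by positivity
  have hi : EG (fun y => 1 / cosh (b * (x + y))) := by
    refine EG.of_bounded ?_ 1 fun y => ?_
    · have : Measurable fun y => cosh (b * (x + y)) := (eg_cosh b x).meas
      exact this.const_div 1
    · have := one_le_cosh (b * (x + y))
      rw [abs_of_nonneg (by positivity), div_le_one (by linarith)]; exact this
  have h2 : ∫ y, (2 * a - a ^ 2 * cosh (b * (x + y))) ∂(rho m v A x) ≤
      ∫ y, 1 / cosh (b * (x + y)) ∂(rho m v A x) := by
    refine integral_mono (rho_int hA m v x ((EG.const _).sub ((eg_cosh b x).const_mul _)))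
      (rho_int hA m v x hi) fun y => ?_
    simp only
    have hp := cosh_pos (b * (x + y))
    rw [le_div_iff₀ hp]
    nlinarith [sq_nonneg (a * cosh (b * (x + y)) - 1)]
  rw [integral_sub (integrable_const _) (rho_int hA m v x ((eg_cosh b x).const_mul _))] at h2
  simp only [integral_const_mul, integral_const, probReal_univ, one_smul] at h2
  have h3 : a ^ 2 * ∫ y, cosh (b * (x + y)) ∂(rho m v A x) ≤ a := by
    calc _ ≤ a ^ 2 * (E * cosh (b * x)) := by gcongr
      _ = a := by rw [ha]; field_simp
  linarith

section
variable {c m v : ℝ} {A u u' : ℝ → ℝ}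

theorem TO_deriv (h : Cls c A u u') (hm : 0 < m) (v x : ℝ) :
    HasDerivAt (TO m v A) (uh m v A u x) x := by
  have h1 := gauss_deriv (h.lip.eg_exp m) ((h.eg_u.const_mul m).mul (h.lip.eg_exp m))
    (h.d_exp m) v x
  have hZ := Zf_pos h.lip m v x
  have h2 := (h1.log hZ.ne').const_mul (1 / m)
  refine h2.congr_deriv ?_
  rw [uh, rho_eq]
  have e : ∫ y, m * u (x + y) * exp (m * A (x + y)) ∂(gauss v) =
      m * ∫ y, u (x + y) * exp (m * A (x + y)) ∂(gauss v) := by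
    rw [← integral_const_mul]; congr 1; ext y; ring
  rw [e]
  change 1 / m * (m * _ / Zf m v A x) = _
  field_simp

theorem uh_deriv (h : Cls c A u u') (m v x : ℝ) :
    HasDerivAt (uh m v A u) (uh' m v A u u' x) x := by
  have h1 := gauss_deriv (h.lip.eg_exp m) ((h.eg_u.const_mul m).mul (h.lip.eg_exp m))
    (h.d_exp m) v x
  have h2 := gauss_deriv (h.eg_u.mul (h.lip.eg_exp m))
    ((h.eg_u'.add (h.eg_u.pow_two.const_mul m)).mul (h.lip.eg_exp m)) (h.d_uexp m) v x
  have hZ := Zf_pos h.lip m v x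
  have h3 := h2.div h1 hZ.ne'
  have e0 : uh m v A u = fun x => (∫ y, u (x + y) * exp (m * A (x + y)) ∂(gauss v)) /
    (∫ y, exp (m * A (x + y)) ∂(gauss v)) := by ext x; rw [uh, rho_eq]; rfl
  rw [e0]
  refine h3.congr_deriv ?_
  have e1 : ∫ y, m * u (x + y) * exp (m * A (x + y)) ∂(gauss v) = m * (Zf m v A x * uh m v A u x) := by
    rw [uh, ← rho_mul_Z h.lip, ← integral_const_mul]; congr 1; ext y; ring
  have e2 : ∫ y, u (x + y) * exp (m * A (x + y)) ∂(gauss v) = Zf m v A x * uh m v A u x := by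
    rw [uh, ← rho_mul_Z h.lip]
  have e3 : ∫ y, (u' (x + y) + m * u (x + y) ^ 2) * exp (m * A (x + y)) ∂(gauss v) =
      Zf m v A x * ((∫ y, u' (x + y) ∂(rho m v A x)) + m * ∫ y, u (x + y) ^ 2 ∂(rho m v A x)) := by
    rw [rho_mul_Z h.lip m v x (fun y => u' (x + y) + m * u (x + y) ^ 2),
      integral_add (rho_int h.lip m v x (h.eg_u'.shift x))
      (rho_int h.lip m v x ((h.eg_u.pow_two.shift x).const_mul m)), integral_const_mul]
  rw [e1, e2, e3]
  change (Zf m v A x * _ * Zf m v A x - _) / Zf m v A x ^ 2 = _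
  rw [uh']; field_simp

theorem var_nonneg {μ : Measure ℝ} [IsProbabilityMeasure μ] {f : ℝ → ℝ} (hf : Integrable f μ)
    (hf2 : Integrable (fun y => f y ^ 2) μ) : (∫ y, f y ∂μ) ^ 2 ≤ ∫ y, f y ^ 2 ∂μ := by
  have h : 0 ≤ ∫ y, (f y - ∫ z, f z ∂μ) ^ 2 ∂μ := integral_nonneg fun y => sq_nonneg _
  set a := ∫ z, f z ∂μ with ha
  have e : ∀ y, (f y - a) ^ 2 = f y ^ 2 + ((-2 * a) * f y + a ^ 2) := fun y => by ring
  simp_rw [e] at h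
  rw [integral_add hf2 (iadd (hf.const_mul _) (integrable_const _)),
    integral_add (hf.const_mul _) (integrable_const _), integral_const_mul, ← ha] at h
  simp only [integral_const, probReal_univ, one_smul] at h
  nlinarith

theorem Cls.step (h : Cls c A u u') (hm : 0 < m) (hm1 : m ≤ 1) (hv : 0 ≤ v) :
    Cls (c * exp (-(4 * v))) (TO m v A) (uh m v A u) (uh' m v A u u') := by
  have hsq : ∀ x, uh m v A u x ^ 2 ≤ ∫ y, u (x + y) ^ 2 ∂(rho m v A x) := fun x => by
    have := rho_prob h.lip m v x
    exact var_nonneg (rho_int h.lip m v x (h.eg_u.shift x)) (rho_int h.lip m v x (h.eg_u.pow_two.shift x))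
  refine ⟨mul_nonneg h.cpos (exp_pos _).le, TO_deriv h hm v, uh_deriv h m v, fun x => ?_, fun x => ?_, fun x => ?_⟩
  · have := rho_prob h.lip m v x
    have := norm_integral_le_of_norm_le_const (μ := rho m v A x) (f := fun y => u (x + y)) (C := 1)
      (ae_of_all _ fun y => h.abs_u _)
    simpa [uh] using this
  · have := rho_prob h.lip m v x
    have h1 := rho_inv_cosh_ge h.lip hm.le hm1 hv 2 x
    have h2 : ∫ y, c * (1 / cosh (2 * (x + y))) ∂(rho m v A x) ≤ ∫ y, u' (x + y) ∂(rho m v A x) := by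
      refine integral_mono_of_nonneg (ae_of_all _ fun y => ?_) (rho_int h.lip m v x (h.eg_u'.shift x))
        (ae_of_all _ fun y => ?_)
      · have := h.cpos
        have := cosh_pos (2 * (x + y))
        simp only [Pi.zero_apply]; positivity
      · have := h.lo (x + y)
        simp only; rwa [mul_one_div]
    rw [integral_const_mul] at h2
    have h3 : c * exp (-(4 * v)) / cosh (2 * x) ≤ ∫ y, u' (x + y) ∂(rho m v A x) := by
      refine le_trans ?_ h2
      rw [mul_div_assoc]
      refine mul_le_mul_of_nonneg_left (le_trans (le_of_eq ?_) h1) h.cpos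
      congr 2; rw [abs_of_pos (by norm_num : (0:ℝ) < 2)]; ring
    rw [uh']
    nlinarith [hsq x]
  · have hp := rho_prob h.lip m v x
    have h2 : ∫ y, u' (x + y) ∂(rho m v A x) ≤ ∫ y, (1 - u (x + y) ^ 2) ∂(rho m v A x) :=
      integral_mono (rho_int h.lip m v x (h.eg_u'.shift x))
        (rho_int h.lip m v x ((EG.const 1).sub (h.eg_u.pow_two.shift x))) fun y => h.hi _
    rw [integral_sub (integrable_const _) (rho_int h.lip m v x (h.eg_u.pow_two.shift x))] at h2
    simp only [integral_const, probReal_univ, one_smul] at h2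
    rw [uh']
    nlinarith [hsq x]

theorem rho_y (h : Cls c A u u') (hv : 0 ≤ v) (m x : ℝ) :
    ∫ y, y ∂(rho m v A x) = m * v * uh m v A u x := by
  have hL := h.lip.shift x
  have := gauss_ibp hv (hL.eg_exp m) (((h.eg_u.shift x).const_mul m).mul (hL.eg_exp m))
    (fun y => (h.d_exp m (x + y)).comp_const_add x y)
  rw [rho_mul_Z h.lip, rho_mul_Z h.lip m v x (fun y => m * u (x + y)), integral_const_mul] at this
  have hZ := Zf_pos h.lip m v x
  have h2 : Zf m v A x * (∫ y, y ∂(rho m v A x)) = Zf m v A x * (m * v * uh m v A u x) := by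
    rw [this, uh]; ring
  exact mul_left_cancel₀ hZ.ne' h2

theorem rho_yu (h : Cls c A u u') (hv : 0 ≤ v) (m x : ℝ) :
    ∫ y, y * u (x + y) ∂(rho m v A x) = v * (uh' m v A u u' x + m * uh m v A u x ^ 2) := by
  have hL := h.lip.shift x
  have := gauss_ibp hv ((h.eg_u.shift x).mul (hL.eg_exp m))
    (((h.eg_u'.shift x).add ((h.eg_u.pow_two.shift x).const_mul m)).mul (hL.eg_exp m))
    (fun y => (h.d_uexp m (x + y)).comp_const_add x y)
  rw [rho_mul_Z h.lip m v x (fun y => u' (x + y) + m * u (x + y) ^ 2),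
      integral_add (rho_int h.lip m v x (h.eg_u'.shift x))
      (rho_int h.lip m v x ((h.eg_u.pow_two.shift x).const_mul m)), integral_const_mul] at this
  simp_rw [← mul_assoc] at this
  rw [rho_mul_Z h.lip m v x (fun y => y * u (x + y))] at this
  have hZ := Zf_pos h.lip m v x
  refine mul_left_cancel₀ hZ.ne' ?_
  rw [this, uh']; ring

theorem rho_yy (h : Cls c A u u') (hv : 0 ≤ v) (m x : ℝ) :
    ∫ y, y ^ 2 ∂(rho m v A x) = v * (1 + m * ∫ y, y * u (x + y) ∂(rho m v A x)) := by
  have hL := h.lip.shift x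
  have hd : ∀ y, HasDerivAt (fun y => y * exp (m * A (x + y)))
      ((1 + m * (y * u (x + y))) * exp (m * A (x + y))) y := fun y => by
    have := (hasDerivAt_id y).mul ((h.d_exp m (x + y)).comp_const_add x y)
    refine this.congr_deriv ?_
    simp only [id]; ring
  have := gauss_ibp hv (EG.id.mul (hL.eg_exp m))
    (((EG.const 1).add ((EG.id.mul (h.eg_u.shift x)).const_mul m)).mul (hL.eg_exp m)) hd
  have hp := rho_prob h.lip m v x
  rw [rho_mul_Z h.lip m v x (fun y => 1 + m * (y * u (x + y))),
      integral_add (integrable_const _)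
      (rho_int h.lip m v x ((EG.id.mul (h.eg_u.shift x)).const_mul m)), integral_const_mul] at this
  simp_rw [← mul_assoc, ← sq] at this
  rw [rho_mul_Z h.lip m v x (fun y => y ^ 2)] at this
  simp only [integral_const, probReal_univ, one_smul] at this
  have hZ := Zf_pos h.lip m v x
  refine mul_left_cancel₀ hZ.ne' ?_
  rw [this]; ring

theorem rho_var_u (h : Cls c A u u') (hm : 0 < m) (hm1 : m ≤ 1) (hv : 0 ≤ v) (hv1 : v ≤ 1) (x : ℝ) :
    uh m v A u x ^ 2 + v * uh' m v A u u' x ^ 2 / 2 ≤ ∫ y, u (x + y) ^ 2 ∂(rho m v A x) := by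
  have hp := rho_prob h.lip m v x
  have hs := h.step hm hm1 hv
  have h0 := hs.u'_nonneg x
  have h1 := hs.u'_le x
  have e1 := rho_y h hv m x
  have e2 := rho_yu h hv m x
  have e3 := rho_yy h hv m x
  rw [e2] at e3
  set U := uh m v A u x with hU
  set U' := uh' m v A u u' x
  have key : 0 ≤ ∫ y, (u (x + y) - U - U' / 2 * (y - m * v * U)) ^ 2 ∂(rho m v A x) :=
    integral_nonneg fun y => sq_nonneg _
  have e : ∀ y, (u (x + y) - U - U' / 2 * (y - m * v * U)) ^ 2 =
      u (x + y) ^ 2 + ((U' / 2) ^ 2 * y ^ 2 + (-U' * (y * u (x + y)) +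
      ((2 * (U' / 2 * m * v * U - U)) * u (x + y) + ((-U' * (U' / 2 * m * v * U - U)) * y +
       (U' / 2 * m * v * U - U) ^ 2)))) := fun y => by ring
  simp_rw [e] at key
  have i0 : Integrable (fun _ : ℝ => (U' / 2 * m * v * U - U) ^ 2) (rho m v A x) := integrable_const _
  have iu := rho_int h.lip m v x (h.eg_u.shift x)
  have iy := rho_int h.lip m v x EG.id
  have iuu := rho_int h.lip m v x (h.eg_u.pow_two.shift x)
  have iyy := rho_int h.lip m v x EG.id.pow_two
  have iyu := rho_int h.lip m v x (EG.id.mul (h.eg_u.shift x))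
  have j1 := iadd (iy.const_mul (-U' * (U' / 2 * m * v * U - U))) i0
  have j2 := iadd (iu.const_mul (2 * (U' / 2 * m * v * U - U))) j1
  have j3 := iadd (iyu.const_mul (-U')) j2
  have j4 := iadd (iyy.const_mul ((U' / 2) ^ 2)) j3
  rw [integral_add iuu j4, integral_add (iyy.const_mul _) j3, integral_add (iyu.const_mul _) j2,
    integral_add (iu.const_mul _) j1, integral_add (iy.const_mul _) i0] at key
  simp only [integral_const_mul, integral_const, probReal_univ, one_smul] at key
  rw [integral_const_mul (-U' * (U' / 2 * m * v * U - U)) (fun y : ℝ => y)] at key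
  rw [e1, e2, e3, show (∫ y, u (x + y) ∂(rho m v A x)) = U from rfl] at key
  have key2 : 0 ≤ (∫ y, u (x + y) ^ 2 ∂(rho m v A x)) - U ^ 2 - v * U' ^ 2
      + U' ^ 2 / 4 * (v + m * v ^ 2 * U') := by
    refine key.trans (le_of_eq ?_); ring
  have b : U' ^ 2 / 4 * (v + m * v ^ 2 * U') ≤ U' ^ 2 / 4 * (2 * v) := by
    have a1 : m * U' ≤ 1 := by nlinarith
    have a2 : m * U' * v ≤ 1 := by
      have : 0 ≤ m * U' := by positivity
      nlinarith
    have : m * v ^ 2 * U' ≤ v := by nlinarith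
    gcongr; linarith
  linarith

end

def C0 : ℝ := ∫ y, y ^ 2 * (exp (1 * |y|) * (2 * |y| + 1 / 2)) ∂(gauss 1)

theorem eg_C0 (b c : ℝ) : EG (fun y => y ^ 2 * (exp (b * |y|) * (2 * |y| + c))) :=
  EG.id.pow_two.mul ((EG.exp_abs b).mul ((EG.id.abs.const_mul 2).add (EG.const c)))

theorem C0_nonneg : 0 ≤ C0 := integral_nonneg fun y => by simp only [Pi.zero_apply]; positivity

theorem gauss_shift' {v : ℝ} (hv : 0 ≤ v) (c : ℝ) (f : ℝ → ℝ) :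
    ∫ y, f y ∂(gauss v) = ∫ y, f (y + v * c) * exp (-c * y - c ^ 2 * v / 2) ∂(gauss v) := by
  have := gauss_shift hv c (fun y => f y * exp (-c * y + c ^ 2 * v / 2))
  have e1 : ∀ y, f y * exp (-c * y + c ^ 2 * v / 2) * exp (c * y - c ^ 2 * v / 2) = f y := fun y => by
    rw [mul_assoc, ← exp_add]; ring_nf; simp
  simp_rw [e1] at this
  rw [← this]; congr 1; ext y; ring_nf

section
variable {c m v : ℝ} {A u u' : ℝ → ℝ}

theorem one_side {a k : ℝ} {B : ℝ → ℝ} (hA : Lip1 A) (hB : Lip1 B) (ha : 0 < a) (hm : 0 < m) (hv : 0 ≤ v)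
    (x z : ℝ) :
    m * TO m v A x + ∫ y, (a * B (z + (y + v * k)) + (-k) * y - k ^ 2 * v / 2 - m * A (x + y)) ∂(rho m v A x)
      ≤ a * TO a v B z := by
  have hp := rho_prob hA m v x
  have hBs : Lip1 (fun y => B (z + (y + v * k))) := by
    have := hB.shift (z + v * k)
    convert this using 3; ring
  have hi : EG (fun y => a * B (z + (y + v * k)) + (-k) * y - k ^ 2 * v / 2 - m * A (x + y)) :=
    (((hBs.eg.const_mul a).add (EG.id.const_mul _)).sub (EG.const _)).sub ((hA.shift x).eg.const_mul m)
  have he : EG (fun y => exp (a * B (z + (y + v * k)) + (-k) * y - k ^ 2 * v / 2 - m * A (x + y))) := by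
    have := ((hBs.eg_exp a).mul (EG.exp_lin (-k))).mul ((EG.const (exp (-(k ^ 2 * v / 2)))).mul ((hA.shift x).eg_exp (-m)))
    convert this using 2 with y
    rw [← exp_add, ← exp_add, ← exp_add]; ring_nf
  have hj := jensen_log (rho_int hA m v x hi) (rho_int hA m v x he)
  have hZ := Zf_pos hA m v x
  have hZB := Zf_pos hB a v z
  have e : ∫ y, exp (a * B (z + (y + v * k)) + (-k) * y - k ^ 2 * v / 2 - m * A (x + y)) ∂(rho m v A x)
      = Zf a v B z / Zf m v A x := by
    rw [rho_eq]; congr 1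
    unfold Zf
    rw [gauss_shift' hv k (fun y => exp (a * B (z + y)))]
    congr 1; ext y
    rw [← exp_add, ← exp_add]; ring_nf
  rw [e, Real.log_div hZB.ne' hZ.ne'] at hj
  rw [TO_mul hm, TO_mul ha]; linarith

theorem Cls.w_bd (h : Cls c A u u') (x y : ℝ) :
    0 ≤ A (x + y) - A x - u x * y ∧ A (x + y) - A x - u x * y ≤ y ^ 2 := by
  have hmono : Monotone u := monotone_of_deriv_nonneg (fun z => (h.du z).differentiableAt)
    (fun z => by rw [(h.du z).deriv]; exact h.u'_nonneg z)
  have hlip : Lip1 u := by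
    intro x y
    have := Convex.norm_image_sub_le_of_norm_hasDerivWithin_le (f := u) (f' := u') (C := 1)
      (s := Set.univ) (x := y) (y := x) (fun z _ => (h.du z).hasDerivWithinAt)
      (fun z _ => by rw [Real.norm_eq_abs, abs_of_nonneg (h.u'_nonneg z)]; exact h.u'_le z)
      convex_univ trivial trivial
    simpa using this
  have hc := h.lip.continuous
  rcases lt_trichotomy y 0 with hy | rfl | hy
  · obtain ⟨z, hz, hz'⟩ := exists_hasDerivAt_eq_slope A u (show x + y < x by linarith)
      hc.continuousOn (fun z _ => h.dA z)
    have e : A (x + y) - A x = u z * y := by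
      rw [hz']; have : x - (x + y) ≠ 0 := by simpa using hy.ne
      field_simp; ring
    have h1 := hmono hz.2.le
    have h2 := abs_le.mp (hlip z x)
    have h3 : |z - x| ≤ -y := by rw [abs_le]; constructor <;> linarith [hz.1, hz.2]
    constructor <;> nlinarith
  · simp
  · obtain ⟨z, hz, hz'⟩ := exists_hasDerivAt_eq_slope A u (show x < x + y by linarith)
      hc.continuousOn (fun z _ => h.dA z)
    have e : A (x + y) - A x = u z * y := by
      rw [hz']; have : x + y - x ≠ 0 := by simpa using hy.ne'
      field_simp; ring
    have h1 := hmono hz.1.le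
    have h2 := abs_le.mp (hlip z x)
    have h3 : |z - x| ≤ y := by rw [abs_le]; constructor <;> linarith [hz.1, hz.2]
    constructor <;> nlinarith

theorem err_int (hv : 0 ≤ v) (hv1 : v ≤ 1) :
    ∫ y, y ^ 2 * (exp (1 * |y|) * (2 * |y| + v / 2)) ∂(gauss v) ≤ C0 * (v * √v) := by
  rw [gauss_scale hv (eg_C0 1 (v / 2)).meas, C0, ← integral_mul_const]
  have hs : 0 ≤ √v := Real.sqrt_nonneg v
  have hs1 : √v ≤ 1 := by rw [Real.sqrt_le_left (by norm_num)]; simpa using hv1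
  have hss : √v * √v = v := Real.mul_self_sqrt hv
  have hm := (eg_C0 √v (√v / 2))
  refine integral_mono_of_nonneg (ae_of_all _ fun y => by simp only [Pi.zero_apply]; positivity)
    (((eg_C0 1 (1 / 2)).integrable 1).mul_const _) (ae_of_all _ fun y => ?_)
  simp only
  rw [abs_mul, abs_of_nonneg hs, mul_pow, sq √v, hss]
  have h1 : 2 * (√v * |y|) + v / 2 ≤ √v * (2 * |y| + 1 / 2) := by nlinarith [abs_nonneg y]
  have h2 : exp (1 * (√v * |y|)) ≤ exp (1 * |y|) := by
    gcongr; nlinarith [abs_nonneg y]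
  calc v * y ^ 2 * (exp (1 * (√v * |y|)) * (2 * (√v * |y|) + v / 2))
      ≤ v * y ^ 2 * (exp (1 * |y|) * (√v * (2 * |y| + 1 / 2))) := by gcongr
    _ = _ := by ring

theorem bracket (h : Cls c A u u') (hm : 0 < m) (hm1 : m ≤ 1) (hv : 0 ≤ v) (hv1 : v ≤ 1) (x : ℝ) :
    m * (∫ y, A (x + y) ∂(rho m v A x)) - m * TO m v A x - m ^ 2 * v * uh m v A u x ^ 2 / 2 ≤
      m * (C0 * (v * √v)) := by
  have hp := rho_prob h.lip m v x
  have hs := h.step hm hm1 hv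
  set U := uh m v A u x with hU
  have hU1 : |U| ≤ 1 := hs.abs_u x
  have hL := h.lip.shift x
  set w : ℝ → ℝ := fun y => A (x + y) - A x - u x * y with hw
  have hwE : EG w := (hL.eg.sub (EG.const _)).sub (EG.id.const_mul _)
  set k := m * U with hk
  have hk1 : |k| ≤ 1 := by
    rw [hk, abs_mul, abs_of_pos hm]; nlinarith [abs_nonneg U]
  have hLs : Lip1 (fun y => A (x + (y + v * k))) := by
    have := h.lip.shift (x + v * k)
    convert this using 3; ring
  -- step 1
  have s1 : m * (∫ y, A (x + (y + v * k)) ∂(gauss v)) - k ^ 2 * v / 2 ≤ m * TO m v A x := by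
    have hi : EG (fun y => m * A (x + (y + v * k)) + ((-k) * y + - (k ^ 2 * v / 2))) :=
      (hLs.eg.const_mul m).add ((EG.id.const_mul _).add (EG.const _))
    have he : EG (fun y => exp (m * A (x + (y + v * k)) + ((-k) * y + - (k ^ 2 * v / 2)))) := by
      have := (hLs.eg_exp m).mul ((EG.exp_lin (-k)).mul (EG.const (exp (-(k ^ 2 * v / 2)))))
      convert this using 2 with y
      rw [← exp_add, ← exp_add]
    have hj := jensen_log (hi.integrable v) (he.integrable v)
    have e : ∫ y, exp (m * A (x + (y + v * k)) + ((-k) * y + - (k ^ 2 * v / 2))) ∂(gauss v) = Zf m v A x := by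
      unfold Zf
      rw [gauss_shift' hv k (fun y => exp (m * A (x + y)))]
      congr 1; ext y
      rw [← exp_add]; ring_nf
    have e2 : ∫ y, (m * A (x + (y + v * k)) + ((-k) * y + - (k ^ 2 * v / 2))) ∂(gauss v) =
        m * (∫ y, A (x + (y + v * k)) ∂(gauss v)) - k ^ 2 * v / 2 := by
      rw [integral_add ((hLs.eg.const_mul m).integrable v)
        (((EG.id.const_mul (-k)).add (EG.const (-(k ^ 2 * v / 2)))).integrable v),
        integral_add ((EG.id.const_mul (-k)).integrable v) ((EG.const (-(k ^ 2 * v / 2))).integrable v),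
        integral_const_mul, integral_const_mul (-k) (fun y : ℝ => y), gauss_mean]
      simp; ring
    rw [e, e2, ← TO_mul hm] at hj
    exact hj
  -- E_rho A in terms of w
  have s2 : ∫ y, A (x + y) ∂(rho m v A x) = (∫ y, w y ∂(rho m v A x)) + A x + u x * (v * k) := by
    have e : ∀ y, A (x + y) = w y + (A x + u x * y) := fun y => by simp only [hw]; ring
    rw [integral_congr_ae (ae_of_all _ e), integral_add (rho_int h.lip m v x hwE)
      (rho_int h.lip m v x ((EG.const _).add (EG.id.const_mul _))),
      integral_add (integrable_const _) (rho_int h.lip m v x (EG.id.const_mul _)),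
      integral_const_mul (u x) (fun y : ℝ => y), rho_y h hv m x]
    simp; rw [← hU]; ring
  have s3 : ∫ y, A (x + (y + v * k)) ∂(gauss v) = (∫ y, w (y + v * k) ∂(gauss v)) + A x + u x * (v * k) := by
    have hws : EG (fun y => w (y + v * k)) := by
      have := hwE.shift (v * k)
      simpa [add_comm] using this
    have e : ∀ y, A (x + (y + v * k)) = w (y + v * k) + ((A x + u x * (v * k)) + u x * y) := fun y => by
      simp only [hw]; ring
    rw [integral_congr_ae (ae_of_all _ e), integral_add (hws.integrable v)
      (((EG.const _).add (EG.id.const_mul _)).integrable v),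
      integral_add (integrable_const _) ((EG.id.const_mul _).integrable v),
      integral_const_mul (u x) (fun y : ℝ => y), gauss_mean]
    simp; ring
  have hwb := h.w_bd x
  -- lower bound on Z
  have hZ : exp (m * A x) ≤ Zf m v A x := by
    rw [← TO_exp hm h.lip]
    have h1 := TO_ge_mean hm h.lip v x
    have h2 : A x ≤ ∫ y, A (x + y) ∂(gauss v) := by
      have : ∫ y, (A x + u x * y) ∂(gauss v) ≤ ∫ y, A (x + y) ∂(gauss v) :=
        integral_mono (((EG.const _).add (EG.id.const_mul _)).integrable v) (hL.eg.integrable v)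
          fun y => by have := (hwb y).1; simp only; linarith
      rw [integral_add (integrable_const _) ((EG.id.const_mul _).integrable v),
        integral_const_mul (u x) (fun y : ℝ => y), gauss_mean] at this
      simpa using this
    gcongr; linarith
  have hZp := Zf_pos h.lip m v x
  have hg1 : EG (fun y => w y * exp (1 * |y|)) := hwE.mul (EG.exp_abs 1)
  have s4 : ∫ y, w y ∂(rho m v A x) ≤ ∫ y, w y * exp (1 * |y|) ∂(gauss v) := by
    rw [rho_eq, div_le_iff₀ hZp, ← integral_mul_const]
    refine integral_mono ((hwE.mul (hL.eg_exp m)).integrable v) ((hg1.integrable v).mul_const _) fun y => ?_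
    simp only
    rw [mul_assoc]
    refine mul_le_mul_of_nonneg_left ?_ (hwb y).1
    calc exp (m * A (x + y)) ≤ exp (1 * |y| + m * A x) := by
          have := (abs_le.mp (h.lip (x + y) x)).2
          simp only [add_sub_cancel_left] at this
          gcongr; nlinarith [abs_nonneg y]
      _ = exp (1 * |y|) * exp (m * A x) := exp_add _ _
      _ ≤ _ := by gcongr
  have hg2 : EG (fun y => w y * (exp (-1 * |y|) * exp (-(v / 2)))) :=
    hwE.mul ((EG.exp_abs (-1)).mul (EG.const _))
  have s5 : ∫ y, w y * (exp (-1 * |y|) * exp (-(v / 2))) ∂(gauss v) ≤ ∫ y, w (y + v * k) ∂(gauss v) := by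
    rw [gauss_shift hv k w]
    have : EG (fun y => w y * exp (k * y - k ^ 2 * v / 2)) := by
      have := hwE.mul ((EG.exp_lin k).mul (EG.const (exp (-(k ^ 2 * v / 2)))))
      convert this using 3 with y
      rw [← exp_add]; ring_nf
    refine integral_mono (hg2.integrable v) (this.integrable v) fun y => ?_
    simp only
    refine mul_le_mul_of_nonneg_left ?_ (hwb y).1
    rw [← exp_add]
    have h1 : -|y| ≤ k * y := by
      have := neg_abs_le (k * y)
      rw [abs_mul] at this
      nlinarith [abs_nonneg y]
    have h2 : k ^ 2 ≤ 1 := by rw [sq_le_one_iff_abs_le_one]; exact hk1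
    have h3 : k ^ 2 * v / 2 ≤ v / 2 := by nlinarith
    gcongr; linarith
  have s6 : (∫ y, w y * exp (1 * |y|) ∂(gauss v)) - ∫ y, w y * (exp (-1 * |y|) * exp (-(v / 2))) ∂(gauss v)
      ≤ C0 * (v * √v) := by
    refine le_trans ?_ (err_int hv hv1)
    rw [← integral_sub (hg1.integrable v) (hg2.integrable v)]
    refine integral_mono ((hg1.sub hg2).integrable v) ((eg_C0 1 (v / 2)).integrable v) fun y => ?_
    simp only
    rw [← mul_sub]
    have h1 : exp (1 * |y|) - exp (-1 * |y|) * exp (-(v / 2)) ≤ exp (1 * |y|) * (2 * |y| + v / 2) := by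
      have e : exp (-1 * |y|) * exp (-(v / 2)) = exp (1 * |y|) * exp (-(2 * |y| + v / 2)) := by
        rw [← exp_add, ← exp_add]; ring_nf
      rw [e]
      have := add_one_le_exp (-(2 * |y| + v / 2))
      nlinarith [exp_pos (1 * |y|)]
    have h0 : 0 ≤ exp (1 * |y|) * (2 * |y| + v / 2) := by positivity
    calc w y * (exp (1 * |y|) - exp (-1 * |y|) * exp (-(v / 2)))
        ≤ w y * (exp (1 * |y|) * (2 * |y| + v / 2)) := mul_le_mul_of_nonneg_left h1 (hwb y).1
      _ ≤ _ := mul_le_mul_of_nonneg_right (hwb y).2 h0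
  have s7 : (∫ y, A (x + y) ∂(rho m v A x)) - ∫ y, A (x + (y + v * k)) ∂(gauss v) ≤ C0 * (v * √v) := by
    rw [s2, s3]; linarith
  have e : m ^ 2 * v * U ^ 2 / 2 = k ^ 2 * v / 2 := by rw [hk]; ring
  rw [e]
  nlinarith

theorem gap_step {a b e : ℝ} {A0 A1 : ℝ → ℝ} (h : Cls c A u u') (h0 : Lip1 A0) (h1 : Lip1 A1)
    (ha : 0 < a) (hb : 0 < b) (hmab : m = (a + b) / 2) (heab : e = (a - b) / 2) (hm1 : m ≤ 1)
    (hv : 0 ≤ v) (hv1 : v ≤ 1) (x d : ℝ) :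
    (∫ y, (1 / 2 * A0 (x + y + (d + e * v * uh m v A u x)) + 1 / 2 * A1 (x + y - (d + e * v * uh m v A u x))
        - A (x + y)) ∂(rho m v A x)) - e ^ 2 / (a * b) * (C0 * (v * √v)) ≤
      1 / 2 * TO a v A0 (x + d) + 1 / 2 * TO b v A1 (x - d) - TO m v A x := by
  have hm : 0 < m := by rw [hmab]; linarith
  have hp := rho_prob h.lip m v x
  have br := bracket h hm hm1 hv hv1 x
  set U := uh m v A u x with hU
  have hL := h.lip.shift x
  have o1 := one_side (k := e * U) h.lip h0 ha hm hv x (x + d)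
  have o2 := one_side (k := -(e * U)) h.lip h1 hb hm hv x (x - d)
  have l0 : Lip1 (fun y => A0 (x + y + (d + e * v * U))) := by
    have := h0.shift (x + (d + e * v * U))
    convert this using 3; ring
  have l1 : Lip1 (fun y => A1 (x + y - (d + e * v * U))) := by
    have := h1.shift (x - (d + e * v * U))
    convert this using 3; ring
  have i0 := rho_int h.lip m v x l0.eg
  have i1 := rho_int h.lip m v x l1.eg
  have iA := rho_int h.lip m v x hL.eg
  have iy := rho_int h.lip m v x EG.id
  have ey := rho_y h hv m x
  have e1 : ∫ y, (a * A0 (x + d + (y + v * (e * U))) + (-(e * U)) * y - (e * U) ^ 2 * v / 2 - m * A (x + y)) ∂(rho m v A x)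
      = a * (∫ y, A0 (x + y + (d + e * v * U)) ∂(rho m v A x)) - (e * U) * (m * v * U) - (e * U) ^ 2 * v / 2
        - m * ∫ y, A (x + y) ∂(rho m v A x) := by
    have : ∀ y, a * A0 (x + d + (y + v * (e * U))) + (-(e * U)) * y - (e * U) ^ 2 * v / 2 - m * A (x + y) =
       a * A0 (x + y + (d + e * v * U)) + ((-(e * U)) * y + ( -((e * U) ^ 2 * v / 2) + (-m) * A (x + y))) := fun y => by
      rw [show x + d + (y + v * (e * U)) = x + y + (d + e * v * U) by ring]; ring
    simp_rw [this]
    have j1 := iadd (integrable_const (μ := rho m v A x) (-((e * U) ^ 2 * v / 2))) (iA.const_mul (-m))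
    have j2 := iadd (iy.const_mul (-(e * U))) j1
    rw [integral_add (i0.const_mul a) j2, integral_add (iy.const_mul (-(e * U))) j1,
      integral_add (integrable_const _) (iA.const_mul (-m)), integral_const_mul, integral_const_mul (-(e * U)) (fun y : ℝ => y),
      integral_const_mul, ey]
    simp; rw [← hU]; ring
  have e2 : ∫ y, (b * A1 (x - d + (y + v * (-(e * U)))) + (-(-(e * U))) * y - (-(e * U)) ^ 2 * v / 2 - m * A (x + y)) ∂(rho m v A x)
      = b * (∫ y, A1 (x + y - (d + e * v * U)) ∂(rho m v A x)) + (e * U) * (m * v * U) - (e * U) ^ 2 * v / 2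
        - m * ∫ y, A (x + y) ∂(rho m v A x) := by
    have : ∀ y, b * A1 (x - d + (y + v * (-(e * U)))) + (-(-(e * U))) * y - (-(e * U)) ^ 2 * v / 2 - m * A (x + y) =
       b * A1 (x + y - (d + e * v * U)) + ((e * U) * y + ( -((e * U) ^ 2 * v / 2) + (-m) * A (x + y))) := fun y => by
      rw [show x - d + (y + v * (-(e * U))) = x + y - (d + e * v * U) by ring]; ring
    simp_rw [this]
    have j1 := iadd (integrable_const (μ := rho m v A x) (-((e * U) ^ 2 * v / 2))) (iA.const_mul (-m))
    have j2 := iadd (iy.const_mul (e * U)) j1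
    rw [integral_add (i1.const_mul b) j2, integral_add (iy.const_mul (e * U)) j1,
      integral_add (integrable_const _) (iA.const_mul (-m)), integral_const_mul, integral_const_mul (e * U) (fun y : ℝ => y),
      integral_const_mul, ey]
    simp; rw [← hU]; ring
  rw [e1] at o1
  rw [e2] at o2
  rw [integral_sub (iadd (i0.const_mul _) (i1.const_mul _)) iA, integral_add (i0.const_mul _) (i1.const_mul _),
    integral_const_mul, integral_const_mul]
  set I0 := ∫ y, A0 (x + y + (d + e * v * U)) ∂(rho m v A x)
  set I1 := ∫ y, A1 (x + y - (d + e * v * U)) ∂(rho m v A x)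
  set IA := ∫ y, A (x + y) ∂(rho m v A x)
  set Ta := TO a v A0 (x + d)
  set Tb := TO b v A1 (x - d)
  set Tm := TO m v A x
  set R := C0 * (v * √v)
  have hab : 0 < a * b := by positivity
  -- divide
  have p1 : (m * Tm - m * IA + a * I0 - (e * U) * (m * v * U) - (e * U) ^ 2 * v / 2) / a ≤ Ta := by
    rw [div_le_iff₀ ha]; linarith
  have p2 : (m * Tm - m * IA + b * I1 + (e * U) * (m * v * U) - (e * U) ^ 2 * v / 2) / b ≤ Tb := by
    rw [div_le_iff₀ hb]; linarith
  have p3 : (m * IA - m * Tm - m ^ 2 * v * U ^ 2 / 2) / m ≤ R := by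
    rw [div_le_iff₀ hm]; linarith
  have p4 : e ^ 2 / (a * b) * ((m * IA - m * Tm - m ^ 2 * v * U ^ 2 / 2) / m) ≤ e ^ 2 / (a * b) * R := by
    gcongr
  have ide : 1 / 2 * ((m * Tm - m * IA + a * I0 - (e * U) * (m * v * U) - (e * U) ^ 2 * v / 2) / a) +
      1 / 2 * ((m * Tm - m * IA + b * I1 + (e * U) * (m * v * U) - (e * U) ^ 2 * v / 2) / b) - Tm =
      1 / 2 * I0 + 1 / 2 * I1 - IA - e ^ 2 / (a * b) * ((m * IA - m * Tm - m ^ 2 * v * U ^ 2 / 2) / m) := by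
    have ha' := ha.ne'
    have hb' := hb.ne'
    have hm' : a + b ≠ 0 := by positivity
    rw [hmab, heab]
    field_simp
    ring
  linarith

end

def lc (x : ℝ) : ℝ := log (cosh x)

def Psi : List (ℝ × ℝ) → ℝ → ℝ
  | [] => lc
  | c :: l => TO c.1 c.2 (Psi l)

theorem lc_cls : Cls 1 lc tanh (fun x => 1 - tanh x ^ 2) := by
  have hd : ∀ x, HasDerivAt tanh (1 - tanh x ^ 2) x := fun x => by
    have h := (hasDerivAt_sinh x).div (hasDerivAt_cosh x) (cosh_pos x).ne'
    have e : tanh = fun x => sinh x / cosh x := by ext x; exact tanh_eq_sinh_div_cosh x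
    rw [e]
    refine h.congr_deriv ?_
    have := (cosh_pos x).ne'
    simp only; field_simp
  have hsq : ∀ x, 1 - tanh x ^ 2 = 1 / cosh x ^ 2 := fun x => by
    have := (cosh_pos x).ne'
    rw [tanh_eq_sinh_div_cosh]
    have h2 := cosh_sq x
    field_simp; linarith
  refine ⟨zero_le_one, fun x => ?_, hd, fun x => ?_, fun x => ?_, fun x => le_rfl⟩
  · have := (hasDerivAt_cosh x).log (cosh_pos x).ne'
    rw [tanh_eq_sinh_div_cosh]; exact this
  · have h := hsq x
    have : 0 < 1 / cosh x ^ 2 := by have := cosh_pos x; positivity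
    rw [← sq_le_one_iff_abs_le_one]; linarith
  · rw [hsq]
    have := cosh_pos x
    have h1 := cosh_two_mul x
    have h2 := cosh_sq x
    gcongr
    nlinarith [sq_nonneg (sinh x)]

/-- admissible cells -/
def Ok (l : List (ℝ × ℝ)) : Prop := ∀ c ∈ l, 0 < c.1 ∧ c.1 ≤ 1 ∧ 0 ≤ c.2

theorem Ok.tail {c : ℝ × ℝ} {l : List (ℝ × ℝ)} (h : Ok (c :: l)) : Ok l :=
  fun d hd => h d (List.mem_cons_of_mem _ hd)

theorem Ok.head {c : ℝ × ℝ} {l : List (ℝ × ℝ)} (h : Ok (c :: l)) : 0 < c.1 ∧ c.1 ≤ 1 ∧ 0 ≤ c.2 :=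
  h c List.mem_cons_self

theorem Psi_lip : ∀ {l : List (ℝ × ℝ)}, Ok l → Lip1 (Psi l)
  | [], _ => lc_cls.lip
  | _ :: _, h => TO_lip h.head.1 (Psi_lip h.tail) _

abbrev TL := List (ℝ × ℝ × ℝ)

def p0 (L : TL) : List (ℝ × ℝ) := L.map fun t => (t.1, t.2.2)
def p1 (L : TL) : List (ℝ × ℝ) := L.map fun t => (t.2.1, t.2.2)
def pm (L : TL) : List (ℝ × ℝ) := L.map fun t => ((t.1 + t.2.1) / 2, t.2.2)

def totL : TL → ℝ
  | [] => 0
  | t :: L => t.2.2 + totL L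
def KL : TL → ℝ
  | [] => 0
  | t :: L => (t.1 - t.2.1) / 2 * t.2.2 + KL L
def QL : TL → ℝ
  | [] => 0
  | t :: L => KL L ^ 2 * t.2.2 + QL L
def EL : TL → ℝ
  | [] => 0
  | t :: L => t.2.2 * √t.2.2 + EL L

def OkL (η : ℝ) (L : TL) : Prop := ∀ t ∈ L, η ≤ t.1 ∧ t.1 ≤ 1 ∧ η ≤ t.2.1 ∧ t.2.1 ≤ 1 ∧ 0 ≤ t.2.2 ∧ t.2.2 ≤ 1

theorem OkL.tail {η : ℝ} {t : ℝ × ℝ × ℝ} {L : TL} (h : OkL η (t :: L)) : OkL η L :=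
  fun d hd => h d (List.mem_cons_of_mem _ hd)

theorem OkL.head {η : ℝ} {t : ℝ × ℝ × ℝ} {L : TL} (h : OkL η (t :: L)) :
    η ≤ t.1 ∧ t.1 ≤ 1 ∧ η ≤ t.2.1 ∧ t.2.1 ≤ 1 ∧ 0 ≤ t.2.2 ∧ t.2.2 ≤ 1 :=
  h t List.mem_cons_self

theorem totL_nonneg {η : ℝ} : ∀ {L : TL}, OkL η L → 0 ≤ totL L
  | [], _ => le_rfl
  | _ :: _, h => add_nonneg h.head.2.2.2.2.1 (totL_nonneg h.tail)

theorem QL_nonneg {η : ℝ} : ∀ {L : TL}, OkL η L → 0 ≤ QL L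
  | [], _ => le_rfl
  | _ :: _, h => add_nonneg (mul_nonneg (sq_nonneg _) h.head.2.2.2.2.1) (QL_nonneg h.tail)

theorem OkL.ok0 {η : ℝ} (hη : 0 < η) {L : TL} (h : OkL η L) : Ok (p0 L) := by
  intro c hc
  obtain ⟨t, ht, rfl⟩ := List.mem_map.mp hc
  have := h t ht
  exact ⟨hη.trans_le this.1, this.2.1, this.2.2.2.2.1⟩
theorem OkL.ok1 {η : ℝ} (hη : 0 < η) {L : TL} (h : OkL η L) : Ok (p1 L) := by
  intro c hc
  obtain ⟨t, ht, rfl⟩ := List.mem_map.mp hc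
  have := h t ht
  exact ⟨hη.trans_le this.2.2.1, this.2.2.2.1, this.2.2.2.2.1⟩

theorem lc_gap {T d : ℝ} (hd : |d| ≤ T) (x lam : ℝ) :
    1 / (2 * (1 + T ^ 2)) * (2 * lam * d ^ 2 - lam ^ 2 * T ^ 2 * cosh (2 * x)) ≤
      1 / 2 * lc (x + d) + 1 / 2 * lc (x - d) - lc x := by
  have hT : d ^ 2 ≤ T ^ 2 := sq_le_sq' (by linarith [abs_le.mp hd]) (abs_le.mp hd).2
  have hc := cosh_pos x
  have hc1 := one_le_cosh x
  have p1 := cosh_pos (x + d)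
  have p2 := cosh_pos (x - d)
  have id1 : cosh (x + d) * cosh (x - d) = cosh x ^ 2 + sinh d ^ 2 := by
    rw [cosh_add, cosh_sub]
    have := cosh_sq x
    have := cosh_sq d
    have : sinh x ^ 2 = cosh x ^ 2 - 1 := by linarith
    have h3 : cosh d ^ 2 = sinh d ^ 2 + 1 := by linarith
    ring_nf
    rw [this, h3]; ring
  set C := cosh x ^ 2 with hC
  have hCp : 0 < C := by positivity
  have hC1 : 1 ≤ C := by rw [hC]; nlinarith
  have hsd : d ^ 2 ≤ sinh d ^ 2 := by
    rw [← sq_abs d, ← sq_abs (sinh d)]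
    refine pow_le_pow_left₀ (abs_nonneg d) ?_ 2
    rcases le_total 0 d with h | h
    · rw [abs_of_nonneg h, abs_of_nonneg (sinh_nonneg_iff.mpr h)]; exact self_le_sinh_iff.mpr h
    · rw [abs_of_nonpos h, abs_of_nonpos (sinh_nonpos_iff.mpr h)]
      have := sinh_le_self_iff.mpr h; linarith
  have e : 1 / 2 * lc (x + d) + 1 / 2 * lc (x - d) - lc x = 1 / 2 * log (1 + sinh d ^ 2 / C) := by
    have : 1 + sinh d ^ 2 / C = cosh (x + d) * cosh (x - d) / C := by rw [id1]; field_simp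
    rw [this, Real.log_div (by positivity) hCp.ne', Real.log_mul p1.ne' p2.ne', hC, Real.log_pow]
    unfold lc; push_cast; ring
  rw [e]
  set z := d ^ 2 / C with hz
  have hz0 : 0 ≤ z := by positivity
  have hzz : z ≤ T ^ 2 := (div_le_self (sq_nonneg d) hC1).trans hT
  have l1 : log (1 + z) ≤ log (1 + sinh d ^ 2 / C) := by
    apply Real.log_le_log (by positivity); rw [hz]; gcongr
  have l2 : z / (1 + T ^ 2) ≤ log (1 + z) := by
    have := Real.one_sub_inv_le_log_of_pos (show 0 < 1 + z by positivity)
    refine le_trans ?_ this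
    have : 1 - (1 + z)⁻¹ = z / (1 + z) := by field_simp; ring
    rw [this]; gcongr
  have l3 : 2 * lam * d ^ 2 - lam ^ 2 * T ^ 2 * cosh (2 * x) ≤ z := by
    have h2 : C ≤ cosh (2 * x) := by
      rw [cosh_two_mul, hC]; nlinarith [sq_nonneg (sinh x)]
    have h3 : lam ^ 2 * d ^ 2 * C ≤ lam ^ 2 * T ^ 2 * cosh (2 * x) := by gcongr
    have h4 : 2 * lam * d ^ 2 - lam ^ 2 * d ^ 2 * C ≤ z := by
      rw [hz, le_div_iff₀ hCp]
      nlinarith [mul_nonneg (sq_nonneg d) (sq_nonneg (lam * C - 1))]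
    linarith
  calc _ ≤ 1 / (2 * (1 + T ^ 2)) * z := by gcongr
    _ = 1 / 2 * (z / (1 + T ^ 2)) := by field_simp
    _ ≤ _ := by linarith

set_option maxHeartbeats 2000000 in
theorem gap_ind {T η lam : ℝ} (hη : 0 < η) (hlam : 0 ≤ lam) : ∀ L : TL, OkL η L → totL L ≤ T →
    ∃ u u', Cls (exp (-(4 * totL L))) (Psi (pm L)) u u' ∧ ∀ x d, |d| + totL L ≤ T →
      1 / (2 * (1 + T ^ 2)) * (2 * lam * ((d + KL L * u x) ^ 2 +
        exp (-(8 * T)) / 2 * exp (-(12 * totL L)) * QL L / cosh (4 * x))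
          - lam ^ 2 * T ^ 2 * exp (4 * totL L) * cosh (2 * x)) - C0 / η ^ 2 * EL L ≤
      1 / 2 * Psi (p0 L) (x + d) + 1 / 2 * Psi (p1 L) (x - d) - Psi (pm L) x
  | [], _, _ => by
    refine ⟨tanh, fun x => 1 - tanh x ^ 2, ?_, fun x d hd => ?_⟩
    · simpa [totL, pm, Psi] using lc_cls
    · simp only [totL, KL, QL, EL, pm, p0, p1, Psi, List.map_nil] at *
      have := lc_gap (T := T) (d := d) (by linarith) x lam
      simpa using this
  | (a, b, v) :: L, hL, hT => by
    obtain ⟨ha, ha1, hb, hb1, hv, hv1⟩ := hL.head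
    simp only at ha ha1 hb hb1 hv hv1
    have htn := totL_nonneg hL.tail
    simp only [totL] at hT
    obtain ⟨u, u', hc, hI⟩ := gap_ind (T := T) hη hlam L hL.tail (by linarith)
    set m := (a + b) / 2 with hm
    set e := (a - b) / 2 with he
    have hm0 : 0 < m := by rw [hm]; linarith
    have hm1 : m ≤ 1 := by rw [hm]; linarith
    have hstep := hc.step hm0 hm1 hv
    refine ⟨uh m v (Psi (pm L)) u, uh' m v (Psi (pm L)) u u', ?_, fun x d hd => ?_⟩
    rotate_left
    · have hp := rho_prob hc.lip m v x
      have hg := gap_step (e := e) hc (Psi_lip (hL.tail.ok0 hη)) (Psi_lip (hL.tail.ok1 hη))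
        (hη.trans_le ha) (hη.trans_le hb) hm he hm1 hv hv1 x d
      have hvar := rho_var_u hc hm0 hm1 hv hv1 x
      have hch := rho_cosh_le hc.lip hm0.le hm1 hv 2 x
      have hich := rho_inv_cosh_ge hc.lip hm0.le hm1 hv 4 x
      have hU1 := hstep.abs_u x
      have hUlo := hstep.lo x
      set A := Psi (pm L) with hA
      set U := uh m v A u x with hU
      set U' := uh' m v A u u' x with hU'
      set τ := totL L with hτ
      simp only [totL] at hd
      rw [← hτ] at hd
      set d' := d + e * v * U with hd'
      have he1 : |e| ≤ 1 := by rw [abs_le]; constructor <;> rw [he] <;> linarith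
      have hdT : |d'| + τ ≤ T := by
        have h1 := abs_add_le d (e * v * U)
        have h2 : |e * v * U| ≤ v := by
          rw [abs_mul, abs_mul, abs_of_nonneg hv]
          have : |e| * v ≤ v := by nlinarith
          have h3 := abs_nonneg U
          have h4 : 0 ≤ |e| * v := by positivity
          nlinarith
        linarith
      have hI' := fun y => hI (x + y) d' hdT
      set K := KL L with hK
      set Q := QL L with hQ
      have hQ0 : 0 ≤ Q := QL_nonneg hL.tail
      set κ := 1 / (2 * (1 + T ^ 2)) with hκ
      have hκ0 : 0 < κ := by positivity
      set c1 := exp (-(8 * T)) / 2 with hc1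
      have hc10 : 0 < c1 := by positivity
      -- integrate the induction hypothesis
      set P := κ * (2 * lam * K ^ 2) with hP
      set P2 := κ * (4 * lam * d' * K) with hP2
      set P3 := κ * (2 * lam * (c1 * exp (-(12 * τ)) * Q)) with hP3
      set P4 := κ * (lam ^ 2 * T ^ 2 * exp (4 * τ)) with hP4
      set P5 := κ * (2 * lam * d' ^ 2) - C0 / η ^ 2 * EL L with hP5
      have iu := rho_int hc.lip m v x (hc.eg_u.shift x)
      have iuu := rho_int hc.lip m v x (hc.eg_u.pow_two.shift x)
      have ich := rho_int hc.lip m v x (eg_cosh 2 x)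
      have hicE : EG (fun y => 1 / cosh (4 * (x + y))) := by
        refine EG.of_bounded ?_ 1 fun y => ?_
        · have : Measurable fun y => cosh (4 * (x + y)) := (eg_cosh 4 x).meas
          exact this.const_div 1
        · have := one_le_cosh (4 * (x + y))
          rw [abs_of_nonneg (by positivity), div_le_one (by linarith)]; exact this
      have iic := rho_int hc.lip m v x hicE
      have ic : Integrable (fun _ : ℝ => P5) (rho m v A x) := integrable_const _
      have j1 := iadd (ich.const_mul (-P4)) ic
      have j2 := iadd (iic.const_mul P3) j1
      have j3 := iadd (iu.const_mul P2) j2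
      have j4 := iadd (iuu.const_mul P) j3
      have l0 : Lip1 (fun y => Psi (p0 L) (x + y + d')) := by
        have := (Psi_lip (hL.tail.ok0 hη)).shift (x + d')
        convert this using 3; ring
      have l1 : Lip1 (fun y => Psi (p1 L) (x + y - d')) := by
        have := (Psi_lip (hL.tail.ok1 hη)).shift (x - d')
        convert this using 3; ring
      have iR := rho_int hc.lip m v x (((l0.eg.const_mul (1 / 2)).add (l1.eg.const_mul (1 / 2))).sub (hc.lip.shift x).eg)
      have key := integral_mono j4 iR fun y => by
        have := hI' y
        simp only
        refine le_trans (le_of_eq ?_) this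
        rw [hP, hP2, hP3, hP4, hP5]; ring
      rw [integral_add (iuu.const_mul P) j3, integral_add (iu.const_mul P2) j2,
        integral_add (iic.const_mul P3) j1, integral_add (ich.const_mul (-P4)) ic] at key
      simp only [integral_const_mul, integral_const, probReal_univ, one_smul] at key
      have g1 := hg.trans' (sub_le_sub_right key _)
      simp only [totL, KL, QL, EL, pm, p0, p1, Psi, List.map_cons]
      refine le_trans ?_ g1
      rw [show (∫ y, u (x + y) ∂(rho m v A x)) = U from rfl]
      set I1 := ∫ y, u (x + y) ^ 2 ∂(rho m v A x)
      set I2 := ∫ y, 1 / cosh (4 * (x + y)) ∂(rho m v A x)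
      set I3 := ∫ y, cosh (2 * (x + y)) ∂(rho m v A x)
      -- individual bounds
      have hP0 : 0 ≤ P := by positivity
      have hP30 : 0 ≤ P3 := by positivity
      have hP40 : 0 ≤ P4 := by positivity
      have ch4 := cosh_pos (4 * x)
      have b2 : exp (-(12 * v)) / cosh (4 * x) ≤ I2 := by
        refine le_trans (le_of_eq ?_) hich
        congr 2; rw [abs_of_pos (by norm_num : (0:ℝ) < 4)]; ring
      have b3 : I3 ≤ exp (4 * v) * cosh (2 * x) := by
        refine hch.trans (le_of_eq ?_)
        congr 2; rw [abs_of_pos (by norm_num : (0:ℝ) < 2)]; ring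
      have b4 : exp (-(8 * T)) / cosh (4 * x) ≤ U' ^ 2 := by
        have h1 : exp (-(4 * T)) / cosh (2 * x) ≤ U' := by
          refine le_trans ?_ hUlo
          rw [← exp_add]
          have := cosh_pos (2 * x)
          gcongr; linarith
        have h2 : (exp (-(4 * T)) / cosh (2 * x)) ^ 2 ≤ U' ^ 2 := by
          have := cosh_pos (2 * x)
          gcongr
        refine le_trans ?_ h2
        rw [div_pow, ← exp_nat_mul]
        have h3 : cosh (2 * x) ^ 2 ≤ cosh (4 * x) := by
          rw [show 4 * x = 2 * (2 * x) by ring, cosh_two_mul (2 * x)]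
          nlinarith [sq_nonneg (sinh (2 * x))]
        have := cosh_pos (2 * x)
        push_cast
        rw [show (2 : ℝ) * -(4 * T) = -(8 * T) by ring]
        gcongr
      have b5 : e ^ 2 / (a * b) ≤ 1 / η ^ 2 := by
        have h1 : η ^ 2 ≤ a * b := by nlinarith
        have h2 : e ^ 2 ≤ 1 := by rw [sq_le_one_iff_abs_le_one]; exact he1
        have := sq_nonneg e
        gcongr
      have b6 : e ^ 2 / (a * b) * (C0 * (v * √v)) ≤ C0 / η ^ 2 * (v * √v) := by
        have := C0_nonneg
        calc _ ≤ 1 / η ^ 2 * (C0 * (v * √v)) := by gcongr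
          _ = _ := by ring
      have b1 : P * (U ^ 2 + v * U' ^ 2 / 2) ≤ P * I1 := mul_le_mul_of_nonneg_left hvar hP0
      have b2' : P3 * (exp (-(12 * v)) / cosh (4 * x)) ≤ P3 * I2 := mul_le_mul_of_nonneg_left b2 hP30
      have b3' : P4 * I3 ≤ P4 * (exp (4 * v) * cosh (2 * x)) := mul_le_mul_of_nonneg_left b3 hP40
      have b4' : P * (v * (exp (-(8 * T)) / cosh (4 * x)) / 2) ≤ P * (v * U' ^ 2 / 2) := by gcongr
      have b7 : κ * (2 * lam * (c1 * exp (-(12 * (v + τ))) * (K ^ 2 * v) / cosh (4 * x))) ≤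
          P * (v * (exp (-(8 * T)) / cosh (4 * x)) / 2) := by
        have h1 : exp (-(12 * (v + τ))) ≤ 1 := by rw [exp_le_one_iff]; linarith
        calc _ ≤ κ * (2 * lam * (c1 * 1 * (K ^ 2 * v) / cosh (4 * x))) := by gcongr
          _ = _ := by rw [hP, hc1]; ring
      have x1 : exp (-(12 * (v + τ))) = exp (-(12 * τ)) * exp (-(12 * v)) := by rw [← exp_add]; ring_nf
      have x2 : exp (4 * (v + τ)) = exp (4 * τ) * exp (4 * v) := by rw [← exp_add]; ring_nf
      have E1 : κ * (2 * lam * ((d + (e * v + K) * U) ^ 2 +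
          c1 * exp (-(12 * (v + τ))) * (K ^ 2 * v + Q) / cosh (4 * x)) -
          lam ^ 2 * T ^ 2 * exp (4 * (v + τ)) * cosh (2 * x)) - C0 / η ^ 2 * (v * √v + EL L)
          = P * U ^ 2 + P2 * U + P5 + κ * (2 * lam * (c1 * exp (-(12 * (v + τ))) * (K ^ 2 * v) / cosh (4 * x)))
            + P3 * (exp (-(12 * v)) / cosh (4 * x)) - P4 * (exp (4 * v) * cosh (2 * x)) - C0 / η ^ 2 * (v * √v) := by
        rw [hP, hP2, hP3, hP4, hP5, hd', x1, x2]; ring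
      rw [E1]
      linarith
    · rw [← exp_add] at hstep
      simp only [totL, pm, Psi, List.map_cons]
      rw [show -(4 * (v + totL L)) = -(4 * totL L) + -(4 * v) by ring]
      exact hstep

def Lin (X : ℝ → ℝ) : List (ℝ × ℝ) → ℝ → ℝ
  | [], _ => 0
  | c :: l, t => c.1 * (X (t + c.2) - X t) + Lin X l (t + c.2)

def tot : List (ℝ × ℝ) → ℝ
  | [] => 0
  | c :: l => c.2 + tot l

def Srt (l : List (ℝ × ℝ)) : Prop := l.Pairwise (fun a b => a.1 ≤ b.1)

structure Valid (T : ℝ) (l : List (ℝ × ℝ)) : Prop where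
  ok : Ok l
  srt : Srt l
  tot_eq : tot l = T

theorem tot_nonneg : ∀ {l : List (ℝ × ℝ)}, Ok l → 0 ≤ tot l
  | [], _ => le_rfl
  | _ :: _, h => add_nonneg h.head.2.2 (tot_nonneg h.tail)

theorem Lin_sub (X Y : ℝ → ℝ) : ∀ (l : List (ℝ × ℝ)) (t : ℝ),
    Lin (fun z => X z - Y z) l t = Lin X l t - Lin Y l t
  | [], t => by simp [Lin]
  | c :: l, t => by simp only [Lin]; rw [Lin_sub X Y l]; ring

theorem Lin_smul (r : ℝ) (X : ℝ → ℝ) : ∀ (l : List (ℝ × ℝ)) (t : ℝ),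
    Lin (fun z => r * X z) l t = r * Lin X l t
  | [], t => by simp [Lin]
  | c :: l, t => by simp only [Lin]; rw [Lin_smul r X l]; ring

theorem Lin_abel {T M : ℝ} {g : ℝ → ℝ} (hg : ∀ t, 0 ≤ t → t ≤ T → |g t| ≤ M) :
    ∀ (l : List (ℝ × ℝ)) (s t : ℝ), Ok l → Srt l → 0 ≤ s → s ≤ 1 → (∀ c ∈ l, s ≤ c.1) → 0 ≤ t → t + tot l ≤ T →
      |Lin g l t + s * g t| ≤ M * (2 - s)
  | [], s, t, _, _, hs, hs1, _, ht, htT => by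
    have h1 := hg t ht (by simpa [tot] using htT)
    simp only [Lin, zero_add, abs_mul, abs_of_nonneg hs]
    nlinarith [abs_nonneg (g t)]
  | c :: l, s, t, hok, hsrt, hs, hs1, hsl, ht, htT => by
    have hh := hok.head
    have htn := tot_nonneg hok.tail
    simp only [tot] at htT
    have ih := Lin_abel hg l c.1 (t + c.2) hok.tail (List.pairwise_cons.mp hsrt).2 hh.1.le hh.2.1
      (List.pairwise_cons.mp hsrt).1 (by linarith) (by linarith)
    have h1 := hg t ht (by linarith)
    have hsc := hsl c List.mem_cons_self
    simp only [Lin]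
    have e : c.1 * (g (t + c.2) - g t) + Lin g l (t + c.2) + s * g t =
      (Lin g l (t + c.2) + c.1 * g (t + c.2)) - (c.1 - s) * g t := by ring
    rw [e]
    refine (abs_sub _ _).trans ?_
    rw [abs_mul, abs_of_nonneg (sub_nonneg.mpr hsc)]
    nlinarith

theorem Valid.lin_bd {T M : ℝ} {g : ℝ → ℝ} {l : List (ℝ × ℝ)} (h : Valid T l)
    (hg : ∀ t, 0 ≤ t → t ≤ T → |g t| ≤ M) : |Lin g l 0| ≤ 2 * M := by
  have := Lin_abel hg l 0 0 h.ok h.srt le_rfl zero_le_one (fun c hc => (h.ok c hc).1.le) le_rfl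
    (by rw [h.tot_eq]; simp)
  simp at this; linarith

theorem tot_zero : ∀ {l : List (ℝ × ℝ)}, Ok l → tot l = 0 → Psi l = lc ∧ ∀ X t, Lin X l t = 0
  | [], _, _ => ⟨rfl, fun _ _ => rfl⟩
  | (m, v) :: l, h, h0 => by
    have h1 := h.head.2.2
    have h2 := tot_nonneg h.tail
    simp only [tot] at h0 h1
    have hv : v = 0 := by linarith
    have hl : tot l = 0 := by linarith
    obtain ⟨i1, i2⟩ := tot_zero h.tail hl
    subst hv
    refine ⟨?_, fun X t => ?_⟩
    · simp only [Psi]; rw [TO_zero h.head.1, i1]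
    · simp [Lin, i2]

def SrtL (L : TL) : Prop := L.Pairwise (fun s t => s.1 ≤ t.1 ∧ s.2.1 ≤ t.2.1)

/-- `L` is a common refinement. -/
structure Common (l l' : List (ℝ × ℝ)) (L : TL) : Prop where
  vnn : ∀ t ∈ L, 0 ≤ t.2.2
  m0 : ∀ t ∈ L, ∃ c ∈ l, t.1 = c.1
  m1 : ∀ t ∈ L, ∃ c ∈ l', t.2.1 = c.1
  srt : SrtL L
  psi0 : Psi (p0 L) = Psi l
  psi1 : Psi (p1 L) = Psi l'
  lin0 : ∀ X t, Lin X (p0 L) t = Lin X l t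
  lin1 : ∀ X t, Lin X (p1 L) t = Lin X l' t
  tot_eq : totL L = tot l

theorem Common.symm {l l' : List (ℝ × ℝ)} {L : TL} (h : Common l l' L) (ht : tot l = tot l') :
    ∃ L', Common l' l L' := by
  refine ⟨L.map fun t => (t.2.1, t.1, t.2.2), ?_, ?_, ?_, ?_, ?_, ?_, ?_, ?_, ?_⟩
  · intro t ht; obtain ⟨s, hs, rfl⟩ := List.mem_map.mp ht; exact h.vnn s hs
  · intro t ht; obtain ⟨s, hs, rfl⟩ := List.mem_map.mp ht; exact h.m1 s hs
  · intro t ht; obtain ⟨s, hs, rfl⟩ := List.mem_map.mp ht; exact h.m0 s hs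
  · exact List.pairwise_map.mpr (h.srt.imp fun hab => ⟨hab.2, hab.1⟩)
  · have := h.psi1; simpa [p0, p1, Function.comp_def] using this
  · have := h.psi0; simpa [p0, p1, Function.comp_def] using this
  · have := h.lin1; simpa [p0, p1, Function.comp_def] using this
  · have := h.lin0; simpa [p0, p1, Function.comp_def] using this
  · rw [← ht, ← h.tot_eq]
    clear h ht
    induction L with
    | nil => rfl
    | cons a L ih => simp only [List.map_cons, totL, ih]

theorem Common.step {a b v w : ℝ} {l l' : List (ℝ × ℝ)} {L : TL} (hl : Ok ((a, v) :: l)) (hl' : Ok ((b, w) :: l'))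
    (hs : Srt ((a, v) :: l)) (hs' : Srt ((b, w) :: l')) (hvw : v ≤ w)
    (h : Common l ((b, w - v) :: l') L) :
    Common ((a, v) :: l) ((b, w) :: l') ((a, b, v) :: L) := by
  have hv : 0 ≤ v := hl.head.2.2
  have hb : 0 < b := hl'.head.1
  refine ⟨?_, ?_, ?_, ?_, ?_, ?_, ?_, ?_, ?_⟩
  · intro t ht
    rcases List.mem_cons.mp ht with rfl | ht
    · exact hv
    · exact h.vnn t ht
  · intro t ht
    rcases List.mem_cons.mp ht with rfl | ht
    · exact ⟨_, List.mem_cons_self, rfl⟩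
    · obtain ⟨c, hc, e⟩ := h.m0 t ht; exact ⟨c, List.mem_cons_of_mem _ hc, e⟩
  · intro t ht
    rcases List.mem_cons.mp ht with rfl | ht
    · exact ⟨_, List.mem_cons_self, rfl⟩
    · obtain ⟨c, hc, e⟩ := h.m1 t ht
      rcases List.mem_cons.mp hc with rfl | hc
      · exact ⟨_, List.mem_cons_self, e⟩
      · exact ⟨c, List.mem_cons_of_mem _ hc, e⟩
  · refine List.pairwise_cons.mpr ⟨fun t ht => ⟨?_, ?_⟩, h.srt⟩
    · obtain ⟨c, hc, e⟩ := h.m0 t ht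
      rw [e]; exact (List.pairwise_cons.mp hs).1 c hc
    · obtain ⟨c, hc, e⟩ := h.m1 t ht
      rw [e]
      rcases List.mem_cons.mp hc with rfl | hc
      · exact le_rfl
      · exact (List.pairwise_cons.mp hs').1 c hc
  · have := h.psi0; simp only [p0, List.map_cons, Psi] at *; rw [this]
  · have := h.psi1
    simp only [p1, List.map_cons, Psi] at *
    rw [this, TO_semigroup hb (Psi_lip hl'.tail) hv (by linarith)]
    congr 1; ring
  · intro X t; have := h.lin0 X (t + v); simp only [p0, List.map_cons, Lin] at *; rw [this]
  · intro X t; have := h.lin1 X (t + v)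
    simp only [p1, List.map_cons, Lin] at *
    rw [this, show t + v + (w - v) = t + w by ring]; ring
  · simp only [totL, tot]; rw [h.tot_eq]

theorem exists_common : ∀ (n : ℕ) (l l' : List (ℝ × ℝ)), l.length + l'.length ≤ n → Ok l → Ok l' → Srt l → Srt l' →
    tot l = tot l' → ∃ L, Common l l' L := by
  intro n
  induction n with
  | zero =>
    intro l l' hn _ _ _ _ _
    have h1 : l = [] := List.length_eq_zero_iff.mp (by omega)
    have h2 : l' = [] := List.length_eq_zero_iff.mp (by omega)
    subst h1 h2
    exact ⟨[], by simp, by simp, by simp, List.Pairwise.nil, rfl, rfl, fun _ _ => rfl, fun _ _ => rfl, rfl⟩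
  | succ n ih =>
    intro l l' hn hl hl' hs hs' ht
    match l, l' with
    | [], l' =>
      have h0 := tot_zero hl' (by rw [← ht]; rfl)
      exact ⟨[], by simp, by simp, by simp, List.Pairwise.nil, rfl, h0.1.symm, fun _ _ => rfl,
        fun X t => (h0.2 X t).symm, rfl⟩
    | l, [] =>
      have e0 : tot l = 0 := by rw [ht]; rfl
      have h0 := tot_zero hl e0
      exact ⟨[], by simp, by simp, by simp, List.Pairwise.nil, h0.1.symm, rfl,
        fun X t => (h0.2 X t).symm, fun _ _ => rfl, by rw [e0]; rfl⟩
    | (a, v) :: l, (b, w) :: l' =>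
      have key : ∀ (a v b w : ℝ) (l l' : List (ℝ × ℝ)), ((a, v) :: l).length + ((b, w) :: l').length ≤ n + 1 →
          Ok ((a, v) :: l) → Ok ((b, w) :: l') → Srt ((a, v) :: l) → Srt ((b, w) :: l') →
          tot ((a, v) :: l) = tot ((b, w) :: l') → v ≤ w → ∃ L, Common ((a, v) :: l) ((b, w) :: l') L := by
        intro a v b w l l' hn hl hl' hs hs' ht hvw
        have hok : Ok ((b, w - v) :: l') := by
          intro c hc
          rcases List.mem_cons.mp hc with rfl | hc
          · exact ⟨hl'.head.1, hl'.head.2.1, by simp only; linarith⟩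
          · exact hl'.tail c hc
        have hsr : Srt ((b, w - v) :: l') :=
          List.pairwise_cons.mpr ⟨(List.pairwise_cons.mp hs').1, (List.pairwise_cons.mp hs').2⟩
        obtain ⟨L, hL⟩ := ih l ((b, w - v) :: l') (by simp only [List.length_cons] at *; omega) hl.tail hok
          (List.pairwise_cons.mp hs).2 hsr (by simp only [tot] at *; linarith)
        exact ⟨_, hL.step hl hl' hs hs' hvw⟩
      rcases le_total v w with hvw | hvw
      · exact key a v b w l l' hn hl hl' hs hs' ht hvw
      · obtain ⟨L, hL⟩ := key b w a v l' l (by simp only [List.length_cons] at *; omega) hl' hl hs' hs ht.symm hvw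
        exact hL.symm ht.symm

/-- halving all cells -/
def halve : TL → TL
  | [] => []
  | t :: L => (t.1, t.2.1, t.2.2 / 2) :: (t.1, t.2.1, t.2.2 / 2) :: halve L

theorem halve_mem : ∀ {L : TL} {t}, t ∈ halve L → ∃ s ∈ L, t = (s.1, s.2.1, s.2.2 / 2)
  | [], t, h => by simp [halve] at h
  | s :: L, t, h => by
    simp only [halve, List.mem_cons] at h
    rcases h with rfl | rfl | h
    · exact ⟨s, List.mem_cons_self, rfl⟩
    · exact ⟨s, List.mem_cons_self, rfl⟩
    · obtain ⟨r, hr, e⟩ := halve_mem h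
      exact ⟨r, List.mem_cons_of_mem _ hr, e⟩

theorem halve_srt : ∀ {L : TL}, SrtL L → SrtL (halve L)
  | [], _ => List.Pairwise.nil
  | s :: L, h => by
    have h1 := (List.pairwise_cons.mp h).1
    have h2 : ∀ t ∈ halve L, s.1 ≤ t.1 ∧ s.2.1 ≤ t.2.1 := by
      intro t ht
      obtain ⟨r, hr, rfl⟩ := halve_mem ht
      exact h1 r hr
    have ih := halve_srt (List.pairwise_cons.mp h).2
    refine List.pairwise_cons.mpr ⟨?_, List.pairwise_cons.mpr ⟨h2, ih⟩⟩
    intro t ht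
    rcases List.mem_cons.mp ht with rfl | ht
    · exact ⟨le_rfl, le_rfl⟩
    · exact h2 t ht

theorem halve_lin (g : ℝ × ℝ × ℝ → ℝ) (hg : ∀ a b v, g (a, b, v / 2) = g (a, b, v)) (X : ℝ → ℝ) : ∀ (L : TL) (t : ℝ),
    Lin X ((halve L).map fun t => (g t, t.2.2)) t = Lin X (L.map fun t => (g t, t.2.2)) t
  | [], t => rfl
  | s :: L, t => by
    simp only [halve, List.map_cons, Lin]
    rw [halve_lin g hg X L, hg, show t + s.2.2 / 2 + s.2.2 / 2 = t + s.2.2 by ring]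
    ring

theorem halve_psi (g : ℝ × ℝ × ℝ → ℝ) (hg : ∀ a b v, g (a, b, v / 2) = g (a, b, v)) : ∀ (L : TL),
    Ok (L.map fun t => (g t, t.2.2)) →
    Psi ((halve L).map fun t => (g t, t.2.2)) = Psi (L.map fun t => (g t, t.2.2))
  | [], _ => rfl
  | s :: L, h => by
    simp only [halve, List.map_cons, Psi]
    simp only [List.map_cons] at h
    have hh := h.head
    simp only at hh
    rw [halve_psi g hg L h.tail, hg, TO_semigroup hh.1 (Psi_lip h.tail) (by linarith) (by linarith)]
    congr 1; ring

theorem halve_tot : ∀ L : TL, totL (halve L) = totL L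
  | [] => rfl
  | s :: L => by simp only [halve, totL]; rw [halve_tot L]; ring

theorem Common.halve {l l' : List (ℝ × ℝ)} {L : TL} (h : Common l l' L) (hl : Ok l) (hl' : Ok l') :
    Common l l' (halve L) := by
  have o0 : Ok (p0 L) := by
    intro c hc
    obtain ⟨t, ht, rfl⟩ := List.mem_map.mp hc
    obtain ⟨c, hc, e⟩ := h.m0 t ht
    have := hl c hc
    rw [← e] at this
    exact ⟨this.1, this.2.1, h.vnn t ht⟩
  have o1 : Ok (p1 L) := by
    intro c hc
    obtain ⟨t, ht, rfl⟩ := List.mem_map.mp hc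
    obtain ⟨c, hc, e⟩ := h.m1 t ht
    have := hl' c hc
    rw [← e] at this
    exact ⟨this.1, this.2.1, h.vnn t ht⟩
  refine ⟨?_, ?_, ?_, halve_srt h.srt, ?_, ?_, ?_, ?_, ?_⟩
  · intro t ht; obtain ⟨s, hs, rfl⟩ := halve_mem ht; have := h.vnn s hs; simp only; linarith
  · intro t ht; obtain ⟨s, hs, rfl⟩ := halve_mem ht; exact h.m0 s hs
  · intro t ht; obtain ⟨s, hs, rfl⟩ := halve_mem ht; exact h.m1 s hs
  · rw [← h.psi0]; exact halve_psi (fun t => t.1) (fun _ _ _ => rfl) L o0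
  · rw [← h.psi1]; exact halve_psi (fun t => t.2.1) (fun _ _ _ => rfl) L o1
  · intro X t; rw [← h.lin0]; exact halve_lin (fun t => t.1) (fun _ _ _ => rfl) X L t
  · intro X t; rw [← h.lin1]; exact halve_lin (fun t => t.2.1) (fun _ _ _ => rfl) X L t
  · rw [halve_tot, h.tot_eq]

theorem exists_fine {l l' : List (ℝ × ℝ)} (hl : Ok l) (hl' : Ok l') (hs : Srt l) (hs' : Srt l')
    (ht : tot l = tot l') {δ : ℝ} (hδ : 0 < δ) : ∃ L, Common l l' L ∧ ∀ t ∈ L, t.2.2 ≤ δ := by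
  obtain ⟨L, hL⟩ := exists_common _ l l' le_rfl hl hl' hs hs' ht
  have hb : ∃ B : ℝ, ∀ t ∈ L, t.2.2 ≤ B := by
    refine ⟨totL L, ?_⟩
    have hv := hL.vnn
    clear hL
    induction L with
    | nil => simp
    | cons s L ih =>
      intro t ht
      have hn : ∀ M : TL, (∀ t ∈ M, 0 ≤ t.2.2) → 0 ≤ totL M := by
        intro M
        induction M with
        | nil => intro _; exact le_rfl
        | cons r M ih => intro h; exact add_nonneg (h r List.mem_cons_self) (ih fun t ht => h t (List.mem_cons_of_mem _ ht))
      have h2 := hn L fun t ht => hv t (List.mem_cons_of_mem _ ht)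
      have h3 := hv s List.mem_cons_self
      simp only [totL]
      rcases List.mem_cons.mp ht with rfl | ht
      · linarith
      · have := ih (fun t ht => hv t (List.mem_cons_of_mem _ ht)) t ht
        linarith
  obtain ⟨B, hB⟩ := hb
  have hn : ∀ n : ℕ, ∃ L, Common l l' L ∧ ∀ t ∈ L, t.2.2 ≤ B * (1 / 2) ^ n := by
    intro n
    induction n with
    | zero => exact ⟨L, hL, by simpa using hB⟩
    | succ n ih =>
      obtain ⟨M, hM, hMb⟩ := ih
      refine ⟨halve M, hM.halve hl hl', fun t ht => ?_⟩
      obtain ⟨s, hs, rfl⟩ := halve_mem ht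
      have := hMb s hs
      simp only; rw [pow_succ]; linarith
  have hlim : Tendsto (fun n : ℕ => B * (1 / 2 : ℝ) ^ n) atTop (𝓝 (B * 0)) :=
    (tendsto_pow_atTop_nhds_zero_of_lt_one (by norm_num) (by norm_num)).const_mul B
  rw [mul_zero] at hlim
  obtain ⟨n, hn'⟩ := (hlim.eventually (gt_mem_nhds hδ)).exists
  obtain ⟨M, hM, hMb⟩ := hn n
  exact ⟨M, hM, fun t ht => (hMb t ht).trans hn'.le⟩

def LE' (g : ℝ → ℝ) : TL → ℝ → ℝ
  | [], _ => 0
  | s :: L, t => (s.1 - s.2.1) / 2 * (g (t + s.2.2) - g t) + LE' g L (t + s.2.2)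

theorem LE'_eq (g : ℝ → ℝ) : ∀ (L : TL) (t : ℝ), 2 * LE' g L t = Lin g (p0 L) t - Lin g (p1 L) t
  | [], t => by simp [LE', p0, p1, Lin]
  | s :: L, t => by
    have := LE'_eq g L (t + s.2.2)
    simp only [LE', p0, p1, List.map_cons, Lin] at *
    linarith

theorem Lin_pm (g : ℝ → ℝ) : ∀ (L : TL) (t : ℝ), Lin g (pm L) t = (Lin g (p0 L) t + Lin g (p1 L) t) / 2
  | [], t => by simp [pm, p0, p1, Lin]
  | s :: L, t => by
    have := Lin_pm g L (t + s.2.2)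
    simp only [pm, p0, p1, List.map_cons, Lin] at *
    rw [this]; ring

def V2 : TL → ℝ
  | [] => 0
  | s :: L => s.2.2 ^ 2 + V2 L

theorem LE'_bound {T B s η : ℝ} (hs : 0 < s) (hη : 0 < η) (hB : 0 ≤ B) {g g' : ℝ → ℝ}
    (h1 : ∀ t v, 0 ≤ t → 0 ≤ v → t + v ≤ T → |g (t + v) - g t - g' t * v| ≤ B * v ^ 2)
    (h2 : ∀ t v, 0 ≤ t → 0 ≤ v → t + v ≤ T → |g' (t + v) - g' t| ≤ B * v) :
    ∀ (L : TL) (t : ℝ), OkL η L → 0 ≤ t → t + totL L ≤ T →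
      |LE' g L t - g' t * KL L| ≤ B * (s / 2 * totL L + QL L / (2 * s) + V2 L)
  | [], t, _, _, _ => by simp [LE', KL, totL, QL, V2]
  | (a, b, v) :: L, t, hL, ht, htT => by
    obtain ⟨ha, ha1, hb, hb1, hv, hv1⟩ := hL.head
    simp only at ha ha1 hb hb1 hv hv1
    have htn := totL_nonneg hL.tail
    simp only [totL] at htT
    have ih := LE'_bound hs hη hB h1 h2 L (t + v) hL.tail (by linarith) (by linarith)
    have g1 := h1 t v ht hv (by linarith)
    have g2 := h2 t v ht hv (by linarith)
    simp only [LE', KL, totL, QL, V2]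
    set e := (a - b) / 2 with he
    have he1 : |e| ≤ 1 := by rw [abs_le]; constructor <;> rw [he] <;> linarith
    have eq : e * (g (t + v) - g t) + LE' g L (t + v) - g' t * (e * v + KL L) =
      e * (g (t + v) - g t - g' t * v) + (g' (t + v) - g' t) * KL L + (LE' g L (t + v) - g' (t + v) * KL L) := by ring
    rw [eq]
    have a1 : |e * (g (t + v) - g t - g' t * v)| ≤ B * v ^ 2 := by
      rw [abs_mul]
      nlinarith [abs_nonneg (g (t + v) - g t - g' t * v), abs_nonneg e]
    have a2 : |(g' (t + v) - g' t) * KL L| ≤ B * (s / 2 * v + KL L ^ 2 * v / (2 * s)) := by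
      rw [abs_mul]
      have : |KL L| ≤ s / 2 + KL L ^ 2 / (2 * s) := by
        have e1 : s / 2 + KL L ^ 2 / (2 * s) - |KL L| = (s - |KL L|) ^ 2 / (2 * s) := by
          rw [← sq_abs (KL L)]; field_simp; ring
        have : 0 ≤ (s - |KL L|) ^ 2 / (2 * s) := by positivity
        linarith
      calc _ ≤ B * v * (s / 2 + KL L ^ 2 / (2 * s)) := by gcongr
        _ = _ := by ring
    refine (abs_add_three _ _ _).trans ?_
    refine (add_le_add (add_le_add a1 a2) ih).trans (le_of_eq ?_)
    field_simp; ring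

theorem EL_le {δ : ℝ} : ∀ L : TL, (∀ t ∈ L, 0 ≤ t.2.2) → (∀ t ∈ L, t.2.2 ≤ δ) → EL L ≤ √δ * totL L
  | [], _, _ => by simp [EL, totL]
  | (a, b, v) :: L, h0, h1 => by
    have ih := EL_le L (fun t ht => h0 t (List.mem_cons_of_mem _ ht)) (fun t ht => h1 t (List.mem_cons_of_mem _ ht))
    have hv : 0 ≤ v := h0 _ List.mem_cons_self
    have hv1 : v ≤ δ := h1 _ List.mem_cons_self
    simp only [EL, totL]
    have : v * √v ≤ v * √δ := by gcongr
    linarith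

theorem V2_le {δ : ℝ} : ∀ L : TL, (∀ t ∈ L, 0 ≤ t.2.2) → (∀ t ∈ L, t.2.2 ≤ δ) → V2 L ≤ δ * totL L
  | [], _, _ => by simp [V2, totL]
  | (a, b, v) :: L, h0, h1 => by
    have ih := V2_le L (fun t ht => h0 t (List.mem_cons_of_mem _ ht)) (fun t ht => h1 t (List.mem_cons_of_mem _ ht))
    have hv : 0 ≤ v := h0 _ List.mem_cons_self
    have hv1 : v ≤ δ := h1 _ List.mem_cons_self
    simp only [V2, totL]
    nlinarith

theorem exists_lb : ∀ l : List (ℝ × ℝ), Ok l → ∃ η > 0, ∀ c ∈ l, η ≤ c.1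
  | [], _ => ⟨1, one_pos, by simp⟩
  | c :: l, h => by
    obtain ⟨η, h0, h1⟩ := exists_lb l h.tail
    refine ⟨min c.1 η, lt_min h.head.1 h0, ?_⟩
    intro d hd
    rcases List.mem_cons.mp hd with rfl | hd
    · exact min_le_left _ _
    · exact (min_le_right _ _).trans (h1 d hd)

theorem tot_pm : ∀ L : TL, tot (pm L) = totL L
  | [] => rfl
  | t :: L => by have := tot_pm L; simp only [pm, List.map_cons, tot, totL] at *; rw [this]

theorem near_Q {T h F : ℝ} {X : ℝ → ℝ}
    (hF : ∀ l, Valid T l → F ≤ Psi l h - 1 / 2 * Lin X l 0) {ε : ℝ} (hε : 0 < ε) :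
    ∃ δ > 0, ∀ l l', Valid T l → Valid T l' → Psi l h - 1 / 2 * Lin X l 0 ≤ F + δ →
      Psi l' h - 1 / 2 * Lin X l' 0 ≤ F + δ →
      ∃ L η, 0 < η ∧ OkL η L ∧ Common l l' L ∧ QL L ≤ ε ∧ V2 L ≤ ε := by
  obtain ⟨c2, hc2⟩ : ∃ c2, c2 = exp (-(8 * T)) / 2 * exp (-(12 * T)) / cosh (4 * h) := ⟨_, rfl⟩
  have hc2p : 0 < c2 := by rw [hc2]; have := cosh_pos (4 * h); positivity
  obtain ⟨C3, hC3⟩ : ∃ C3, C3 = T ^ 2 * exp (4 * T) * cosh (2 * h) := ⟨_, rfl⟩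
  have hC3p : 0 ≤ C3 := by rw [hC3]; have := cosh_pos (2 * h); positivity
  obtain ⟨κ, hκ⟩ : ∃ κ, κ = 1 / (2 * (1 + T ^ 2)) := ⟨_, rfl⟩
  have hκp : 0 < κ := by rw [hκ]; positivity
  obtain ⟨lam, hlam⟩ : ∃ lam, lam = ε * c2 / (C3 + 1) := ⟨_, rfl⟩
  have hlamp : 0 < lam := by rw [hlam]; positivity
  have hlamC : lam * C3 ≤ ε * c2 := by
    rw [hlam, div_mul_eq_mul_div, div_le_iff₀ (by positivity)]
    have : 0 < ε * c2 := by positivity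
    nlinarith
  obtain ⟨δ, hδ⟩ : ∃ δ, δ = lam * κ * c2 * ε / 2 := ⟨_, rfl⟩
  have hδp : 0 < δ := by rw [hδ]; positivity
  refine ⟨δ, hδp, ?_⟩
  intro l l' hl hl' hG hG'
  obtain ⟨η0, hη0, hη0l⟩ := exists_lb l hl.ok
  obtain ⟨η1, hη1, hη1l⟩ := exists_lb l' hl'.ok
  obtain ⟨η, hη⟩ : ∃ η, η = min η0 η1 := ⟨_, rfl⟩
  have hηp : 0 < η := by rw [hη]; exact lt_min hη0 hη1
  have hlow : ∃ δ' > 0, δ' ≤ 1 ∧ δ' * T ≤ ε ∧ C0 / η ^ 2 * (√δ' * T) ≤ δ := by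
    have c1 : Tendsto (fun z : ℝ => z * T) (𝓝[>] 0) (𝓝 0) := by
      have : Continuous (fun z : ℝ => z * T) := by fun_prop
      have := this.tendsto 0
      simp only [zero_mul] at this
      exact this.mono_left nhdsWithin_le_nhds
    have c2 : Tendsto (fun z : ℝ => C0 / η ^ 2 * (√z * T)) (𝓝[>] 0) (𝓝 0) := by
      have : Continuous (fun z : ℝ => C0 / η ^ 2 * (√z * T)) := by fun_prop
      have := this.tendsto 0
      simp only [Real.sqrt_zero, zero_mul, mul_zero] at this
      exact this.mono_left nhdsWithin_le_nhds
    have c3 : ∀ᶠ z : ℝ in 𝓝[>] 0, z ≤ 1 := (eventually_le_nhds (zero_lt_one)).filter_mono nhdsWithin_le_nhds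
    obtain ⟨z, ⟨⟨⟨h1, h2⟩, h3⟩, h4⟩⟩ := (((c1.eventually_le_const hε).and (c2.eventually_le_const hδp)).and c3 |>.and
      self_mem_nhdsWithin).exists
    exact ⟨z, h4, h3, h1, h2⟩
  obtain ⟨δ', hδ', hδ1, hδT, hδE⟩ := hlow
  obtain ⟨L, hL, hLv⟩ := exists_fine hl.ok hl'.ok hl.srt hl'.srt (hl.tot_eq.trans hl'.tot_eq.symm) hδ'
  have htot : totL L = T := hL.tot_eq.trans hl.tot_eq
  have hok : OkL η L := by
    intro t ht
    obtain ⟨c, hc, e⟩ := hL.m0 t ht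
    obtain ⟨c', hc', e'⟩ := hL.m1 t ht
    rw [e, e']
    refine ⟨?_, (hl.ok c hc).2.1, ?_, (hl'.ok c' hc').2.1, hL.vnn t ht, (hLv t ht).trans hδ1⟩
    · rw [hη]; exact (min_le_left _ _).trans (hη0l c hc)
    · rw [hη]; exact (min_le_right _ _).trans (hη1l c' hc')
  have hpm : Valid T (pm L) := by
    refine ⟨?_, ?_, (tot_pm L).trans htot⟩
    · intro c hc
      obtain ⟨t, ht, rfl⟩ := List.mem_map.mp hc
      have := hok t ht
      exact ⟨by simp only; linarith, by simp only; linarith, this.2.2.2.2.1⟩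
    · unfold Srt pm
      rw [List.pairwise_map]
      refine hL.srt.imp ?_
      intro a b hab; simp only; linarith [hab.1, hab.2]
  refine ⟨L, η, hηp, hok, hL, ?_, ?_⟩
  swap
  · refine (V2_le L hL.vnn hLv).trans ?_; rw [htot]; exact hδT
  have hE : C0 / η ^ 2 * EL L ≤ δ := by
    refine le_trans ?_ hδE
    have := C0_nonneg
    gcongr
    rw [← htot]; exact EL_le L hL.vnn hLv
  obtain ⟨u, u', -, hg⟩ := gap_ind (T := T) hηp hlamp.le L hok htot.le
  have hg := hg h 0 (by simp [htot])
  rw [htot, hL.psi0, hL.psi1] at hg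
  have hFm := hF _ hpm
  rw [Lin_pm, hL.lin0, hL.lin1] at hFm
  simp only [add_zero, sub_zero, zero_add, ← hκ] at hg
  have e1 : exp (-(8 * T)) / 2 * exp (-(12 * T)) * QL L / cosh (4 * h) = c2 * QL L := by rw [hc2]; ring
  have e2 : lam ^ 2 * T ^ 2 * exp (4 * T) * cosh (2 * h) = lam ^ 2 * C3 := by rw [hC3]; ring
  rw [e1, e2] at hg
  have hK : 0 ≤ κ * (2 * lam * (KL L * u h) ^ 2) := by positivity
  have h1 : κ * (2 * lam * (c2 * QL L)) ≤ 2 * δ + κ * lam * (lam * C3) := by nlinarith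
  have h2 : κ * lam * (lam * C3) ≤ κ * lam * (ε * c2) := by gcongr
  have h3 : (2 * κ * lam * c2) * QL L ≤ (2 * κ * lam * c2) * ε := by rw [hδ] at h1; nlinarith
  exact le_of_mul_le_mul_left h3 (by positivity)

theorem poly_bounds (R : Polynomial ℝ) (T : ℝ) : ∃ B, 0 ≤ B ∧
    (∀ t v, 0 ≤ t → 0 ≤ v → t + v ≤ T → |R.eval (t + v) - R.eval t - R.derivative.eval t * v| ≤ B * v ^ 2) ∧
    (∀ t v, 0 ≤ t → 0 ≤ v → t + v ≤ T → |R.derivative.eval (t + v) - R.derivative.eval t| ≤ B * v) := by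
  obtain ⟨B, hB⟩ := (isCompact_Icc (a := (0 : ℝ)) (b := T)).exists_bound_of_continuousOn
    (f := fun x => R.derivative.derivative.eval x) (by fun_prop)
  have h2 : ∀ t v, 0 ≤ t → 0 ≤ v → t + v ≤ T → |R.derivative.eval (t + v) - R.derivative.eval t| ≤ max B 0 * v := by
    intro t v ht hv htv
    have := (convex_Icc (0 : ℝ) T).norm_image_sub_le_of_norm_hasDerivWithin_le (C := max B 0)
      (f := fun x => R.derivative.eval x) (f' := fun x => R.derivative.derivative.eval x)
      (fun x hx => (R.derivative.hasDerivAt x).hasDerivWithinAt)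
      (fun x hx => (hB x hx).trans (le_max_left _ _)) (x := t) (y := t + v) ⟨ht, by linarith⟩ ⟨by linarith, htv⟩
    simpa [abs_of_nonneg hv] using this
  refine ⟨max B 0, le_max_right _ _, ?_, h2⟩
  intro t v ht hv htv
  have := (convex_Icc (0 : ℝ) v).norm_image_sub_le_of_norm_hasDerivWithin_le (C := max B 0 * v)
      (f := fun w => R.eval (t + w) - R.derivative.eval t * w)
      (f' := fun w => R.derivative.eval (t + w) - R.derivative.eval t)
      (fun x hx => by
        have h1 := (R.hasDerivAt (t + x)).comp_const_add t x
        have h2 := (hasDerivAt_id x).const_mul (R.derivative.eval t)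
        have h3 := (h1.sub h2).hasDerivWithinAt (s := Set.Icc 0 v)
        rw [mul_one] at h3
        exact h3)
      (fun x hx => by
        refine (h2 t x ht hx.1 (by linarith [hx.2])).trans ?_
        have := hx.2
        gcongr) (x := 0) (y := v) ⟨le_rfl, hv⟩ ⟨hv, le_rfl⟩
  simp [abs_of_nonneg hv] at this
  calc _ = |R.eval (t + v) - R.derivative.eval t * v - R.eval t| := by congr 1; ring
    _ ≤ _ := by rw [pow_two, ← mul_assoc]; exact this

theorem near_lin {T h F : ℝ} {X : ℝ → ℝ} (hT : 0 ≤ T)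
    (hF : ∀ l, Valid T l → F ≤ Psi l h - 1 / 2 * Lin X l 0) {f : ℝ → ℝ} (hf : ContinuousOn f (Set.Icc 0 T))
    {ε : ℝ} (hε : 0 < ε) :
    ∃ δ > 0, ∀ l l', Valid T l → Valid T l' → Psi l h - 1 / 2 * Lin X l 0 ≤ F + δ →
      Psi l' h - 1 / 2 * Lin X l' 0 ≤ F + δ → |Lin f l 0 - Lin f l' 0| ≤ ε := by
  have hfs : ContinuousOn (fun z => f √z) (Set.Icc 0 (T ^ 2)) := by
    refine hf.comp (by fun_prop) ?_
    intro z hz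
    exact ⟨sqrt_nonneg _, by rw [sqrt_le_left hT]; exact hz.2⟩
  obtain ⟨P, hP⟩ := exists_polynomial_near_of_continuousOn 0 (T ^ 2) _ hfs (ε / 8) (by positivity)
  obtain ⟨R, hR⟩ : ∃ R, R = P.comp (Polynomial.X ^ 2) := ⟨_, rfl⟩
  have hRe : ∀ t, R.eval t = P.eval (t ^ 2) := fun t => by rw [hR]; simp
  have hR0 : R.derivative.eval 0 = 0 := by rw [hR, Polynomial.derivative_comp]; simp
  obtain ⟨B, hB, hb1, hb2⟩ := poly_bounds R T
  have happ : ∀ t, 0 ≤ t → t ≤ T → |f t - R.eval t| ≤ ε / 8 := by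
    intro t h0 h1
    have := hP (t ^ 2) ⟨by positivity, by gcongr⟩
    rw [sqrt_sq h0] at this
    rw [abs_sub_comm, hRe]; exact this.le
  -- choose s
  obtain ⟨s, hs⟩ : ∃ s, s = ε / (8 * (B + 1) * (T + 1)) := ⟨_, rfl⟩
  have hsp : 0 < s := by rw [hs]; positivity
  have hs1 : B * (s / 2 * T) ≤ ε / 16 := by
    rw [hs]
    rw [show B * (ε / (8 * (B + 1) * (T + 1)) / 2 * T) = (B * T) / ((B + 1) * (T + 1)) * (ε / 16) by field_simp; ring]
    have : (B * T) / ((B + 1) * (T + 1)) ≤ 1 := by rw [div_le_one (by positivity)]; nlinarith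
    nlinarith
  obtain ⟨e0, he0⟩ : ∃ e0, e0 = min (ε / (16 * (B + 1))) (ε * (2 * s) / (16 * (B + 1))) := ⟨_, rfl⟩
  have he0p : 0 < e0 := by rw [he0]; exact lt_min (by positivity) (by positivity)
  have ha : B * e0 ≤ ε / 16 := by
    have : e0 ≤ ε / (16 * (B + 1)) := by rw [he0]; exact min_le_left _ _
    rw [le_div_iff₀ (by positivity)] at this; nlinarith
  have hb : B * (e0 / (2 * s)) ≤ ε / 16 := by
    have : e0 ≤ ε * (2 * s) / (16 * (B + 1)) := by rw [he0]; exact min_le_right _ _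
    rw [le_div_iff₀ (by positivity)] at this
    rw [← mul_div_assoc, div_le_iff₀ (by positivity)]; nlinarith
  obtain ⟨δ, hδ, H⟩ := near_Q hF he0p
  refine ⟨δ, hδ, ?_⟩
  intro l l' hl hl' hG hG'
  obtain ⟨L, η, hη, hok, hC, hQ, hV⟩ := H l l' hl hl' hG hG'
  have htot : totL L = T := hC.tot_eq.trans hl.tot_eq
  have h1 := LE'_bound (T := T) (g := fun t => R.eval t) (g' := fun t => R.derivative.eval t) hsp hη hB hb1 hb2 L 0 hok le_rfl (by rw [htot]; simp)
  rw [hR0, htot] at h1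
  have h2 := LE'_eq (fun t => R.eval t) L 0
  rw [hC.lin0, hC.lin1] at h2
  have h3 : B * (s / 2 * T + QL L / (2 * s) + V2 L) ≤ 3 * (ε / 16) := by
    have : B * (QL L / (2 * s)) ≤ B * (e0 / (2 * s)) := by gcongr
    have : B * V2 L ≤ B * e0 := by gcongr
    linarith
  have h4 := hl.lin_bd (g := fun z => f z - R.eval z) happ
  have h5 := hl'.lin_bd (g := fun z => f z - R.eval z) happ
  rw [Lin_sub] at h4 h5
  simp only [zero_mul, sub_zero] at h1
  rw [abs_le] at *
  constructor <;> linarith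

theorem Lin_diff_bd {T M : ℝ} {X Y : ℝ → ℝ} {l : List (ℝ × ℝ)} (h : Valid T l)
    (hg : ∀ t, 0 ≤ t → t ≤ T → |X t - Y t| ≤ M) : |Lin X l 0 - Lin Y l 0| ≤ 2 * M := by
  rw [← Lin_sub]; exact h.lin_bd hg

theorem near_J {T h F : ℝ} {X : ℝ → ℝ} (hT : 0 ≤ T)
    (hF : ∀ l, Valid T l → F ≤ Psi l h - 1 / 2 * Lin X l 0)
    (hex : ∀ ε > 0, ∃ l, Valid T l ∧ Psi l h - 1 / 2 * Lin X l 0 ≤ F + ε)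
    {f : ℝ → ℝ} (hf : ContinuousOn f (Set.Icc 0 T)) :
    ∃ J, ∀ ε > 0, ∃ δ > 0, ∀ l, Valid T l → Psi l h - 1 / 2 * Lin X l 0 ≤ F + δ → |Lin f l 0 - J| ≤ ε := by
  have hpos : ∀ n : ℕ, (0 : ℝ) < 1 / ((n : ℝ) + 1) := fun n => by positivity
  choose l hl hG using fun n : ℕ => hex (1 / ((n : ℝ) + 1)) (hpos n)
  have hc : CauchySeq (fun n => Lin f (l n) 0) := by
    rw [Metric.cauchySeq_iff']
    intro ε hε
    obtain ⟨δ, hδ, H⟩ := near_lin hT hF hf (half_pos hε)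
    obtain ⟨N, hN⟩ := exists_nat_one_div_lt hδ
    refine ⟨N, fun n hn => ?_⟩
    have hn' : 1 / ((n : ℝ) + 1) ≤ 1 / ((N : ℝ) + 1) := one_div_le_one_div_of_le (by positivity) (by gcongr)
    rw [Real.dist_eq]
    refine lt_of_le_of_lt (H _ _ (hl n) (hl N) ((hG n).trans (by linarith)) ((hG N).trans (by linarith))) (by linarith)
  obtain ⟨J, hJ⟩ := cauchySeq_tendsto_of_complete hc
  refine ⟨J, fun ε hε => ?_⟩
  obtain ⟨δ, hδ, H⟩ := near_lin hT hF hf hε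
  refine ⟨δ, hδ, fun l0 hl0 hG0 => ?_⟩
  obtain ⟨N, hN⟩ := exists_nat_one_div_lt hδ
  have : Tendsto (fun n => |Lin f l0 0 - Lin f (l n) 0|) atTop (𝓝 |Lin f l0 0 - J|) :=
    (tendsto_const_nhds.sub hJ).abs
  refine le_of_tendsto this ?_
  filter_upwards [eventually_ge_atTop N] with n hn
  have hn' : 1 / ((n : ℝ) + 1) ≤ 1 / ((N : ℝ) + 1) := one_div_le_one_div_of_le (by positivity) (by gcongr)
  exact H _ _ hl0 (hl n) hG0 ((hG n).trans (by linarith))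

theorem diff_near {T h t : ℝ} {X : ℝ → ℝ → ℝ} {F : ℝ → ℝ} (hT : 0 ≤ T)
    (hF : ∀ s, |s - t| < 1 → ∀ l, Valid T l → F s ≤ Psi l h - 1 / 2 * Lin (X s) l 0)
    (hex : ∀ s, |s - t| < 1 → ∀ ε > 0, ∃ l, Valid T l ∧ Psi l h - 1 / 2 * Lin (X s) l 0 ≤ F s + ε)
    (hX : ∀ s z, 0 ≤ z → z ≤ T → |X s z - X t z| ≤ |s ^ 2 - t ^ 2|)
    {f : ℝ → ℝ} (hf : ContinuousOn f (Set.Icc 0 T))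
    (hXf : ∀ ε > 0, ∃ ρ > 0, ∀ s, |s - t| < ρ → ∀ z, 0 ≤ z → z ≤ T →
      |X s z - X t z + (s ^ 2 - t ^ 2) * f z| ≤ ε * |s ^ 2 - t ^ 2|) :
    DifferentiableAt ℝ F t := by
  have ht1 : |t - t| < 1 := by simp
  obtain ⟨J, hJ⟩ := near_J hT (hF t ht1) (hex t ht1) hf
  -- main estimate
  have key : ∀ ε > 0, ∃ ρ > 0, ρ ≤ 1 ∧ ∀ s, |s - t| < ρ →
      |F s - F t - 1 / 2 * (s ^ 2 - t ^ 2) * J| ≤ (s - t) ^ 2 + 2 * ε * |s ^ 2 - t ^ 2| := by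
    intro ε hε
    obtain ⟨δ, hδ, HJ⟩ := hJ ε hε
    obtain ⟨ρ1, hρ1, H1⟩ := hXf ε hε
    have hcont : ∀ᶠ s in 𝓝 t, 2 * (s - t) ^ 2 + 2 * |s ^ 2 - t ^ 2| < δ := by
      have : Continuous (fun s : ℝ => 2 * (s - t) ^ 2 + 2 * |s ^ 2 - t ^ 2|) := by fun_prop
      have := this.tendsto t
      simp only [sub_self] at this
      exact this.eventually_lt_const (by simpa using hδ)
    obtain ⟨ρ2, hρ2, H2⟩ := Metric.eventually_nhds_iff.mp hcont
    refine ⟨min 1 (min ρ1 ρ2), lt_min one_pos (lt_min hρ1 hρ2), min_le_left _ _, ?_⟩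
    intro s hs
    have hs1 : |s - t| < 1 := hs.trans_le (min_le_left _ _)
    have hs2 : |s - t| < ρ1 := hs.trans_le ((min_le_right _ _).trans (min_le_left _ _))
    have hs3 : |s - t| < ρ2 := hs.trans_le ((min_le_right _ _).trans (min_le_right _ _))
    have H2 := H2 (y := s) (by rw [Real.dist_eq]; exact hs3)
    by_cases hst : s = t
    · subst hst; simp
    have hd : 0 < (s - t) ^ 2 := by have := sub_ne_zero.mpr hst; positivity
    have hlin : ∀ l, Valid T l → |Lin (X s) l 0 - Lin (X t) l 0 + (s ^ 2 - t ^ 2) * Lin f l 0| ≤ 2 * (ε * |s ^ 2 - t ^ 2|) := by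
      intro l hl
      have := Lin_diff_bd (X := fun z => X s z - X t z) (Y := fun z => (-(s ^ 2 - t ^ 2)) * f z) hl
        (M := ε * |s ^ 2 - t ^ 2|) (fun z h0 h1 => by
          have := H1 s hs2 z h0 h1
          rwa [show X s z - X t z - (-(s ^ 2 - t ^ 2)) * f z = X s z - X t z + (s ^ 2 - t ^ 2) * f z by ring])
      rw [Lin_sub, Lin_smul] at this
      rwa [show Lin (X s) l 0 - Lin (X t) l 0 + (s ^ 2 - t ^ 2) * Lin f l 0 =
        Lin (X s) l 0 - Lin (X t) l 0 - -(s ^ 2 - t ^ 2) * Lin f l 0 by ring]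
    have hfin : ∀ l, |Lin f l 0 - J| ≤ ε → |(s ^ 2 - t ^ 2) * Lin f l 0 - (s ^ 2 - t ^ 2) * J| ≤ ε * |s ^ 2 - t ^ 2| := by
      intro l hl
      rw [← mul_sub, abs_mul, mul_comm]; gcongr
    obtain ⟨l, hl, hG⟩ := hex t ht1 _ hd
    obtain ⟨l', hl', hG'⟩ := hex s hs1 _ hd
    have a1 := abs_le.mp (hlin l hl)
    have a2 := abs_le.mp (hfin l (HJ l hl (by have := abs_nonneg (s ^ 2 - t ^ 2); nlinarith)))
    have a3 := hF s hs1 l hl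
    have a4 := abs_le.mp (Lin_diff_bd hl' (hX s))
    have a4' := abs_le.mp (Lin_diff_bd hl (hX s))
    have b1 := abs_le.mp (hlin l' hl')
    have b2 := abs_le.mp (hfin l' (HJ l' hl' (by linarith)))
    have b3 := hF t ht1 l' hl'
    rw [abs_le]; constructor <;> linarith
  refine (show HasDerivAt F (t * J) t from ?_).differentiableAt
  rw [hasDerivAt_iff_isLittleO]
  rw [Asymptotics.isLittleO_iff]
  intro c hc
  obtain ⟨C, hC⟩ : ∃ C, C = 2 * |t| + 1 := ⟨_, rfl⟩
  have hCp : 0 < C := by rw [hC]; positivity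
  obtain ⟨ρ, hρ, hρ1, H⟩ := key (c / (4 * C)) (by positivity)
  have : ∀ᶠ s in 𝓝 t, |s - t| < min ρ (c / (2 * (1 + |J|))) := by
    rw [Metric.eventually_nhds_iff]
    exact ⟨min ρ (c / (2 * (1 + |J|))), lt_min hρ (by positivity), fun y hy => hy⟩
  filter_upwards [this] with s hs
  have hs1 : |s - t| < ρ := hs.trans_le (min_le_left _ _)
  have hs2 : |s - t| < c / (2 * (1 + |J|)) := hs.trans_le (min_le_right _ _)
  have H := H s hs1
  rw [smul_eq_mul, Real.norm_eq_abs, Real.norm_eq_abs]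
  have e1 : |s ^ 2 - t ^ 2| ≤ C * |s - t| := by
    rw [show s ^ 2 - t ^ 2 = (s + t) * (s - t) by ring, abs_mul]
    gcongr
    have : s + t = (s - t) + 2 * t := by ring
    rw [this]
    refine (abs_add_le _ _).trans ?_
    rw [abs_mul, hC]; simp only [abs_two]; linarith
  have e2 : 2 * (c / (4 * C)) * |s ^ 2 - t ^ 2| ≤ c / 2 * |s - t| := by
    calc _ ≤ 2 * (c / (4 * C)) * (C * |s - t|) := by gcongr
      _ = _ := by field_simp; ring
  have e3 : (s - t) ^ 2 = |s - t| * |s - t| := by rw [← sq_abs, pow_two]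
  have e4 : |s - t| * |s - t| * (1 + |J|) ≤ c / 2 * |s - t| := by
    rw [lt_div_iff₀ (by positivity)] at hs2
    nlinarith [abs_nonneg (s - t)]
  calc |F s - F t - (s - t) * (t * J)| = |(F s - F t - 1 / 2 * (s ^ 2 - t ^ 2) * J) + 1 / 2 * (s - t) ^ 2 * J| := by
        congr 1; ring
    _ ≤ |F s - F t - 1 / 2 * (s ^ 2 - t ^ 2) * J| + |1 / 2 * (s - t) ^ 2 * J| := abs_add_le _ _
    _ ≤ ((s - t) ^ 2 + c / 2 * |s - t|) + (s - t) ^ 2 * |J| := by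
        gcongr
        · linarith
        · rw [abs_mul, abs_of_nonneg (by positivity : (0 : ℝ) ≤ 1 / 2 * (s - t) ^ 2)]
          have : 0 ≤ (s - t) ^ 2 := by positivity
          gcongr; linarith
    _ ≤ _ := by rw [e3]; linarith

theorem diff_near_zero {T h : ℝ} {X : ℝ → ℝ → ℝ} {F : ℝ → ℝ}
    (hF : ∀ s, |s - 0| < 1 → ∀ l, Valid T l → F s ≤ Psi l h - 1 / 2 * Lin (X s) l 0)
    (hex : ∀ s, |s - 0| < 1 → ∀ ε > 0, ∃ l, Valid T l ∧ Psi l h - 1 / 2 * Lin (X s) l 0 ≤ F s + ε)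
    (hX : ∀ s z, 0 ≤ z → z ≤ T → |X s z - X 0 z| ≤ |s ^ 2 - 0 ^ 2|) :
    DifferentiableAt ℝ F 0 := by
  have ht1 : |(0 : ℝ) - 0| < 1 := by simp
  have key : ∀ s, |s - 0| < 1 → |F s - F 0| ≤ s ^ 2 := by
    intro s hs
    refine le_of_forall_pos_le_add fun ε hε => ?_
    obtain ⟨l, hl, hG⟩ := hex 0 ht1 _ hε
    obtain ⟨l', hl', hG'⟩ := hex s hs _ hε
    have a1 := abs_le.mp (Lin_diff_bd hl (hX s))
    have a2 := abs_le.mp (Lin_diff_bd hl' (hX s))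
    have a3 := hF s hs l hl
    have a4 := hF 0 ht1 l' hl'
    have : |s ^ 2 - 0 ^ 2| = s ^ 2 := by simp
    rw [this] at a1 a2
    rw [abs_le]; constructor <;> linarith
  refine (show HasDerivAt F 0 0 from ?_).differentiableAt
  rw [hasDerivAt_iff_isLittleO, Asymptotics.isLittleO_iff]
  intro c hc
  have : ∀ᶠ s in 𝓝 (0 : ℝ), |s - 0| < min 1 c := by
    rw [Metric.eventually_nhds_iff]
    exact ⟨min 1 c, lt_min one_pos hc, fun y hy => hy⟩
  filter_upwards [this] with s hs
  have h1 := key s (hs.trans_le (min_le_left _ _))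
  have h2 : |s - 0| < c := hs.trans_le (min_le_right _ _)
  simp only [sub_zero, smul_zero, Real.norm_eq_abs] at h1 h2 ⊢
  refine h1.trans ?_
  rw [← sq_abs, pow_two]; gcongr

/-! ### The Legendre transform of `ξ` -/

theorem pow_tangent {x q : ℝ} (hx : 0 ≤ x) (hq : 0 ≤ q) : ∀ n : ℕ, q ^ n + n * q ^ (n - 1) * (x - q) ≤ x ^ n
  | 0 => by simp
  | 1 => by simp
  | n + 2 => by
    have ih := pow_tangent hx hq (n + 1)
    have h1 := mul_le_mul_of_nonneg_left ih hx
    have h2 : 0 ≤ ((n : ℝ) + 1) * q ^ n * (x - q) ^ 2 := by positivity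
    simp only [Nat.add_sub_cancel, show n + 2 - 1 = n + 1 by omega] at *
    push_cast at *
    calc _ ≤ x * (q ^ (n + 1) + (n + 1) * q ^ n * (x - q)) := by
          have : x * (q ^ (n + 1) + (n + 1) * q ^ n * (x - q)) - (q ^ (n + 2) + (n + 2) * q ^ (n + 1) * (x - q)) =
            ((n : ℝ) + 1) * q ^ n * (x - q) ^ 2 := by ring
          linarith
      _ ≤ _ := by rw [pow_succ' x (n + 1)]; exact h1

theorem pow_mid {x y : ℝ} (hx : 0 ≤ x) (hy : 0 ≤ y) (n : ℕ) : ((x + y) / 2) ^ n ≤ 1 / 2 * x ^ n + 1 / 2 * y ^ n := by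
  have h1 := pow_tangent (q := (x + y) / 2) hx (by positivity) n
  have h2 := pow_tangent (q := (x + y) / 2) hy (by positivity) n
  have e : (n : ℝ) * ((x + y) / 2) ^ (n - 1) * (x - (x + y) / 2) = - (n * ((x + y) / 2) ^ (n - 1) * (y - (x + y) / 2)) := by ring
  linarith

theorem pow_mid_strict_aux {M d : ℝ} (hd : 0 ≤ d) (hM : d ≤ M) : ∀ n : ℕ,
    M ^ (n + 2) + d ^ (n + 2) ≤ 1 / 2 * (M + d) ^ (n + 2) + 1 / 2 * (M - d) ^ (n + 2) ∧
    (M - d) ^ (n + 2) ≤ (M + d) ^ (n + 2)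
  | 0 => ⟨by nlinarith, pow_le_pow_left₀ (by linarith) (by linarith) _⟩
  | n + 1 => by
    obtain ⟨h1, h2⟩ := pow_mid_strict_aux hd hM n
    refine ⟨?_, pow_le_pow_left₀ (by linarith) (by linarith) _⟩
    have hM0 := hd.trans hM
    have h3 := mul_le_mul_of_nonneg_left h1 hM0
    have h4 := mul_le_mul_of_nonneg_left h2 hd
    have h5 : d * d ^ (n + 2) ≤ M * d ^ (n + 2) := by gcongr
    rw [show n + 1 + 2 = (n + 2) + 1 by ring, pow_succ' M, pow_succ' d, pow_succ' (M + d), pow_succ' (M - d)]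
    nlinarith

theorem pow_mid_strict {x y : ℝ} (hx : 0 ≤ x) (hy : 0 ≤ y) {n : ℕ} (hn : 2 ≤ n) :
    ((x + y) / 2) ^ n + (|x - y| / 2) ^ n ≤ 1 / 2 * x ^ n + 1 / 2 * y ^ n := by
  obtain ⟨n, rfl⟩ := Nat.exists_eq_add_of_le' hn
  rcases le_total y x with h | h
  · have := (pow_mid_strict_aux (M := (x + y) / 2) (d := (x - y) / 2) (by linarith) (by linarith) n).1
    rw [abs_of_nonneg (by linarith)]
    rwa [show (x + y) / 2 + (x - y) / 2 = x by ring, show (x + y) / 2 - (x - y) / 2 = y by ring] at this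
  · have := (pow_mid_strict_aux (M := (x + y) / 2) (d := (y - x) / 2) (by linarith) (by linarith) n).1
    rw [abs_of_nonpos (by linarith), show -(x - y) = y - x by ring]
    rw [show (x + y) / 2 + (y - x) / 2 = y by ring, show (x + y) / 2 - (y - x) / 2 = x by ring] at this
    linarith

theorem xi_cont (S : Finset ℕ) (b : ℕ → ℝ) : Continuous (xiFn S b) := by unfold xiFn; fun_prop
theorem xi'_cont (S : Finset ℕ) (b : ℕ → ℝ) : Continuous (xiFn' S b) := by unfold xiFn'; fun_prop

theorem xi_tangent (S : Finset ℕ) (b : ℕ → ℝ) {x q : ℝ} (hx : 0 ≤ x) (hq : 0 ≤ q) :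
    xiFn S b q + xiFn' S b q * (x - q) ≤ xiFn S b x := by
  unfold xiFn xiFn'
  rw [Finset.sum_mul, ← Finset.sum_add_distrib]
  refine Finset.sum_le_sum fun p _ => ?_
  have := mul_le_mul_of_nonneg_left (pow_tangent hx hq p) (sq_nonneg (b p))
  linarith

theorem xi_mid (S : Finset ℕ) (b : ℕ → ℝ) {x y : ℝ} (hx : 0 ≤ x) (hy : 0 ≤ y) {n : ℕ} (hn : 2 ≤ n) (hnS : n ∈ S) :
    xiFn S b ((x + y) / 2) + b n ^ 2 * (|x - y| / 2) ^ n ≤ 1 / 2 * xiFn S b x + 1 / 2 * xiFn S b y := by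
  unfold xiFn
  rw [← Finset.add_sum_erase S _ hnS, ← Finset.add_sum_erase S _ hnS, ← Finset.add_sum_erase S _ hnS]
  have h1 := mul_le_mul_of_nonneg_left (pow_mid_strict hx hy hn) (sq_nonneg (b n))
  have h2 : ∑ p ∈ S.erase n, b p ^ 2 * ((x + y) / 2) ^ p ≤
      1 / 2 * ∑ p ∈ S.erase n, b p ^ 2 * x ^ p + 1 / 2 * ∑ p ∈ S.erase n, b p ^ 2 * y ^ p := by
    rw [Finset.mul_sum, Finset.mul_sum, ← Finset.sum_add_distrib]
    refine Finset.sum_le_sum fun p _ => ?_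
    have := mul_le_mul_of_nonneg_left (pow_mid hx hy p) (sq_nonneg (b p))
    linarith
  linarith

theorem xi_zero {S : Finset ℕ} (hS : ∀ p ∈ S, 0 < p) (b : ℕ → ℝ) : xiFn S b 0 = 0 := by
  unfold xiFn
  exact Finset.sum_eq_zero fun p hp => by rw [zero_pow (hS p hp).ne']; simp

theorem xi_nonneg (S : Finset ℕ) (b : ℕ → ℝ) {x : ℝ} (hx : 0 ≤ x) : 0 ≤ xiFn S b x :=
  Finset.sum_nonneg fun p _ => by positivity

theorem xi_le_one (S : Finset ℕ) (b : ℕ → ℝ) {x : ℝ} (hx : 0 ≤ x) (hx1 : x ≤ 1) : xiFn S b x ≤ xiFn S b 1 :=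
  Finset.sum_le_sum fun p _ => by gcongr

theorem xi'_mono (S : Finset ℕ) (b : ℕ → ℝ) {x y : ℝ} (hx : 0 ≤ x) (hxy : x ≤ y) : xiFn' S b x ≤ xiFn' S b y :=
  Finset.sum_le_sum fun p _ => by gcongr

theorem xi'_nonneg (S : Finset ℕ) (b : ℕ → ℝ) {x : ℝ} (hx : 0 ≤ x) : 0 ≤ xiFn' S b x :=
  Finset.sum_nonneg fun p _ => by positivity

theorem exists_arg (S : Finset ℕ) (b : ℕ → ℝ) (t : ℝ) :
    ∃ x ∈ Set.Icc (0 : ℝ) 1, ∀ y ∈ Set.Icc (0 : ℝ) 1, y * t - xiFn S b y ≤ x * t - xiFn S b x := by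
  obtain ⟨x, hx, hm⟩ := (isCompact_Icc (a := (0 : ℝ)) (b := 1)).exists_isMaxOn ⟨0, by simp⟩
    (f := fun y => y * t - xiFn S b y) (by have := xi_cont S b; fun_prop)
  exact ⟨x, hx, fun y hy => hm hy⟩

def xarg (S : Finset ℕ) (b : ℕ → ℝ) (t : ℝ) : ℝ := (exists_arg S b t).choose
theorem xarg_mem (S : Finset ℕ) (b : ℕ → ℝ) (t : ℝ) : xarg S b t ∈ Set.Icc (0 : ℝ) 1 := (exists_arg S b t).choose_spec.1

def Xf (S : Finset ℕ) (b : ℕ → ℝ) (t : ℝ) : ℝ := xarg S b t * t - xiFn S b (xarg S b t)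

theorem le_Xf (S : Finset ℕ) (b : ℕ → ℝ) (t : ℝ) {y : ℝ} (h0 : 0 ≤ y) (h1 : y ≤ 1) : y * t - xiFn S b y ≤ Xf S b t :=
  (exists_arg S b t).choose_spec.2 y ⟨h0, h1⟩

theorem Xf_theta (S : Finset ℕ) (b : ℕ → ℝ) {q : ℝ} (h0 : 0 ≤ q) (h1 : q ≤ 1) : Xf S b (xiFn' S b q) = thetaFn S b q := by
  apply le_antisymm
  · have := xi_tangent S b (xarg_mem S b (xiFn' S b q)).1 h0
    unfold Xf thetaFn
    linarith
  · exact le_Xf S b _ h0 h1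

theorem Xf_large (S : Finset ℕ) (b : ℕ → ℝ) {t : ℝ} (ht : xiFn' S b 1 ≤ t) : Xf S b t = t - xiFn S b 1 := by
  apply le_antisymm
  · have h := xarg_mem S b t
    have := xi_tangent S b h.1 zero_le_one
    unfold Xf
    nlinarith [h.1, h.2]
  · have := le_Xf S b t zero_le_one le_rfl; linarith

theorem Xf_small {S : Finset ℕ} (hS : ∀ p ∈ S, 0 < p) (b : ℕ → ℝ) {t : ℝ} (ht : t ≤ xiFn' S b 0) : Xf S b t = 0 := by
  apply le_antisymm
  · have h := xarg_mem S b t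
    have := xi_tangent S b h.1 le_rfl
    rw [xi_zero hS] at this
    unfold Xf
    nlinarith [h.1, h.2]
  · have := le_Xf S b t le_rfl zero_le_one; rw [xi_zero hS] at this; linarith

theorem Xf_bd (S : Finset ℕ) (b : ℕ → ℝ) {t T : ℝ} (h0 : 0 ≤ t) (h1 : t ≤ T) : |Xf S b t| ≤ T + xiFn S b 1 := by
  have h := xarg_mem S b t
  have a := xi_nonneg S b h.1
  have c := xi_le_one S b h.1 h.2
  have d : 0 ≤ xarg S b t * t := mul_nonneg h.1 h0
  have e : xarg S b t * t ≤ t := by nlinarith [h.2]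
  unfold Xf
  rw [abs_le]; constructor <;> linarith

theorem xi_update {S : Finset ℕ} (b : ℕ → ℝ) {p : ℕ} (hp : p ∈ S) (s t x : ℝ) :
    xiFn S (Function.update b p s) x - xiFn S (Function.update b p t) x = (s ^ 2 - t ^ 2) * x ^ p := by
  unfold xiFn
  rw [← Finset.add_sum_erase S _ hp, ← Finset.add_sum_erase S _ hp]
  have : ∀ r, ∑ i ∈ S.erase p, Function.update b p r i ^ 2 * x ^ i = ∑ i ∈ S.erase p, b i ^ 2 * x ^ i := fun r =>
    Finset.sum_congr rfl fun i hi => by rw [Function.update_of_ne (Finset.ne_of_mem_erase hi)]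
  rw [this, this]; simp; ring

theorem xi'_update_le {S : Finset ℕ} (b : ℕ → ℝ) {p : ℕ} (hp : p ∈ S) {s t x : ℝ} (hx : 0 ≤ x) (hst : s ^ 2 ≤ t ^ 2) :
    xiFn' S (Function.update b p s) x ≤ xiFn' S (Function.update b p t) x := by
  unfold xiFn'
  refine Finset.sum_le_sum fun i _ => ?_
  by_cases h : i = p
  · subst h; simp only [Function.update_self]; gcongr
  · rw [Function.update_of_ne h, Function.update_of_ne h]

theorem Xf_low {S : Finset ℕ} (b : ℕ → ℝ) {p : ℕ} (hp : p ∈ S) (s t z : ℝ) :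
    0 ≤ Xf S (Function.update b p s) z - Xf S (Function.update b p t) z +
      (s ^ 2 - t ^ 2) * xarg S (Function.update b p t) z ^ p := by
  have h := xarg_mem S (Function.update b p t) z
  have h1 := le_Xf S (Function.update b p s) z h.1 h.2
  have h2 := xi_update b hp s t (xarg S (Function.update b p t) z)
  have h3 : Xf S (Function.update b p t) z = _ := rfl
  unfold Xf at h3
  rw [show Xf S (Function.update b p t) z = xarg S (Function.update b p t) z * z - xiFn S (Function.update b p t) (xarg S (Function.update b p t) z) from rfl]
  linarith

theorem Xf_close {S : Finset ℕ} (b : ℕ → ℝ) {p : ℕ} (hp : p ∈ S) (s t z : ℝ) :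
    |Xf S (Function.update b p s) z - Xf S (Function.update b p t) z| ≤ |s ^ 2 - t ^ 2| := by
  have key : ∀ s t : ℝ, -|s ^ 2 - t ^ 2| ≤ Xf S (Function.update b p s) z - Xf S (Function.update b p t) z := by
    intro s t
    have h1 := Xf_low b hp s t z
    have h := xarg_mem S (Function.update b p t) z
    have h2 : xarg S (Function.update b p t) z ^ p ≤ 1 := pow_le_one₀ h.1 h.2
    have h3 : 0 ≤ xarg S (Function.update b p t) z ^ p := pow_nonneg h.1 _
    have h4 : |(s ^ 2 - t ^ 2) * xarg S (Function.update b p t) z ^ p| ≤ |s ^ 2 - t ^ 2| := by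
      rw [abs_mul, abs_of_nonneg h3]; exact mul_le_of_le_one_right (abs_nonneg _) h2
    linarith [le_abs_self ((s ^ 2 - t ^ 2) * xarg S (Function.update b p t) z ^ p)]
  rw [abs_le]
  refine ⟨key s t, ?_⟩
  have := key t s
  rw [abs_sub_comm] at this; linarith

theorem xarg_stab {S : Finset ℕ} (b : ℕ → ℝ) {p n : ℕ} (hp : p ∈ S) (hn : 2 ≤ n) (hnS : n ∈ S) (s t z z' : ℝ) :
    Function.update b p t n ^ 2 * (|xarg S (Function.update b p t) z - xarg S (Function.update b p s) z'| / 2) ^ n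
      ≤ |z - z'| + |s ^ 2 - t ^ 2| := by
  obtain ⟨A, hA⟩ : ∃ A, A = xarg S (Function.update b p t) z := ⟨_, rfl⟩
  obtain ⟨C, hC⟩ : ∃ C, C = xarg S (Function.update b p s) z' := ⟨_, rfl⟩
  have hAm := xarg_mem S (Function.update b p t) z
  have hCm := xarg_mem S (Function.update b p s) z'
  have e1 : Xf S (Function.update b p t) z = A * z - xiFn S (Function.update b p t) A := by rw [hA]; rfl
  have e2 : Xf S (Function.update b p s) z' = C * z' - xiFn S (Function.update b p s) C := by rw [hC]; rfl
  rw [← hA] at *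
  rw [← hC] at *
  have h1 := xi_mid S (Function.update b p t) hAm.1 hCm.1 hn hnS
  have h2 := le_Xf S (Function.update b p t) z (y := (A + C) / 2) (by linarith [hAm.1, hCm.1]) (by linarith [hAm.2, hCm.2])
  have h3 := le_Xf S (Function.update b p s) z' hAm.1 hAm.2
  have h4 := xi_update b hp s t A
  have h5 := xi_update b hp s t C
  rw [e1] at h2
  rw [e2] at h3
  have h6 : (A - C) * (z - z') ≤ |z - z'| := by
    refine (le_abs_self _).trans ?_
    rw [abs_mul]
    refine mul_le_of_le_one_left (abs_nonneg _) ?_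
    rw [abs_le]; constructor <;> linarith [hAm.1, hAm.2, hCm.1, hCm.2]
  have h7 : (s ^ 2 - t ^ 2) * (A ^ p - C ^ p) ≤ |s ^ 2 - t ^ 2| := by
    refine (le_abs_self _).trans ?_
    rw [abs_mul]
    refine mul_le_of_le_one_right (abs_nonneg _) ?_
    have a1 : A ^ p ≤ 1 := pow_le_one₀ hAm.1 hAm.2
    have a2 : C ^ p ≤ 1 := pow_le_one₀ hCm.1 hCm.2
    have a3 : 0 ≤ A ^ p := pow_nonneg hAm.1 _
    have a4 : 0 ≤ C ^ p := pow_nonneg hCm.1 _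
    rw [abs_le]; constructor <;> linarith
  have h8 := abs_nonneg (z - z')
  have h9 := abs_nonneg (s ^ 2 - t ^ 2)
  nlinarith

theorem xarg_unif {S : Finset ℕ} (b : ℕ → ℝ) {p n : ℕ} (hp : p ∈ S) (hn : 2 ≤ n) (hnS : n ∈ S) {t : ℝ}
    (hne : Function.update b p t n ≠ 0) {ε : ℝ} (hε : 0 < ε) :
    ∃ ρ > 0, ∀ s z z', |z - z'| + |s ^ 2 - t ^ 2| < ρ →
      |xarg S (Function.update b p t) z ^ p - xarg S (Function.update b p s) z' ^ p| ≤ ε := by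
  obtain ⟨c, hc⟩ : ∃ c, c = Function.update b p t n ^ 2 := ⟨_, rfl⟩
  have hcp : 0 < c := by rw [hc]; positivity
  obtain ⟨e, he⟩ : ∃ e, e = ε / (p + 1) := ⟨_, rfl⟩
  have hep : 0 < e := by rw [he]; positivity
  refine ⟨c * (e / 2) ^ n, by positivity, ?_⟩
  intro s z z' h
  have h1 := (xarg_stab b hp hn hnS s t z z').trans_lt h
  have hA := xarg_mem S (Function.update b p t) z
  have hC := xarg_mem S (Function.update b p s) z'
  rw [← hc] at h1
  have h2 := lt_of_mul_lt_mul_left h1 hcp.le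
  have h3 := lt_of_pow_lt_pow_left₀ n (by positivity) h2
  have h4 : |xarg S (Function.update b p t) z - xarg S (Function.update b p s) z'| ≤ e := by linarith
  have h5 : ∀ x y : ℝ, 0 ≤ x → x ≤ 1 → 0 ≤ y → y ≤ 1 → |x ^ p - y ^ p| ≤ p * |x - y| := by
    intro x y hx hx1 hy hy1
    have k : ∀ x y : ℝ, 0 ≤ x → x ≤ 1 → 0 ≤ y → y ≤ 1 → -(p * |x - y|) ≤ x ^ p - y ^ p := by
      intro x y hx hx1 hy hy1
      have := pow_tangent hx hy p
      have a1 : y ^ (p - 1) ≤ 1 := pow_le_one₀ hy hy1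
      have a2 : |(p : ℝ) * y ^ (p - 1) * (x - y)| ≤ p * |x - y| := by
        rw [abs_mul, abs_of_nonneg (by positivity)]
        gcongr
        exact mul_le_of_le_one_right (by positivity) a1
      have := (abs_le.mp a2).1
      linarith
    have k1 := k x y hx hx1 hy hy1
    have k2 := k y x hy hy1 hx hx1
    rw [abs_sub_comm] at k2
    rw [abs_le]; constructor <;> linarith
  refine (h5 _ _ hA.1 hA.2 hC.1 hC.2).trans ?_
  calc (p : ℝ) * |xarg S (Function.update b p t) z - xarg S (Function.update b p s) z'| ≤ (p + 1) * e := by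
        gcongr; linarith
    _ = ε := by rw [he]; field_simp

theorem xarg_cont {S : Finset ℕ} (b : ℕ → ℝ) {p n : ℕ} (hp : p ∈ S) (hn : 2 ≤ n) (hnS : n ∈ S) {t : ℝ}
    (hne : Function.update b p t n ≠ 0) : Continuous (fun z => xarg S (Function.update b p t) z ^ p) := by
  rw [Metric.continuous_iff]
  intro z ε hε
  obtain ⟨ρ, hρ, H⟩ := xarg_unif b hp hn hnS hne (half_pos hε)
  refine ⟨ρ, hρ, fun y hy => ?_⟩
  have := H t y z (by simpa [Real.dist_eq] using hy)
  rw [Real.dist_eq]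
  exact this.trans_lt (by linarith)

theorem Xf_diff {S : Finset ℕ} (b : ℕ → ℝ) {p n : ℕ} (hp : p ∈ S) (hn : 2 ≤ n) (hnS : n ∈ S) {t : ℝ}
    (hne : Function.update b p t n ≠ 0) {ε : ℝ} (hε : 0 < ε) :
    ∃ ρ > 0, ∀ s, |s - t| < ρ → ∀ z,
      |Xf S (Function.update b p s) z - Xf S (Function.update b p t) z +
        (s ^ 2 - t ^ 2) * xarg S (Function.update b p t) z ^ p| ≤ ε * |s ^ 2 - t ^ 2| := by
  obtain ⟨ρ, hρ, H⟩ := xarg_unif b hp hn hnS hne hε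
  have hcont : ∀ᶠ s in 𝓝 t, |s ^ 2 - t ^ 2| < ρ := by
    have : Continuous (fun s : ℝ => |s ^ 2 - t ^ 2|) := by fun_prop
    have := this.tendsto t
    simp only [sub_self] at this
    exact this.eventually_lt_const (by simpa using hρ)
  obtain ⟨ρ2, hρ2, H2⟩ := Metric.eventually_nhds_iff.mp hcont
  refine ⟨ρ2, hρ2, fun s hs z => ?_⟩
  have h2 : |s ^ 2 - t ^ 2| < ρ := H2 (y := s) hs
  have h3 := H s z z (by simpa using h2)
  have l1 := Xf_low b hp s t z
  have l2 := Xf_low b hp t s z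
  rw [abs_of_nonneg l1]
  have h4 : (s ^ 2 - t ^ 2) * (xarg S (Function.update b p t) z ^ p - xarg S (Function.update b p s) z ^ p) ≤ ε * |s ^ 2 - t ^ 2| := by
    refine (le_abs_self _).trans ?_
    rw [abs_mul, mul_comm]; gcongr
  linarith

/-! ### Lists from sequences -/

def lf (m τ : ℕ → ℝ) : ℕ → ℕ → List (ℝ × ℝ)
  | _, 0 => []
  | i, n + 1 => (m (i + 1), τ (i + 1) - τ i) :: lf m τ (i + 1) n

theorem lf_congr {m m' τ τ' : ℕ → ℝ} : ∀ (n i : ℕ), (∀ j, i < j → j ≤ i + n → m j = m' j) →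
    (∀ j, i ≤ j → j ≤ i + n → τ j = τ' j) → lf m τ i n = lf m' τ' i n
  | 0, i, _, _ => rfl
  | n + 1, i, h1, h2 => by
    simp only [lf]
    rw [lf_congr n (i + 1) (fun j hj hj' => h1 j (by omega) (by omega)) (fun j hj hj' => h2 j (by omega) (by omega)),
      h1 (i + 1) (by omega) (by omega), h2 (i + 1) (by omega) (by omega), h2 i (by omega) (by omega)]

theorem lf_last (m τ : ℕ → ℝ) : ∀ (n i : ℕ), lf m τ i (n + 1) = lf m τ i n ++ [(m (i + n + 1), τ (i + n + 1) - τ (i + n))]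
  | 0, i => rfl
  | n + 1, i => by
    rw [lf, lf_last m τ n (i + 1), lf, List.cons_append, show i + 1 + n = i + (n + 1) by ring]

theorem lf_mem {m τ : ℕ → ℝ} {c : ℝ × ℝ} : ∀ (n i : ℕ), c ∈ lf m τ i n →
    ∃ j, i ≤ j ∧ j < i + n ∧ c = (m (j + 1), τ (j + 1) - τ j)
  | 0, i, h => by simp [lf] at h
  | n + 1, i, h => by
    rcases List.mem_cons.mp h with h | h
    · exact ⟨i, le_rfl, by omega, h⟩
    · obtain ⟨j, h1, h2, h3⟩ := lf_mem n (i + 1) h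
      exact ⟨j, by omega, by omega, h3⟩

theorem lf_srt {m τ : ℕ → ℝ} : ∀ (n i : ℕ), (∀ j, i < j → j < i + n → m j ≤ m (j + 1)) → Srt (lf m τ i n)
  | 0, i, h => List.Pairwise.nil
  | n + 1, i, h => by
    refine List.pairwise_cons.mpr ⟨?_, lf_srt n (i + 1) fun j h1 h2 => h j (by omega) (by omega)⟩
    intro c hc
    obtain ⟨j, h1, h2, rfl⟩ := lf_mem n (i + 1) hc
    have : ∀ d, i + 1 + d ≤ i + n → m (i + 1) ≤ m (i + 1 + d + 1) := by
      intro d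
      induction d with
      | zero => intro hd; exact h (i + 1) (by omega) (by omega)
      | succ d ih => intro hd; exact (ih (by omega)).trans (h (i + 1 + d + 1) (by omega) (by omega))
    have := this (j - (i + 1)) (by omega)
    rwa [show i + 1 + (j - (i + 1)) = j by omega] at this

theorem lf_tot (m τ : ℕ → ℝ) : ∀ (n i : ℕ), tot (lf m τ i n) = τ (i + n) - τ i
  | 0, i => by simp [lf, tot]
  | n + 1, i => by
    simp only [lf, tot]; rw [lf_tot m τ n (i + 1), show i + 1 + n = i + (n + 1) by ring]; ring

theorem lf_Lin (X : ℝ → ℝ) (m τ : ℕ → ℝ) : ∀ (n i : ℕ),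
    Lin X (lf m τ i n) (τ i) = ∑ l ∈ Finset.Ico i (i + n), m (l + 1) * (X (τ (l + 1)) - X (τ l))
  | 0, i => by simp [lf, Lin]
  | n + 1, i => by
    simp only [lf, Lin]
    rw [show τ i + (τ (i + 1) - τ i) = τ (i + 1) by ring, lf_Lin X m τ n (i + 1),
      Finset.sum_eq_sum_Ico_succ_bot (by omega : i < i + (n + 1)), show i + 1 + n = i + (n + 1) by ring]

theorem Lin_append (X : ℝ → ℝ) (l' : List (ℝ × ℝ)) : ∀ (l : List (ℝ × ℝ)) (t : ℝ),
    Lin X (l ++ l') t = Lin X l t + Lin X l' (t + tot l)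
  | [], t => by simp [Lin, tot]
  | c :: l, t => by
    simp only [List.cons_append, Lin, tot]; rw [Lin_append X l' l, add_assoc t]; ring

theorem tot_append (l' : List (ℝ × ℝ)) : ∀ (l : List (ℝ × ℝ)), tot (l ++ l') = tot l + tot l'
  | [] => by simp [tot]
  | c :: l => by simp only [List.cons_append, tot]; rw [tot_append l' l, add_assoc]

theorem lc_lip : Lip1 lc := Psi_lip (l := []) (by intro c hc; simp at hc)

theorem exp_mul_lc (m z : ℝ) : exp (m * lc z) = cosh z ^ m := by
  rw [Real.rpow_def_of_pos (cosh_pos z), lc, mul_comm]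

theorem TO_one_lc {τ : ℝ} (hτ : 0 ≤ τ) (x : ℝ) : TO 1 τ lc x = lc x + τ / 2 := by
  unfold TO
  have : ∀ y, exp (1 * lc (x + y)) = exp x / 2 * exp (1 * y) + exp (-x) / 2 * exp ((-1) * y) := by
    intro y
    rw [exp_mul_lc, Real.rpow_one, cosh_eq, neg_add, exp_add, exp_add, one_mul, neg_one_mul]; ring
  simp only [this]
  rw [integral_add, integral_const_mul, integral_const_mul, gauss_exp _ _ hτ, gauss_exp _ _ hτ]
  · rw [show exp x / 2 * exp (1 ^ 2 * τ / 2) + exp (-x) / 2 * exp ((-1) ^ 2 * τ / 2) = cosh x * exp (τ / 2) by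
      rw [cosh_eq]; norm_num; ring]
    rw [Real.log_mul (cosh_pos x).ne' (exp_pos _).ne', Real.log_exp, lc]; ring
  · exact (integrable_exp_mul_gaussianReal 1).const_mul _
  · exact (integrable_exp_mul_gaussianReal (-1)).const_mul _

theorem TO_lc_ge {m w : ℝ} (hm : 0 < m) (hm1 : m ≤ 1) (hw : 0 ≤ w) (x : ℝ) : lc x + m * w / 2 ≤ TO m w lc x := by
  have hc := cosh_pos x
  have i1 : Integrable (fun y => exp (m * y)) (gauss w) := integrable_exp_mul_gaussianReal m
  have i2 : Integrable (fun y => exp ((-m) * y)) (gauss w) := integrable_exp_mul_gaussianReal (-m)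
  obtain ⟨r, hr⟩ : ∃ r, r = exp x / (2 * cosh x) := ⟨_, rfl⟩
  have hr0 : 0 ≤ r := by rw [hr]; positivity
  have hr1 : 1 - r = exp (-x) / (2 * cosh x) := by rw [hr, cosh_eq]; field_simp; ring
  have hr2 : 0 ≤ 1 - r := by rw [hr1]; positivity
  have hpt : ∀ y, cosh x ^ m * (r * exp (m * y) + (1 - r) * exp ((-m) * y)) ≤ exp (m * lc (x + y)) := by
    intro y
    have e1 : cosh (x + y) = cosh x * (r * exp y + (1 - r) * exp (-y)) := by
      rw [hr1, hr]
      have e : cosh x * (exp x / (2 * cosh x) * exp y + exp (-x) / (2 * cosh x) * exp (-y)) =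
        (exp x * exp y + exp (-x) * exp (-y)) / 2 := by field_simp
      rw [e, cosh_eq, neg_add, exp_add, exp_add]
    rw [exp_mul_lc, e1, Real.mul_rpow hc.le (by positivity)]
    gcongr
    have := (Real.concaveOn_rpow hm.le hm1).2 (Set.mem_Ici.mpr (exp_pos y).le) (Set.mem_Ici.mpr (exp_pos (-y)).le)
      hr0 hr2 (by ring)
    simp only [smul_eq_mul] at this
    rw [← Real.exp_mul, ← Real.exp_mul] at this
    rw [mul_comm m y, show -m * y = -y * m by ring]; exact this
  have hmono_int := integral_mono (((i1.const_mul r).add (i2.const_mul (1 - r))).const_mul (cosh x ^ m))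
    (((lc_lip.shift x).eg_exp m).integrable w) hpt
  simp only [Pi.add_apply] at hmono_int
  rw [integral_const_mul, integral_add (i1.const_mul r) (i2.const_mul (1 - r)), integral_const_mul, integral_const_mul,
    gauss_exp _ _ hw, gauss_exp _ _ hw, neg_sq, ← add_mul, show r + (1 - r) = 1 by ring, one_mul] at hmono_int
  have hpos : 0 < cosh x ^ m * exp (m ^ 2 * w / 2) := by positivity
  have hlog := Real.log_le_log hpos hmono_int
  rw [Real.log_mul (by positivity) (exp_pos _).ne', Real.log_exp, Real.log_rpow hc] at hlog
  unfold TO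
  rw [one_div, inv_mul_eq_div, le_div_iff₀ hm]
  unfold lc at *
  linarith

theorem Psi_append_one {τ : ℝ} (hτ : 0 ≤ τ) : ∀ (l : List (ℝ × ℝ)), Ok l →
    Psi (l ++ [(1, τ)]) = fun x => Psi l x + τ / 2
  | [], _ => by ext x; simp only [List.nil_append, Psi]; exact TO_one_lc hτ x
  | c :: l, h => by
    ext x
    simp only [List.cons_append, Psi]
    rw [Psi_append_one hτ l h.tail, TO_add_const h.head.1 (Psi_lip h.tail)]

theorem TO_small {A : ℝ → ℝ} (hA : Lip1 A) (v x : ℝ) {ε M : ℝ} (hε : 0 < ε) (hM : 0 < M) :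
    ∃ η, 0 < η ∧ η ≤ M ∧ TO η v A x ≤ ∫ y, A (x + y) ∂(gauss v) + ε := by
  have hset : integrableExpSet (fun y => A (x + y)) (gauss v) = Set.univ := by
    ext t; simp only [integrableExpSet, Set.mem_ofPred_eq, Set.mem_univ, iff_true]
    exact ((hA.shift x).eg_exp t).integrable v
  have hd := hasDerivAt_mgf (X := fun y => A (x + y)) (μ := gauss v) (t := 0) (by rw [hset]; simp)
  have hd2 := hd.log (by simp)
  simp only [zero_mul, exp_zero, mul_one, mgf_zero, div_one] at hd2
  have hs := hd2.tendsto_slope_zero_right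
  simp only [zero_add, mgf_zero, Real.log_one, sub_zero, smul_eq_mul] at hs
  have h1 : ∀ᶠ η in 𝓝[>] (0 : ℝ), η ≤ M := (eventually_le_nhds hM).filter_mono nhdsWithin_le_nhds
  obtain ⟨η, ⟨h2, h3⟩, h4⟩ := ((hs.eventually_le_const (lt_add_of_pos_right _ hε)).and h1 |>.and self_mem_nhdsWithin).exists
  refine ⟨η, h4, h3, ?_⟩
  unfold TO
  rw [one_div]; exact h2

theorem parisiB_eq {m v τ : ℕ → ℝ} {k : ℕ} (hv : ∀ l, 1 ≤ l → l ≤ k → v l = τ l - τ (l - 1)) : ∀ j, j ≤ k →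
    parisiB m v k j = Psi (lf m τ (k - j) j)
  | 0, _ => by ext x; rfl
  | j + 1, hj => by
    ext x
    simp only [parisiB, lf, Psi]
    have e : k - (j + 1) + 1 = k - j := by omega
    rw [e, parisiB_eq hv j (by omega), hv (k - j) (by omega) (by omega), show k - j - 1 = k - (j + 1) by omega]
    rfl

theorem OrderParam.m_le {k : ℕ} (op : OrderParam k) : ∀ d l, l + d = k → op.m l ≤ 1
  | 0, l, h => by rw [show l = k by omega, op.m_last]
  | d + 1, l, h => (op.m_mono l (by omega)).trans (OrderParam.m_le op d (l + 1) (by omega))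

theorem OrderParam.q_le {k : ℕ} (op : OrderParam k) : ∀ d l, l + d = k + 1 → op.q l ≤ 1
  | 0, l, h => by rw [show l = k + 1 by omega, op.q_last]
  | d + 1, l, h => (op.q_mono l (by omega)).trans (OrderParam.q_le op d (l + 1) (by omega))

theorem OrderParam.q_nn {k : ℕ} (op : OrderParam k) : ∀ l, l ≤ k + 1 → 0 ≤ op.q l
  | 0, _ => op.q_zero.ge
  | l + 1, h => (OrderParam.q_nn op l (by omega)).trans (op.q_mono l (by omega))

/-- The Parisi functional through lists. -/
theorem parisiP_eq {S : Finset ℕ} (h : ℝ) (b : ℕ → ℝ) {k : ℕ} (op : OrderParam k) :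
    parisiP S h b op = (∫ y, Psi (lf op.m (fun i => xiFn' S b (op.q (i + 1))) 0 k) (h + y) ∂(gauss (xiFn' S b (op.q 1))))
      - 1 / 2 * Lin (Xf S b) (lf op.m (fun i => xiFn' S b (op.q (i + 1))) 0 k) (xiFn' S b (op.q 1)) := by
  have h1 : parisiB op.m (opVar S b op) k k = Psi (lf op.m (fun i => xiFn' S b (op.q (i + 1))) 0 k) := by
    rw [parisiB_eq (τ := fun i => xiFn' S b (op.q (i + 1))) (fun l hl hlk => ?_) k le_rfl, Nat.sub_self]
    unfold opVar
    rw [if_neg (by omega)]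
    rw [show l - 1 + 1 = l by omega]
  have h2 := lf_Lin (Xf S b) op.m (fun i => xiFn' S b (op.q (i + 1))) k 0
  simp only [zero_add] at h2
  unfold parisiP
  rw [h1, h2]
  have h3 : opVar S b op 0 = xiFn' S b (op.q 1) := by unfold opVar; simp
  rw [h3]
  congr 1
  · congr 1
    rw [show Finset.Icc 1 k = Finset.Ico (0 + 1) (k + 1) by ext; simp,
      ← Finset.sum_Ico_add' (fun l => op.m l * (thetaFn S b (op.q (l + 1)) - thetaFn S b (op.q l))) 0 k 1]
    refine Finset.sum_congr rfl fun l hl => ?_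
    have hl' := (Finset.mem_Ico.mp hl).2
    rw [Xf_theta S b (op.q_nn _ (by omega)) (op.q_le (k + 1 - (l + 1 + 1)) _ (by omega)),
      Xf_theta S b (op.q_nn _ (by omega)) (op.q_le (k + 1 - (l + 1)) _ (by omega))]

theorem claimA {S : Finset ℕ} (hS : ∀ p ∈ S, 0 < p) (h : ℝ) (b : ℕ → ℝ) {T : ℝ} (hT : xiFn' S b 1 ≤ T) {k : ℕ}
    (hk : 1 ≤ k) (op : OrderParam k) {ε : ℝ} (hε : 0 < ε) :
    ∃ l, Valid T l ∧ Psi l h - 1 / 2 * Lin (Xf S b) l 0 ≤ parisiP S h b op + ε := by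
  obtain ⟨τ, hτ⟩ : ∃ τ : ℕ → ℝ, τ = fun i => xiFn' S b (op.q (i + 1)) := ⟨_, rfl⟩
  obtain ⟨L, hL⟩ : ∃ L, L = lf op.m τ 0 k := ⟨_, rfl⟩
  have hmem : ∀ c ∈ L, op.m 1 ≤ c.1 ∧ c.1 ≤ 1 ∧ 0 ≤ c.2 := by
    intro c hc
    rw [hL] at hc
    obtain ⟨j, -, hj, rfl⟩ := lf_mem k 0 hc
    refine ⟨?_, op.m_le (k - (j + 1)) _ (by omega), ?_⟩
    · have : ∀ d, d < k → op.m 1 ≤ op.m (d + 1) := by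
        intro d
        induction d with
        | zero => intro _; exact le_rfl
        | succ d ih => intro hd; exact (ih (by omega)).trans (op.m_mono (d + 1) (by omega))
      exact this j (by omega)
    · simp only [hτ]
      have := xi'_mono S b (op.q_nn (j + 1) (by omega)) (op.q_mono (j + 1) (by omega))
      linarith
  have hm1 := op.m_pos 1 le_rfl hk
  have hLok : Ok L := fun c hc => ⟨hm1.trans_le (hmem c hc).1, (hmem c hc).2⟩
  have hLs : Srt L := by rw [hL]; exact lf_srt k 0 fun j _ hj => op.m_mono j (by omega)
  have hLt : tot L = xiFn' S b 1 - τ 0 := by rw [hL, lf_tot, zero_add, hτ]; simp only [op.q_last]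
  have hτ0 : τ 0 = xiFn' S b (op.q 1) := by rw [hτ]
  have hτ0n : 0 ≤ τ 0 := by rw [hτ0]; exact xi'_nonneg S b (op.q_nn 1 (by omega))
  have hr : 0 ≤ T - xiFn' S b 1 := by linarith
  obtain ⟨η, hη, hηm, hTO⟩ := TO_small (Psi_lip hLok) (τ 0) h hε hm1
  have hm11 := op.m_le (k - 1) 1 (by omega)
  refine ⟨(η, τ 0) :: (L ++ [(1, T - xiFn' S b 1)]), ⟨?_, ?_, ?_⟩, ?_⟩
  · intro c hc
    simp only [List.mem_cons, List.mem_append, List.not_mem_nil, or_false] at hc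
    rcases hc with rfl | hc | rfl
    · exact ⟨hη, hηm.trans hm11, hτ0n⟩
    · exact hLok c hc
    · exact ⟨one_pos, le_rfl, hr⟩
  · refine List.pairwise_cons.mpr ⟨?_, List.pairwise_append.mpr ⟨hLs, List.pairwise_singleton _ _, ?_⟩⟩
    · intro c hc
      simp only [List.mem_append, List.mem_cons, List.not_mem_nil, or_false] at hc
      rcases hc with hc | rfl
      · exact hηm.trans (hmem c hc).1
      · exact hηm.trans hm11
    · intro c hc d hd
      simp only [List.mem_cons, List.not_mem_nil, or_false] at hd
      subst hd; exact (hmem c hc).2.1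
  · simp only [tot]; rw [tot_append, hLt]; simp [tot]
  · rw [parisiP_eq]
    rw [← hτ, ← hL, ← hτ0]
    simp only [Psi, Lin]
    rw [Psi_append_one hr L hLok, TO_add_const hη (Psi_lip hLok), Lin_append, hLt]
    simp only [Lin, zero_add]
    rw [show τ 0 + (xiFn' S b 1 - τ 0) = xiFn' S b 1 by ring, show xiFn' S b 1 + (T - xiFn' S b 1) = T by ring,
      Xf_large S b hT, Xf_large S b le_rfl, Xf_small hS b (xi'_nonneg S b le_rfl)]
    have hX : 0 ≤ Xf S b (τ 0) := by
      have := le_Xf S b (τ 0) le_rfl zero_le_one; rw [xi_zero hS] at this; linarith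
    have : 0 ≤ η * (Xf S b (τ 0) - 0) := by rw [sub_zero]; positivity
    linarith

/-! ### Clamping -/

section
variable {m τ : ℕ → ℝ}

theorem lf_ok (hm : ∀ j, 0 < m j ∧ m j ≤ 1) (hτ : Monotone τ) (i n : ℕ) : Ok (lf m τ i n) := by
  intro c hc
  obtain ⟨j, -, -, rfl⟩ := lf_mem n i hc
  exact ⟨(hm _).1, (hm _).2, sub_nonneg.mpr (hτ (Nat.le_succ j))⟩

theorem upper (hm : ∀ j, 0 < m j ∧ m j ≤ 1) (hτ : Monotone τ) (c : ℝ) : ∀ (n i : ℕ) (x : ℝ),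
    Psi (lf m (fun j => min (τ j) c) i n) x + 1 / 2 * Lin (fun z => z - min z c) (lf m τ i n) (τ i) ≤ Psi (lf m τ i n) x
  | 0, i, x => by simp [lf, Lin]
  | n + 1, i, x => by
    have hτc : Monotone (fun j => min (τ j) c) := fun a b hab => min_le_min_right _ (hτ hab)
    have ih := upper hm hτ c n (i + 1)
    have l1 := Psi_lip (lf_ok hm hτ (i + 1) n)
    have l2 := Psi_lip (lf_ok hm hτc (i + 1) n)
    have hi : τ i ≤ τ (i + 1) := hτ (Nat.le_succ i)
    have hmi := hm (i + 1)
    simp only [lf, Psi, Lin]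
    rw [show τ i + (τ (i + 1) - τ i) = τ (i + 1) by ring]
    set D := Lin (fun z => z - min z c) (lf m τ (i + 1) n) (τ (i + 1)) with hD
    set w1 := min (τ (i + 1)) c - min (τ i) c with hw1
    set w2 := τ (i + 1) - min (τ (i + 1)) c - (τ i - min (τ i) c) with hw2
    have hw1n : 0 ≤ w1 := sub_nonneg.mpr (hτc (Nat.le_succ i))
    have hw2n : 0 ≤ w2 := by
      rw [hw2]
      rcases le_total (τ (i + 1)) c with h | h
      · rw [min_eq_left h, min_eq_left (hi.trans h)]; simp
      · rw [min_eq_right h]; rcases le_total (τ i) c with h' | h'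
        · rw [min_eq_left h']; linarith
        · rw [min_eq_right h']; linarith
    have hsum : τ (i + 1) - τ i = w1 + w2 := by rw [hw1, hw2]; ring
    rw [hsum, ← TO_semigroup hmi.1 l1 hw1n hw2n]
    have hB : ∀ z, Psi (lf m (fun j => min (τ j) c) (i + 1) n) z + 1 / 2 * (m (i + 1) * w2 + D) ≤
        TO (m (i + 1)) w2 (Psi (lf m τ (i + 1) n)) z := by
      intro z
      rcases le_total (τ (i + 1)) c with h | h
      · have : w2 = 0 := by rw [hw2, min_eq_left h, min_eq_left (hi.trans h)]; simp
        rw [this, TO_zero hmi.1]; have := ih z; linarith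
      · have hz : Psi (lf m (fun j => min (τ j) c) (i + 1) n) = lc := by
          refine (tot_zero (lf_ok hm hτc (i + 1) n) ?_).1
          rw [lf_tot]
          rw [min_eq_right h, min_eq_right (h.trans (hτ (by omega)))]; ring
        have h1 := TO_mono hmi.1 (lc_lip.add_const (1 / 2 * D)) l1 (fun x => by have := ih x; rw [hz] at this; exact this) w2 z
        rw [TO_add_const hmi.1 lc_lip] at h1
        have h2 := TO_lc_ge hmi.1 hmi.2 hw2n z
        rw [hz]; linarith
    have := TO_mono hmi.1 (l2.add_const (1 / 2 * (m (i + 1) * w2 + D))) (TO_lip hmi.1 l1 w2) hB w1 x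
    rwa [TO_add_const hmi.1 l2] at this

theorem lower (hm : ∀ j, 0 < m j ∧ m j ≤ 1) (hτ : Monotone τ) (a : ℝ) : ∀ (n i : ℕ) (x : ℝ), a ≤ τ (i + n) →
    ∫ y, Psi (lf m (fun j => max (τ j) a) i n) (x + y) ∂(gauss (max (a - τ i) 0)) ≤ Psi (lf m τ i n) x
  | 0, i, x, h => by
    rw [max_eq_right (by simpa using h), gauss_zero]; simp [lf]
  | n + 1, i, x, h => by
    have hτa : Monotone (fun j => max (τ j) a) := fun a b hab => max_le_max_right _ (hτ hab)
    have ih := fun x => lower hm hτ a n (i + 1) x (by rwa [show i + 1 + n = i + (n + 1) by ring])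
    have l1 := Psi_lip (lf_ok hm hτ (i + 1) n)
    have l2 := Psi_lip (lf_ok hm hτa (i + 1) n)
    have hi : τ i ≤ τ (i + 1) := hτ (Nat.le_succ i)
    have hmi := hm (i + 1)
    simp only [lf, Psi]
    rcases le_total a (τ (i + 1)) with h1 | h1
    · rw [max_eq_right (by linarith : a - τ (i + 1) ≤ 0), gauss_zero] at ih
      simp only [integral_dirac, add_zero] at ih
      rw [max_eq_left h1]
      rcases le_total a (τ i) with h2 | h2
      · rw [max_eq_right (by linarith : a - τ i ≤ 0), gauss_zero, max_eq_left h2]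
        simp only [integral_dirac, add_zero]
        exact TO_mono hmi.1 l2 l1 ih _ _
      · rw [max_eq_left (by linarith : 0 ≤ a - τ i), max_eq_right h2]
        rw [show τ (i + 1) - τ i = (a - τ i) + (τ (i + 1) - a) by ring,
          ← TO_semigroup hmi.1 l1 (by linarith) (by linarith)]
        refine le_trans ?_ (TO_ge_mean hmi.1 (TO_lip hmi.1 l1 _) _ _)
        refine integral_mono (((TO_lip hmi.1 l2 _).shift x).eg.integrable _) (((TO_lip hmi.1 l1 _).shift x).eg.integrable _) ?_
        intro y
        exact TO_mono hmi.1 l2 l1 ih _ _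
    · have h2 : τ i ≤ a := hi.trans h1
      rw [max_eq_right h1, max_eq_right h2, sub_self, TO_zero hmi.1, max_eq_left (by linarith : 0 ≤ a - τ i)]
      rw [max_eq_left (by linarith : 0 ≤ a - τ (i + 1))] at ih
      refine le_trans ?_ (TO_ge_mean hmi.1 l1 _ _)
      have hc := gauss_conv (v := τ (i + 1) - τ i) (w := a - τ (i + 1)) (by linarith) (by linarith) ((l2.shift x).eg)
      rw [show τ (i + 1) - τ i + (a - τ (i + 1)) = a - τ i by ring] at hc
      rw [← hc]
      have hlip : Lip1 (fun y => ∫ z, Psi (lf m (fun j => max (τ j) a) (i + 1) n) (x + (y + z)) ∂(gauss (a - τ (i + 1)))) := by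
        intro y y'
        rw [← integral_sub]
        · have hn := norm_integral_le_of_norm_le_const (μ := gauss (a - τ (i + 1))) (C := |y - y'|)
            (f := fun z => Psi (lf m (fun j => max (τ j) a) (i + 1) n) (x + (y + z)) -
              Psi (lf m (fun j => max (τ j) a) (i + 1) n) (x + (y' + z)))
            (ae_of_all _ fun z => (l2 _ _).trans (le_of_eq (by congr 1; ring)))
          rw [probReal_univ, mul_one] at hn
          exact hn
        · simp only [← add_assoc]; exact ((l2.shift (x + y)).eg).integrable (a - τ (i + 1))
        · simp only [← add_assoc]; exact ((l2.shift (x + y')).eg).integrable (a - τ (i + 1))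
      refine integral_mono (hlip.eg.integrable _) ((l1.shift x).eg.integrable _) ?_
      intro y
      have := ih (x + y)
      simpa only [add_assoc] using this
end

theorem exists_lf {l : List (ℝ × ℝ)} (hl : Ok l) (hs : Srt l) : ∃ m τ : ℕ → ℝ, (∀ j, 0 < m j ∧ m j ≤ 1) ∧
    (∀ j, 1 ≤ j → m j ≤ m (j + 1)) ∧ Monotone τ ∧ τ 0 = 0 ∧ l = lf m τ 0 l.length := by
  refine ⟨fun j => if h : j - 1 < l.length then (l[j - 1]'h).1 else 1, fun j => tot (l.take j), ?_, ?_, ?_, by simp [tot], ?_⟩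
  · intro j
    simp only
    split_ifs with h
    · exact ⟨(hl _ (List.getElem_mem h)).1, (hl _ (List.getElem_mem h)).2.1⟩
    · simp
  · intro j hj
    simp only
    by_cases h : j + 1 - 1 < l.length
    · rw [dif_pos h, dif_pos (by omega)]
      exact List.pairwise_iff_getElem.mp hs _ _ (by omega) h (by omega)
    · rw [dif_neg h]
      split_ifs with h'
      · exact (hl _ (List.getElem_mem h')).2.1
      · exact le_rfl
  · refine monotone_nat_of_le_succ fun j => ?_
    by_cases h : j < l.length
    · rw [List.take_add_one, tot_append, List.getElem?_eq_getElem h]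
      have := (hl _ (List.getElem_mem h)).2.2
      simp [tot, this]
    · rw [List.take_of_length_le (by omega), List.take_of_length_le (by omega)]
  · have key : ∀ n i, i + n = l.length → l.drop i = lf (fun j => if h : j - 1 < l.length then (l[j - 1]'h).1 else 1) (fun j => tot (l.take j)) i n := by
      intro n
      induction n with
      | zero => intro i hi; simp [lf]; omega
      | succ n ih =>
        intro i hi
        have h : i < l.length := by omega
        rw [List.drop_eq_getElem_cons h, ih (i + 1) (by omega), lf]
        congr 1
        rw [dif_pos (by simpa using h)]
        ext
        · simp
        · simp only
          rw [List.take_add_one, tot_append, List.getElem?_eq_getElem h]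
          simp [tot]
    have := key l.length 0 (by simp)
    simpa using this

theorem exists_inv (S : Finset ℕ) (b : ℕ → ℝ) : ∃ g : ℝ → ℝ, ∀ z, xiFn' S b 0 ≤ z → z ≤ xiFn' S b 1 →
    0 ≤ g z ∧ g z ≤ 1 ∧ xiFn' S b (g z) = z := by
  have : ∀ z, ∃ x, xiFn' S b 0 ≤ z → z ≤ xiFn' S b 1 → 0 ≤ x ∧ x ≤ 1 ∧ xiFn' S b x = z := by
    intro z
    by_cases h : xiFn' S b 0 ≤ z ∧ z ≤ xiFn' S b 1
    · obtain ⟨x, hx, e⟩ := intermediate_value_Icc (zero_le_one (α := ℝ)) (xi'_cont S b).continuousOn ⟨h.1, h.2⟩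
      exact ⟨x, fun _ _ => ⟨hx.1, hx.2, e⟩⟩
    · exact ⟨0, fun h1 h2 => absurd ⟨h1, h2⟩ h⟩
  choose g hg using this
  exact ⟨g, hg⟩

theorem claimB {S : Finset ℕ} (hS : ∀ p ∈ S, 0 < p) (h : ℝ) (b : ℕ → ℝ) {T : ℝ} (hT : xiFn' S b 1 ≤ T)
    {l : List (ℝ × ℝ)} (hl : Valid T l) :
    ∃ k, 1 ≤ k ∧ ∃ op : OrderParam k, parisiP S h b op ≤ Psi l h - 1 / 2 * Lin (Xf S b) l 0 := by
  obtain ⟨m, τ, hm, hmm, hτ, hτ0, hlf⟩ := exists_lf hl.ok hl.srt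
  obtain ⟨n, hn⟩ : ∃ n, n = l.length := ⟨_, rfl⟩
  rw [← hn] at hlf
  obtain ⟨a, ha⟩ : ∃ a, a = xiFn' S b 0 := ⟨_, rfl⟩
  obtain ⟨c, hc⟩ : ∃ c, c = xiFn' S b 1 := ⟨_, rfl⟩
  have hac : a ≤ c := by rw [ha, hc]; exact xi'_mono S b le_rfl zero_le_one
  have ha0 : 0 ≤ a := by rw [ha]; exact xi'_nonneg S b le_rfl
  have hτn : τ n = T := by
    have := hl.tot_eq; rw [hlf, lf_tot, hτ0, zero_add, sub_zero] at this; exact this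
  obtain ⟨g, hg⟩ := exists_inv S b
  rw [← ha, ← hc] at hg
  obtain ⟨φ, hφ⟩ : ∃ φ : ℕ → ℝ, φ = fun j => max (min (τ j) c) a := ⟨_, rfl⟩
  have hφm : Monotone φ := by rw [hφ]; exact fun i j hij => max_le_max_right _ (min_le_min_right _ (hτ hij))
  have hφa : ∀ j, a ≤ φ j := fun j => by rw [hφ]; exact le_max_right _ _
  have hφc : ∀ j, φ j ≤ c := fun j => by rw [hφ]; exact max_le (min_le_right _ _) hac
  have hφ0 : φ 0 = a := by rw [hφ]; simp only [hτ0]; exact max_eq_right ((min_le_left _ _).trans ha0)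
  have hφn : φ n = c := by rw [hφ]; simp only [hτn]; rw [min_eq_right (by rw [hc]; exact hT), max_eq_left hac]
  have hgφ := fun j => hg (φ j) (hφa j) (hφc j)
  have hgm : ∀ j, g (φ j) ≤ g (φ (j + 1)) := by
    intro j
    rcases (hφm (Nat.le_succ j)).eq_or_lt with h | h
    · rw [h]
    · by_contra hcon
      push Not at hcon
      have := xi'_mono S b (hgφ (j + 1)).1 hcon.le
      rw [(hgφ (j + 1)).2.2, (hgφ j).2.2] at this
      simp only [Nat.succ_eq_add_one] at h
      linarith
  let op : OrderParam (n + 1) :=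
    { m := fun j => if j = 0 then 0 else if j ≤ n then m j else 1
      q := fun j => if j = 0 then 0 else if j ≤ n + 1 then g (φ (j - 1)) else 1
      m_zero := by simp
      m_last := by simp
      m_mono := by
        intro j hj
        rw [if_neg (show ¬ (j + 1 = 0) by omega)]
        by_cases h1 : j = 0
        · rw [if_pos h1]
          split_ifs
          · exact (hm _).1.le
          · exact zero_le_one
        · rw [if_neg h1]
          by_cases h2 : j + 1 ≤ n
          · rw [if_pos h2, if_pos (show j ≤ n by omega)]
            exact hmm j (by omega)
          · rw [if_neg h2]
            split_ifs
            · exact (hm _).2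
            · exact le_rfl
      m_pos := by
        intro j h1 h2
        split_ifs <;> first | omega | exact (hm _).1 | exact one_pos
      q_zero := by simp
      q_last := by simp
      q_mono := by
        intro j hj
        rw [if_neg (show ¬ (j + 1 = 0) by omega)]
        by_cases h1 : j = 0
        · rw [if_pos h1]
          split_ifs
          · exact (hgφ _).1
          · exact zero_le_one
        · rw [if_neg h1]
          by_cases h2 : j + 1 ≤ n + 1
          · rw [if_pos h2, if_pos (show j ≤ n + 1 by omega)]
            have := hgm (j - 1)
            rwa [show j + 1 - 1 = j - 1 + 1 by omega]
          · rw [if_neg h2]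
            split_ifs
            exact (hgφ _).2.1 }
  have hopm : ∀ j, 0 < j → j ≤ n → op.m j = m j := by
    intro j h1 h2; show (if j = 0 then 0 else if j ≤ n then m j else 1) = m j
    rw [if_neg (by omega), if_pos h2]
  have hopq : ∀ j, j ≤ n → xiFn' S b (op.q (j + 1)) = φ j := by
    intro j h1; show xiFn' S b (if j + 1 = 0 then 0 else if j + 1 ≤ n + 1 then g (φ (j + 1 - 1)) else 1) = φ j
    rw [if_neg (by omega), if_pos (by omega), Nat.add_sub_cancel]; exact (hgφ j).2.2
  have hop1 : op.m (n + 1) = 1 := op.m_last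
  have hop2 : op.q (n + 1 + 1) = 1 := op.q_last
  refine ⟨n + 1, by omega, op, ?_⟩
  have hL : lf op.m (fun i => xiFn' S b (op.q (i + 1))) 0 (n + 1) = lf m φ 0 n ++ [(1, 0)] := by
    rw [lf_last]
    congr 1
    · exact lf_congr n 0 (fun j h1 h2 => hopm j h1 (by omega)) (fun j h1 h2 => hopq j (by omega))
    · simp only [zero_add]
      rw [hop1, hop2, hopq n le_rfl, hφn, ← hc, sub_self]
  have hokφ := lf_ok hm hφm 0 n
  have hq1 : xiFn' S b (op.q 1) = φ 0 := hopq 0 (by omega)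
  rw [parisiP_eq, hL, Psi_append_one le_rfl _ hokφ, Lin_append, hq1]
  simp only [Lin, zero_div, add_zero, sub_self, mul_zero]
  -- the bounds
  have hτc : Monotone (fun j => min (τ j) c) := fun i j hij => min_le_min_right _ (hτ hij)
  have u := upper hm hτ c n 0 h
  have w := lower hm hτc a n 0 h (by simp only [zero_add, hτn]; exact le_min (by rw [← hc] at hT; linarith) hac)
  rw [← hlf, hτ0] at u
  simp only [hτ0] at w
  rw [min_eq_left (by linarith), sub_zero, max_eq_left ha0] at w
  rw [hφ0]
  have e1 : Lin (Xf S b) (lf m φ 0 n) a = Lin (Xf S b) l 0 - Lin (fun z => z - min z c) l 0 := by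
    rw [← Lin_sub]
    conv_rhs => rw [hlf, ← hτ0]
    conv_lhs => rw [← hφ0]
    rw [lf_Lin, lf_Lin]
    refine Finset.sum_congr rfl fun j _ => ?_
    have key : ∀ j, Xf S b (φ j) = Xf S b (τ j) - (τ j - min (τ j) c) := by
      intro j
      rw [hφ]
      simp only
      rcases le_total (τ j) c with h1 | h1
      · rw [min_eq_left h1]
        rcases le_total (τ j) a with h2 | h2
        · rw [max_eq_right h2, Xf_small hS b ha.le, Xf_small hS b (h2.trans ha.le)]; ring
        · rw [max_eq_left h2]; ring
      · rw [min_eq_right h1, max_eq_left hac, Xf_large S b hc.ge, Xf_large S b (hc.ge.trans h1)]; ring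
    rw [key, key]
  rw [e1]
  rw [← hφ] at w
  linarith

theorem lc_nonneg (x : ℝ) : 0 ≤ lc x := Real.log_nonneg (one_le_cosh x)

theorem Psi_nonneg : ∀ {l : List (ℝ × ℝ)}, Ok l → ∀ x, 0 ≤ Psi l x
  | [], _, x => lc_nonneg x
  | c :: l, h, x => (integral_nonneg fun y => Psi_nonneg h.tail (x + y)).trans (TO_ge_mean h.head.1 (Psi_lip h.tail) c.2 x)

theorem parisi_low {S : Finset ℕ} (hS : ∀ p ∈ S, 0 < p) (h : ℝ) (b : ℕ → ℝ) {T : ℝ} (hT : xiFn' S b 1 ≤ T) {k : ℕ}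
    (hk : 1 ≤ k) (op : OrderParam k) : -(T + xiFn S b 1) ≤ parisiP S h b op := by
  refine le_of_forall_pos_le_add fun ε hε => ?_
  obtain ⟨l, hl, hG⟩ := claimA hS h b hT hk op hε
  refine le_trans ?_ hG
  have h1 := Psi_nonneg hl.ok h
  have h2 := abs_le.mp (hl.lin_bd (g := Xf S b) (fun t h0 h1 => Xf_bd S b h0 h1))
  linarith

theorem F_le {S : Finset ℕ} (hS : ∀ p ∈ S, 0 < p) (h : ℝ) (b : ℕ → ℝ) {T : ℝ} (hT : xiFn' S b 1 ≤ T)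
    {l : List (ℝ × ℝ)} (hl : Valid T l) : parisiF S h b ≤ Psi l h - 1 / 2 * Lin (Xf S b) l 0 := by
  obtain ⟨k, hk, op, H⟩ := claimB hS h b hT hl
  refine le_trans (csInf_le ⟨-(T + xiFn S b 1), ?_⟩ ⟨k, hk, op, rfl⟩) H
  rintro x ⟨k, hk, op, rfl⟩
  exact parisi_low hS h b hT hk op

theorem F_near {S : Finset ℕ} (hS : ∀ p ∈ S, 0 < p) (h : ℝ) (b : ℕ → ℝ) {T : ℝ} (hT : xiFn' S b 1 ≤ T)
    {ε : ℝ} (hε : 0 < ε) : ∃ l, Valid T l ∧ Psi l h - 1 / 2 * Lin (Xf S b) l 0 ≤ parisiF S h b + ε := by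
  have hT0 : 0 ≤ T := (xi'_nonneg S b zero_le_one).trans hT
  have hne : {x : ℝ | ∃ k : ℕ, 1 ≤ k ∧ ∃ op : OrderParam k, x = parisiP S h b op}.Nonempty := by
    obtain ⟨k, hk, op, -⟩ := claimB hS h b hT (l := [(1, T)])
      ⟨fun c hc => by simp at hc; subst hc; exact ⟨one_pos, le_rfl, hT0⟩, List.pairwise_singleton _ _, by simp [tot]⟩
    exact ⟨_, k, hk, op, rfl⟩
  obtain ⟨x, ⟨k, hk, op, rfl⟩, hx⟩ := exists_lt_of_csInf_lt hne (lt_add_of_pos_right _ (half_pos hε))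
  obtain ⟨l, hl, hG⟩ := claimA hS h b hT hk op (half_pos hε)
  refine ⟨l, hl, hG.trans ?_⟩
  unfold parisiF
  linarith

theorem main_diff (S : Finset ℕ) (hS : ∀ p ∈ S, 0 < p) (h : ℝ) (β : ℕ → ℝ)
    (hβ : ∃ p ∈ S, 2 ≤ p ∧ β p ≠ 0) (p : ℕ) (hp : p ∈ S) (t : ℝ) :
    DifferentiableAt ℝ (fun s => parisiF S h (Function.update β p s)) t := by
  obtain ⟨T, hTdef⟩ : ∃ T, T = xiFn' S (Function.update β p (|t| + 1)) 1 := ⟨_, rfl⟩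
  have hT0 : 0 ≤ T := by rw [hTdef]; exact xi'_nonneg S _ zero_le_one
  have hT : ∀ s, |s - t| < 1 → xiFn' S (Function.update β p s) 1 ≤ T := by
    intro s hs
    rw [hTdef]
    refine xi'_update_le β hp zero_le_one ?_
    rw [← sq_abs s]
    have : |s| ≤ |t| + 1 := by
      have := abs_add_le (s - t) t
      rw [sub_add_cancel] at this; linarith
    gcongr
  have hF : ∀ s, |s - t| < 1 → ∀ l, Valid T l →
      parisiF S h (Function.update β p s) ≤ Psi l h - 1 / 2 * Lin (Xf S (Function.update β p s)) l 0 :=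
    fun s hs l hl => F_le hS h _ (hT s hs) hl
  have hN : ∀ s, |s - t| < 1 → ∀ ε > 0, ∃ l, Valid T l ∧
      Psi l h - 1 / 2 * Lin (Xf S (Function.update β p s)) l 0 ≤ parisiF S h (Function.update β p s) + ε :=
    fun s hs ε hε => F_near hS h _ (hT s hs) hε
  by_cases ht : t = 0
  · subst ht
    exact diff_near_zero (X := fun s => Xf S (Function.update β p s)) hF hN (fun s z _ _ => Xf_close β hp s 0 z)
  · obtain ⟨n, hn, hn2, hne⟩ : ∃ n ∈ S, 2 ≤ n ∧ Function.update β p t n ≠ 0 := by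
      by_cases hp2 : 2 ≤ p
      · exact ⟨p, hp, hp2, by simpa using ht⟩
      · obtain ⟨n, hn, hn2, hne⟩ := hβ
        exact ⟨n, hn, hn2, by rw [Function.update_of_ne (by omega)]; exact hne⟩
    refine diff_near (X := fun s => Xf S (Function.update β p s)) hT0 hF hN (fun s z _ _ => Xf_close β hp s t z)
      (f := fun z => xarg S (Function.update β p t) z ^ p) (xarg_cont β hp hn2 hn hne).continuousOn ?_
    intro ε hε
    obtain ⟨ρ, hρ, H⟩ := Xf_diff β hp hn2 hn hne hε
    exact ⟨ρ, hρ, fun s hs z _ _ => H s hs z⟩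

/-- For each `p ∈ S`, the map `β_p ↦ P(β)` (with `h` and the other coordinates of `β`
fixed) is differentiable at every point. -/
theorem parisiF_differentiable
    (S : Finset ℕ) (hS : ∀ p ∈ S, 0 < p) (h : ℝ) (β : ℕ → ℝ)
    (hβ : ∃ p ∈ S, 2 ≤ p ∧ β p ≠ 0)
    (p : ℕ) (hp : p ∈ S) (t : ℝ) :
    DifferentiableAt ℝ (fun s : ℝ => parisiF S h (Function.update β p s)) t := by
  exact main_diff S hS h β hβ p hp t
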